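/- arXiv:math/0407064 — 6 statements merged into one kernel-verified Lean document; each statement's English description precedes it below -/
import Mathlib

section
/- Let f ∈ ℂ[x₁,…,x_{n+1}] be a strongly tame polynomial. Then the set Sing(f) of common zeros in ℂ^{n+1} of the partial derivatives ∂f/∂x₁,…,∂f/∂x_{n+1} is finite (i.e., f has only isolated singularities). -/
open MvPolynomial

lemma st_support_mul {σ : Type*} (α : σ → ℕ) (e : ℕ) (γ : σ →₀ ℕ) (c : ℂ)
    (v : MvPolynomial σ ℂ) (hv : ∀ β, coeff β v ≠ 0 → Finsupp.weight α β < e) :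
    ∀ β, coeff β (monomial γ c * v) ≠ 0 → Finsupp.weight α β < Finsupp.weight α γ + e := by
  classical
  intro β hβ
  rw [coeff_monomial_mul'] at hβ
  split_ifs at hβ with h
  · have h1 := hv _ (right_ne_zero_of_mul hβ)
    have h2 : Finsupp.weight α (γ + (β - γ)) = Finsupp.weight α β := by
      rw [add_tsub_cancel_of_le h]
    rw [map_add] at h2
    omega
  · exact absurd rfl hβ

lemma st_mem {σ : Type*} (U : Submodule ℂ (MvPolynomial σ ℂ)) (p : MvPolynomial σ ℂ)
    (h : ∀ β, coeff β p ≠ 0 → monomial β (1 : ℂ) ∈ U) : p ∈ U := by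
  rw [p.as_sum]
  refine Submodule.sum_mem _ fun β hβ => ?_
  have : monomial β (coeff β p) = coeff β p • monomial β (1 : ℂ) := by
    rw [smul_monomial]; simp
  rw [this]
  exact U.smul_mem _ (h β (mem_support_iff.mp hβ))

lemma st_comp_mem {σ : Type*} (α : σ → ℕ) (e m : ℕ)
    (U : Submodule ℂ (MvPolynomial σ ℂ)) (u v : MvPolynomial σ ℂ)
    (hU : ∀ h, h * v ∈ U)
    (hu : IsWeightedHomogeneous α u e)
    (hv : ∀ β, coeff β (v - u) ≠ 0 → Finsupp.weight α β < e)
    (ih : ∀ β, Finsupp.weight α β < m → monomial β (1 : ℂ) ∈ U)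
    (h : MvPolynomial σ ℂ) : weightedHomogeneousComponent α m (h * u) ∈ U := by
  classical
  induction h using MvPolynomial.induction_on' with
  | add p q hp hq => rw [add_mul, map_add]; exact U.add_mem hp hq
  | monomial γ c =>
    have hh : IsWeightedHomogeneous α (monomial γ c * u) (Finsupp.weight α γ + e) :=
      (isWeightedHomogeneous_monomial α γ c rfl).mul hu
    by_cases hm : m = Finsupp.weight α γ + e
    · rw [hm, hh.weightedHomogeneousComponent_same]
      have : monomial γ c * u = monomial γ c * v - monomial γ c * (v - u) := by ring
      rw [this]
      refine U.sub_mem (hU _) (st_mem U _ fun β hβ => ih β ?_)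
      rw [hm]
      exact st_support_mul α e γ c _ hv β hβ
    · rw [hh.weightedHomogeneousComponent_ne m hm]
      exact U.zero_mem

theorem sing_finite_of_strongly_tame
    (n : ℕ) (hn : 1 ≤ n) (α : Fin (n + 1) → ℕ)
    (hαpos : ∀ i, 0 < α i) (hα : Finset.univ.gcd α = 1)
    (f : MvPolynomial (Fin (n + 1)) ℂ) (d : ℕ)
    (hd : MvPolynomial.weightedTotalDegree α f = d)
    (g : MvPolynomial (Fin (n + 1)) ℂ)
    (hg : g = weightedHomogeneousComponent α d f)
    (hg0 : g ≠ 0)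
    (htame : ∀ x : Fin (n + 1) → ℂ, (∀ i, eval x (pderiv i g) = 0) → x = 0) :
    {x : Fin (n + 1) → ℂ | ∀ i, eval x (pderiv i f) = 0}.Finite := by
  classical
  have hgh : IsWeightedHomogeneous α g d := by
    rw [hg]; exact weightedHomogeneousComponent_isWeightedHomogeneous d f
  -- degrees of the partial derivatives
  have hwt : ∀ (β : Fin (n + 1) →₀ ℕ) i,
      Finsupp.weight α (β + Finsupp.single i 1) = Finsupp.weight α β + α i := by
    intro β i
    rw [map_add, Finsupp.weight_single]; simp
  have hu : ∀ i, IsWeightedHomogeneous α (pderiv i g) (d - α i) := by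
    intro i β hβ
    rw [coeff_pderiv] at hβ
    have := hgh (left_ne_zero_of_mul hβ)
    rw [hwt] at this
    omega
  have hv : ∀ i β, coeff β (pderiv i f - pderiv i g) ≠ 0 →
      Finsupp.weight α β < d - α i := by
    intro i β hβ
    rw [← map_sub, coeff_pderiv] at hβ
    have h1 := left_ne_zero_of_mul hβ
    rw [coeff_sub, hg, coeff_weightedHomogeneousComponent] at h1
    split_ifs at h1 with h2
    · simp at h1
    · rw [sub_zero] at h1
      have h3 := le_weightedTotalDegree α (mem_support_iff.mpr h1)
      rw [hd] at h3
      rw [hwt] at h2 h3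
      omega
  -- Nullstellensatz
  set Jg : Ideal (MvPolynomial (Fin (n + 1)) ℂ) :=
    Ideal.span (Set.range fun i => pderiv i g) with hJg
  set Jf : Ideal (MvPolynomial (Fin (n + 1)) ℂ) :=
    Ideal.span (Set.range fun i => pderiv i f) with hJf
  have hnull : ∀ i, ∃ N : ℕ, (X i : MvPolynomial (Fin (n + 1)) ℂ) ^ N ∈ Jg := by
    intro i
    have : (X i : MvPolynomial (Fin (n + 1)) ℂ) ∈ Jg.radical := by
      rw [← vanishingIdeal_zeroLocus_eq_radical (K := ℂ)]
      intro x hx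
      have : x = 0 := htame x fun j => by
        have := hx (pderiv j g) (Ideal.subset_span ⟨j, rfl⟩)
        simpa [aeval_eq_eval] using this
      simp [this]
    exact this
  choose N hN using hnull
  set B : Set (Fin (n + 1) →₀ ℕ) := {β | ∀ i, β i < N i} with hB
  have hBfin : B.Finite := by
    refine (Set.finite_Iic (Finsupp.equivFunOnFinite.symm N)).subset ?_
    intro β hβ i
    exact (hβ i).le
  set S : Set (MvPolynomial (Fin (n + 1)) ℂ) := (fun β => monomial β (1 : ℂ)) '' B with hS
  set U : Submodule ℂ (MvPolynomial (Fin (n + 1)) ℂ) :=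
    Jf.restrictScalars ℂ ⊔ Submodule.span ℂ S with hU
  have hUf : ∀ i h, h * pderiv i f ∈ U := fun i h =>
    Submodule.mem_sup_left (Jf.mul_mem_left h (Ideal.subset_span ⟨i, rfl⟩))
  have hmon : ∀ m : ℕ, ∀ β, Finsupp.weight α β = m → monomial β (1 : ℂ) ∈ U := by
    intro m
    induction m using Nat.strong_induction_on with
    | _ m ih =>
    intro β hβ
    by_cases hb : β ∈ B
    · exact Submodule.mem_sup_right (Submodule.subset_span ⟨β, hb, rfl⟩)
    · obtain ⟨i, hi⟩ : ∃ i, N i ≤ β i := by simpa [hB] using hb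
      have hmem : monomial β (1 : ℂ) ∈ Jg := by
        have h1 : monomial β (1 : ℂ) =
            monomial (β - Finsupp.single i (N i)) 1 * X i ^ N i := by
          rw [X_pow_eq_monomial, monomial_mul, tsub_add_cancel_of_le, one_mul]
          simpa using hi
        rw [h1]
        exact Jg.mul_mem_left _ (hN i)
      obtain ⟨c, hc⟩ := Ideal.mem_span_range_iff_exists_fun.mp hmem
      rw [← (isWeightedHomogeneous_monomial α β (1 : ℂ) hβ).weightedHomogeneousComponent_same,
        ← hc, map_sum]
      exact Submodule.sum_mem _ fun j _ => st_comp_mem α _ m U _ _ (hUf j) (hu j) (hv j)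
        (fun γ hγ => ih _ hγ γ rfl) (c j)
  have hUtop : ∀ p, p ∈ U := fun p => st_mem U p fun β _ => hmon _ β rfl
  -- the quotient is finite dimensional
  have hfin : Module.Finite ℂ (MvPolynomial (Fin (n + 1)) ℂ ⧸ Jf) := by
    constructor
    have h1 : (⊤ : Submodule ℂ (MvPolynomial (Fin (n + 1)) ℂ ⧸ Jf)) =
        (Submodule.span ℂ S).map (Ideal.Quotient.mkₐ ℂ Jf).toLinearMap := by
      symm
      rw [eq_top_iff]
      rintro q -
      obtain ⟨p, rfl⟩ := Ideal.Quotient.mk_surjective q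
      obtain ⟨a, ha, b, hb, rfl⟩ := Submodule.mem_sup.mp (hUtop p)
      refine ⟨b, hb, ?_⟩
      have : Ideal.Quotient.mk Jf a = 0 := Ideal.Quotient.eq_zero_iff_mem.mpr ha
      simp [this]
    rw [h1]
    exact (Submodule.fg_span (hBfin.image _)).map _
  have hint : ∀ i, ∃ p : Polynomial ℂ, p ≠ 0 ∧
      Polynomial.aeval (X i : MvPolynomial (Fin (n + 1)) ℂ) p ∈ Jf := by
    intro i
    obtain ⟨p, hp, hp2⟩ := Algebra.IsIntegral.isIntegral (R := ℂ) (Ideal.Quotient.mkₐ ℂ Jf (X i))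
    refine ⟨p, hp.ne_zero, ?_⟩
    rw [← Polynomial.aeval_def, Polynomial.aeval_algHom_apply] at hp2
    exact Ideal.Quotient.eq_zero_iff_mem.mp hp2
  choose p hp0 hpJ using hint
  refine (Set.Finite.pi' (fun i => (p i).rootSet_finite ℂ)).subset ?_
  intro x hx i
  rw [Polynomial.mem_rootSet]
  refine ⟨hp0 i, ?_⟩
  have hle : Jf ≤ RingHom.ker (aeval x : MvPolynomial (Fin (n + 1)) ℂ →ₐ[ℂ] ℂ) := by
    rw [hJf, Ideal.span_le]
    rintro _ ⟨j, rfl⟩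
    simpa [RingHom.mem_ker, aeval_eq_eval] using hx j
  have h2 := hle (hpJ i)
  rw [RingHom.mem_ker, ← Polynomial.aeval_algHom_apply, aeval_X] at h2
  exact h2
end

section
/- Let f ∈ ℂ[x₁,…,x_{n+1}] be a strongly tame polynomial and let c ∈ ℂ be a value that is not a critical value of f (i.e., c ∉ f(Sing(f))). Then the fiber L_c := f^{-1}(c) ⊆ ℂ^{n+1} is nonempty and connected. -/
namespace RF
open MvPolynomial

/-- weighted grading as a polynomial in one variable -/
noncomputable def psi {σ : Type} (α : σ → ℕ) :
    MvPolynomial σ ℂ →ₐ[ℂ] Polynomial (MvPolynomial σ ℂ) :=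
  MvPolynomial.aeval (fun i => Polynomial.C (X i) * Polynomial.X ^ (α i))

lemma psi_monomial {σ : Type} (α : σ → ℕ) (m : σ →₀ ℕ) (a : ℂ) :
    psi α (monomial m a) = Polynomial.monomial (Finsupp.weight α m) (monomial m a) := by
  rw [psi, aeval_monomial, Polynomial.algebraMap_apply, ← Polynomial.C_mul_X_pow_eq_monomial,
    MvPolynomial.monomial_eq, Finsupp.weight_apply]
  simp only [mul_pow, Finsupp.prod_mul, map_mul, ← pow_mul]
  rw [Finsupp.prod, Finsupp.prod, Finsupp.sum, Finset.prod_pow_eq_pow_sum, Finsupp.prod]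
  simp only [map_prod, map_pow, algebraMap_eq, smul_eq_mul, mul_comm]
  ring

lemma coeff_psi {σ : Type} (α : σ → ℕ) (k : ℕ) (p : MvPolynomial σ ℂ) :
    (psi α p).coeff k = weightedHomogeneousComponent α k p := by
  classical
  induction p using MvPolynomial.monomial_add_induction_on with
  | C a => 
    rw [show (C a : MvPolynomial σ ℂ) = monomial 0 a from rfl, psi_monomial, Polynomial.coeff_monomial]
    ext m
    rw [coeff_weightedHomogeneousComponent]
    split_ifs <;> simp_all [coeff_monomial] <;> aesop
  | monomial_add m a p _ _ ih =>
    rw [map_add, map_add, Polynomial.coeff_add, ih, psi_monomial, Polynomial.coeff_monomial]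
    congr 1
    ext m'
    rw [coeff_weightedHomogeneousComponent]
    split_ifs <;> simp_all [coeff_monomial] <;> aesop

lemma psi_coeff {σ : Type} (α : σ → ℕ) (k : ℕ) (p : MvPolynomial σ ℂ) :
    psi α ((psi α p).coeff k) = Polynomial.monomial k ((psi α p).coeff k) := by
  classical
  ext1 j
  rw [Polynomial.coeff_monomial, coeff_psi, coeff_psi]
  ext m
  rw [coeff_weightedHomogeneousComponent]
  split_ifs <;> simp_all [coeff_weightedHomogeneousComponent]
  rintro rfl; contradiction

lemma psi_inj {σ : Type} (α : σ → ℕ) : Function.Injective (psi α) := by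
  intro p q h
  have : ∀ p : MvPolynomial σ ℂ, (psi α p).eval 1 = p := by
    intro p
    have : ((Polynomial.evalRingHom (1 : MvPolynomial σ ℂ)).comp (psi α : _ →+* _)) = RingHom.id _ := by
      apply MvPolynomial.ringHom_ext
      · intro r; simp [psi, MvPolynomial.algebraMap_eq, Polynomial.algebraMap_apply]
      · intro i; simp [psi]
    exact congrArg (fun f => f p) this
  rw [← this p, h, this q]

/-- no Bezout relation if top forms are relatively prime -/
lemma no_bezout {σ : Type} (α : σ → ℕ) (P Q : MvPolynomial σ ℂ)
    (hP : 0 < (psi α P).natDegree) (hQ : 0 < (psi α Q).natDegree)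
    (hrel : IsRelPrime (psi α P).leadingCoeff (psi α Q).leadingCoeff) :
    ∀ N : ℕ, ∀ u v : MvPolynomial σ ℂ, (psi α u).natDegree = N → u * P + v * Q = 1 → False := by
  intro N
  induction N using Nat.strong_induction_on with
  | _ N ih =>
  intro u v hu h
  have hP0 : psi α P ≠ 0 := by rintro h; simp [h] at hP
  have hQ0 : psi α Q ≠ 0 := by rintro h; simp [h] at hQ
  have hb : (psi α Q).leadingCoeff ≠ 0 := by simpa using hQ0
  have h' : psi α u * psi α P + psi α v * psi α Q = 1 := by
    rw [← map_mul, ← map_mul, ← map_add, h, map_one]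
  have hu0 : psi α u ≠ 0 := by
    intro h0
    rw [h0, zero_mul, zero_add] at h'
    have := congrArg Polynomial.natDegree h'
    have hv0 : psi α v ≠ 0 := by rintro h; simp [h] at h'
    rw [Polynomial.natDegree_mul hv0 hQ0, Polynomial.natDegree_one] at this
    omega
  have key : psi α v * psi α Q = 1 - psi α u * psi α P := by rw [← h']; ring
  have hlc : (psi α v).leadingCoeff * (psi α Q).leadingCoeff =
      - ((psi α u).leadingCoeff * (psi α P).leadingCoeff) := by
    rw [← Polynomial.leadingCoeff_mul, ← Polynomial.leadingCoeff_mul, key,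
      sub_eq_neg_add, Polynomial.leadingCoeff_add_of_degree_lt', Polynomial.leadingCoeff_neg]
    rw [Polynomial.degree_one, Polynomial.degree_neg, ← Polynomial.natDegree_pos_iff_degree_pos,
      Polynomial.natDegree_mul hu0 hP0]
    omega
  have hdvd : (psi α Q).leadingCoeff ∣ (psi α u).leadingCoeff := by
    apply hrel.symm.dvd_of_dvd_mul_right
    rw [← dvd_neg, ← hlc]
    exact dvd_mul_left _ _
  obtain ⟨w, hw⟩ := hdvd
  have hw0 : w ≠ 0 := by
    rintro rfl
    simp at hw
    exact hu0 hw
  have hpw0 : psi α w ≠ 0 := by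
    intro h0; apply hw0; apply psi_inj α; rw [h0, map_zero]
  have e1 : psi α w * Polynomial.monomial (psi α Q).natDegree (psi α Q).leadingCoeff
      = Polynomial.monomial (psi α u).natDegree (psi α u).leadingCoeff := by
    have h1 := psi_coeff α (psi α Q).natDegree Q
    have h2 := psi_coeff α (psi α u).natDegree u
    rw [Polynomial.coeff_natDegree] at h1 h2
    rw [← h1, ← h2, hw, map_mul, mul_comm]
  have e2 : (psi α w).leadingCoeff = w := by
    have := congrArg Polynomial.leadingCoeff e1
    rw [Polynomial.leadingCoeff_mul, Polynomial.leadingCoeff_monomial,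
      Polynomial.leadingCoeff_monomial, hw, mul_comm] at this
    exact mul_left_cancel₀ hb this
  have e3 : (psi α w).natDegree + (psi α Q).natDegree = (psi α u).natDegree := by
    have := congrArg Polynomial.natDegree e1
    rw [Polynomial.natDegree_mul hpw0 (by simpa using hQ0), Polynomial.natDegree_monomial_eq _ hb,
      Polynomial.natDegree_monomial_eq _ (by simpa using hu0)] at this
    exact this
  have hwQ0 : psi α w * psi α Q ≠ 0 := mul_ne_zero hpw0 hQ0
  have hdeg : (psi α (u - w * Q)).degree < (psi α u).degree := by
    rw [map_sub, map_mul]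
    apply Polynomial.degree_sub_lt_left
    · rw [Polynomial.degree_eq_natDegree hu0, Polynomial.degree_eq_natDegree hwQ0,
        Polynomial.natDegree_mul hpw0 hQ0, e3]
    · exact hu0
    · rw [Polynomial.leadingCoeff_mul, e2, hw, mul_comm]
  have hrel' : (u - w * Q) * P + (v + w * P) * Q = 1 := by rw [← h]; ring
  by_cases hz : psi α (u - w * Q) = 0
  · have hz' : u - w * Q = 0 := by apply psi_inj α; rw [hz, map_zero]
    rw [hz', zero_mul, zero_add] at hrel'
    have h5 := congrArg (fun p => (psi α p).natDegree) hrel'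
    simp only [map_mul, map_one, Polynomial.natDegree_one] at h5
    have hv0 : psi α (v + w * P) ≠ 0 := by
      rintro h
      have := congrArg (psi α) hrel'
      rw [map_mul, h] at this
      simp at this
    rw [Polynomial.natDegree_mul hv0 hQ0] at h5
    omega
  · exact ih _ (by rw [← hu]; exact Polynomial.natDegree_lt_natDegree hz hdeg) _ _ rfl hrel'

lemma unit_of_zeros {n : ℕ} (hn : 1 ≤ n) (e : MvPolynomial (Fin (n+1)) ℂ)
    (h : ∀ x, eval x e = 0 → x = 0) : IsUnit e := by
  have key : ∀ i, ∃ N, e ∣ (X i) ^ N := by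
    intro i
    have : (X i : MvPolynomial (Fin (n+1)) ℂ) ∈ (Ideal.span {e}).radical := by
      rw [← vanishingIdeal_zeroLocus_eq_radical (K := ℂ)]
      intro x hx
      have := h x (hx e (Ideal.subset_span rfl))
      simp [this]
    obtain ⟨N, hN⟩ := this
    exact ⟨N, Ideal.mem_span_singleton.1 hN⟩
  obtain ⟨N, hN⟩ := key 0
  obtain ⟨M, hM⟩ := key ⟨1, by omega⟩
  have hp : ∀ i, Prime (X i : MvPolynomial (Fin (n+1)) ℂ) := fun i => MvPolynomial.X_prime
  have : IsRelPrime ((X 0 : MvPolynomial (Fin (n+1)) ℂ)^N) (X ⟨1, by omega⟩ ^ M) := by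
    apply IsRelPrime.pow
    rw [(hp 0).irreducible.isRelPrime_iff_not_dvd]
    rw [X_dvd_X]
    intro h
    simp [Fin.ext_iff] at h
  exact this hN hM

lemma no_zero_bezout {σ : Type} [Finite σ] (P Q : MvPolynomial σ ℂ)
    (h : ∀ x, eval x P = 0 → eval x Q = 0 → False) : ∃ u v, u * P + v * Q = 1 := by
  have : (1 : MvPolynomial σ ℂ) ∈ (Ideal.span {P, Q}).radical := by
    rw [← vanishingIdeal_zeroLocus_eq_radical (K := ℂ)]
    intro x hx
    exact (h x (hx P (Ideal.subset_span (by simp))) (hx Q (Ideal.subset_span (by simp)))).elim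
  obtain ⟨N, hN⟩ := this
  rw [one_pow, Ideal.mem_span_pair] at hN
  exact hN

lemma alg_part (n : ℕ) (hn : 1 ≤ n) (α : Fin (n + 1) → ℕ)
    (hαpos : ∀ i, 0 < α i) 
    (f : MvPolynomial (Fin (n + 1)) ℂ) (d : ℕ)
    (hd : MvPolynomial.weightedTotalDegree α f = d)
    (g : MvPolynomial (Fin (n + 1)) ℂ)
    (hg : g = weightedHomogeneousComponent α d f)
    (hg0 : g ≠ 0)
    (htame : ∀ x : Fin (n + 1) → ℂ, (∀ i, eval x (pderiv i g) = 0) → x = 0)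
    (c : ℂ) (P Q : MvPolynomial (Fin (n+1)) ℂ) (h : P * Q = f - C c)
    (hP : ∃ x, eval x P = 0) (hQ : ∃ x, eval x Q = 0)
    (hPQ : ∀ x, eval x P = 0 → eval x Q = 0 → False) : False := by
  have hdeg0 : ∀ p : MvPolynomial (Fin (n+1)) ℂ, (psi α p).natDegree = 0 → ∃ a, p = C a := by
    intro p hp
    have h1 := psi_inj α
    refine ⟨coeff 0 p, ?_⟩
    ext m
    rw [coeff_C]
    split_ifs with hm
    · rw [hm]
    by_contra hne
    have h2 : (psi α p).coeff (Finsupp.weight α m) = 0 := by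
      apply Polynomial.coeff_eq_zero_of_natDegree_lt
      rw [hp]
      rw [Nat.pos_iff_ne_zero]
      intro h0
      have : Finsupp.NonTorsionWeight ℕ α := Finsupp.nonTorsionWeight_of ℕ α (fun i => (hαpos i).ne')
      rw [Finsupp.weight_eq_zero_iff_eq_zero (w := α)] at h0
      · exact hm h0.symm
    rw [coeff_psi] at h2
    have := congrArg (coeff m) h2
    classical
    rw [coeff_weightedHomogeneousComponent] at this
    simp at this
    exact hne this
  have hgc : ∀ a, g ≠ C a := by
    rintro a rfl
    have := htame (fun _ => 1) (by simp)
    have := congrFun this 0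
    simp at this
  have hdpos : d ≠ 0 := by
    rintro rfl
    rw [← coeff_psi] at hg
    obtain ⟨a, ha⟩ := hdeg0 g (by
      rw [hg, psi_coeff]; exact Nat.le_zero.1 (Polynomial.natDegree_monomial_le _))
    exact hgc a ha
  have hcoefd : (psi α (f - C c)).coeff d = g := by
    rw [map_sub, Polynomial.coeff_sub, coeff_psi, ← hg]
    rw [show (C c : MvPolynomial (Fin (n+1)) ℂ) = monomial 0 c from rfl, psi_monomial, Polynomial.coeff_monomial]
    simp [hdpos.symm]
  have hnat : (psi α (f - C c)).natDegree = d := by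
    apply le_antisymm
    · rw [map_sub]
      apply (Polynomial.natDegree_sub_le _ _).trans
      apply max_le
      · rw [Polynomial.natDegree_le_iff_coeff_eq_zero]
        intro N hN
        rw [coeff_psi]
        apply weightedHomogeneousComponent_eq_zero
        omega
      · rw [show (C c : MvPolynomial (Fin (n+1)) ℂ) = monomial 0 c from rfl, psi_monomial]
        exact (Polynomial.natDegree_monomial_le _).trans (by simp)
    · apply Polynomial.le_natDegree_of_ne_zero
      rw [hcoefd]; exact hg0
  have hlead : (psi α P).leadingCoeff * (psi α Q).leadingCoeff = g := by
    rw [← Polynomial.leadingCoeff_mul, ← map_mul, h, Polynomial.leadingCoeff, hnat, hcoefd]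
  have hF0 : f - C c ≠ 0 := by
    intro h0; rw [h0] at hcoefd; simp at hcoefd; exact hg0 hcoefd.symm
  have hpos : ∀ R : MvPolynomial (Fin (n+1)) ℂ, R ≠ 0 → (∃ x, eval x R = 0) → 0 < (psi α R).natDegree := by
    rintro R hR ⟨x, hx⟩
    rw [Nat.pos_iff_ne_zero]
    intro h0
    obtain ⟨a, rfl⟩ := hdeg0 R h0
    simp at hx
    simp [hx] at hR
  have hP0 : P ≠ 0 := by rintro rfl; simp at h; exact hF0 h.symm
  have hQ0 : Q ≠ 0 := by rintro rfl; simp at h; exact hF0 h.symm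
  obtain ⟨u, v, huv⟩ := no_zero_bezout P Q hPQ
  refine no_bezout α P Q (hpos P hP0 hP) (hpos Q hQ0 hQ) ?_ _ u v rfl huv
  rintro e ⟨a, ha⟩ ⟨b, hb⟩
  apply unit_of_zeros hn
  intro x hx
  apply htame
  intro i
  rw [← hlead, ha, hb]
  simp [hx]

end RF
namespace RF
open MvPolynomial

lemma entire_poly (h : ℂ → ℂ) (hd : Differentiable ℂ h) (C : ℝ) (N : ℕ)
    (hb : ∀ z, ‖h z‖ ≤ C * (1 + ‖z‖) ^ N) :
    ∃ p : Polynomial ℂ, p.degree < (N + 1 : ℕ) ∧ ∀ z, p.eval z = h z := by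
  have hz : ∀ k, N < k → iteratedDeriv k h 0 = 0 := by
    intro k hk
    have hC : 0 ≤ C := by
      have := (norm_nonneg _).trans (hb 0)
      simpa using this
    have key : ∀ R : ℝ, 1 ≤ R → ‖iteratedDeriv k h 0‖ ≤ (k.factorial * (C * 2 ^ N)) / R := by
      intro R hR
      have h1 := Complex.norm_iteratedDeriv_le_of_forall_mem_sphere_norm_le (c := 0) (R := R)
        (C := C * (2 * R) ^ N) (f := h) k (by linarith) hd.diffContOnCl (by
          intro z hz
          have : ‖z‖ = R := by simpa using hz
          refine (hb z).trans ?_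
          rw [this]
          gcongr
          linarith)
      refine h1.trans ?_
      have hR0 : 0 < R := by linarith
      rw [div_le_div_iff₀ (by positivity) hR0, mul_pow]
      have : R ^ N * R ≤ R ^ k := by
        rw [← pow_succ]; exact pow_le_pow_right₀ hR hk
      calc _ = (k.factorial * (C * 2 ^ N)) * (R ^ N * R) := by ring
        _ ≤ _ := by gcongr
    have h2 : Filter.Tendsto (fun R : ℝ => (k.factorial * (C * 2 ^ N)) / R) Filter.atTop (nhds 0) :=
      Filter.Tendsto.div_atTop tendsto_const_nhds Filter.tendsto_id
    have h3 : ‖iteratedDeriv k h 0‖ ≤ 0 :=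
      ge_of_tendsto h2 ((Filter.eventually_ge_atTop 1).mono key)
    simpa using h3
  refine ⟨∑ k ∈ Finset.range (N+1), Polynomial.monomial k ((k.factorial : ℂ)⁻¹ * iteratedDeriv k h 0), ?_, ?_⟩
  · rw [← Polynomial.mem_degreeLT]
    apply Submodule.sum_mem
    intro k hk
    rw [Polynomial.mem_degreeLT]
    refine (Polynomial.degree_monomial_le _ _).trans_lt ?_
    exact_mod_cast Finset.mem_range.1 hk
  · intro z
    rw [← Complex.taylorSeries_eq_of_entire' 0 z hd, tsum_eq_sum (s := Finset.range (N+1))]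
    · simp [Polynomial.eval_finsetSum]
    · intro k hk
      rw [hz k (by rw [Finset.mem_range] at hk; omega)]
      simp

lemma multi_poly (m : ℕ) : ∀ (h : (Fin m → ℂ) → ℂ)
    (hd : ∀ x w : Fin m → ℂ, Differentiable ℂ (fun s : ℂ => h (x + s • w))) (C : ℝ) (N : ℕ)
    (hb : ∀ x, ‖h x‖ ≤ C * (1 + ‖x‖) ^ N), ∃ P : MvPolynomial (Fin m) ℂ, ∀ x, eval x P = h x := by
  induction m with
  | zero =>
    intro h _ _ _ _
    refine ⟨MvPolynomial.C (h 0), fun x => ?_⟩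
    rw [Subsingleton.elim x 0]; simp
  | succ m ih =>
    intro h hd C N hb
    have hC : 0 ≤ C := by
      have := (norm_nonneg _).trans (hb 0)
      simpa using this
    have hnorm : ∀ (s : ℂ) (y : Fin m → ℂ), 1 + ‖(Fin.cons s y : Fin (m+1) → ℂ)‖ ≤ (1 + ‖s‖) * (1 + ‖y‖) := by
      intro s y
      have : ‖(Fin.cons s y : Fin (m+1) → ℂ)‖ ≤ ‖s‖ + ‖y‖ := by
        rw [pi_norm_le_iff_of_nonneg (by positivity)]
        intro i
        refine Fin.cases ?_ (fun i => ?_) i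
        · simp
        · simp only [Fin.cons_succ]
          have := norm_le_pi_norm y i
          have := norm_nonneg s
          linarith
      nlinarith [norm_nonneg s, norm_nonneg y, mul_nonneg (norm_nonneg s) (norm_nonneg y)]
    have hbb : ∀ (s : ℂ) (y : Fin m → ℂ), ‖h (Fin.cons s y)‖ ≤ C * ((1 + ‖s‖)^N * (1 + ‖y‖) ^ N) := by
      intro s y
      refine (hb _).trans ?_
      rw [← mul_pow]
      gcongr
      exact hnorm s y
    have h1 : ∀ s : ℂ, ∃ P : MvPolynomial (Fin m) ℂ, ∀ y, eval y P = h (Fin.cons s y) := by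
      intro s
      refine ih (fun y => h (Fin.cons s y)) ?_ (C * (1 + ‖s‖)^N) N ?_
      · intro y w
        convert! hd (Fin.cons s y) (Fin.cons 0 w) using 3 with t
        ext i
        refine Fin.cases ?_ (fun i => ?_) i <;> simp
      · intro y
        rw [mul_assoc]; exact hbb s y
    have h2 : ∀ y : Fin m → ℂ, ∃ p : Polynomial ℂ, p.degree < (N + 1 : ℕ) ∧ ∀ z, p.eval z = h (Fin.cons z y) := by
      intro y
      refine entire_poly (fun z => h (Fin.cons z y)) ?_ (C * (1 + ‖y‖)^N) N ?_
      · convert! hd (Fin.cons 0 y) (Fin.cons 1 0) using 3 with t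
        ext i
        refine Fin.cases ?_ (fun i => ?_) i <;> simp
      · intro z
        refine (hbb z y).trans (le_of_eq ?_)
        ring
    choose P hP using h1
    let v : ℕ → ℂ := fun i => (i : ℂ)
    have hv : Set.InjOn v (Finset.range (N+1)) := fun a _ b _ hab => by simpa [v] using hab
    refine ⟨∑ i ∈ Finset.range (N+1), Polynomial.aeval (X 0) (Lagrange.basis (Finset.range (N+1)) v i) *
      rename Fin.succ (P (v i)), ?_⟩
    intro x
    obtain ⟨s, y, rfl⟩ : ∃ s y, x = Fin.cons s y := ⟨x 0, Fin.tail x, (Fin.cons_self_tail x).symm⟩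
    obtain ⟨p, hp1, hp2⟩ := h2 y
    rw [← hp2 s]
    rw [Lagrange.eq_interpolate hv (f := p) (by simpa using hp1), Lagrange.interpolate_apply,
      Polynomial.eval_finsetSum, map_sum]
    refine Finset.sum_congr rfl fun i _ => ?_
    rw [map_mul, eval_rename, Polynomial.eval_mul, Polynomial.eval_C, hp2, mul_comm]
    congr 1
    · exact hP _ _
    · rw [Polynomial.aeval_def, Polynomial.hom_eval₂]
      have e : (eval (Fin.cons s y : Fin (m+1) → ℂ)).comp (algebraMap ℂ (MvPolynomial (Fin (m+1)) ℂ))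
          = RingHom.id ℂ := by ext; simp [MvPolynomial.algebraMap_eq]
      rw [e]
      simp [Polynomial.eval₂_eq_eval_map]

end RF
namespace RF
open Polynomial Filter Topology Asymptotics

/-- polynomial from coefficient vector -/
noncomputable def toP (k : ℕ) : (Fin k → ℂ) →ₗ[ℂ] ℂ[X] where
  toFun a := ∑ i : Fin k, monomial (i : ℕ) (a i)
  map_add' a b := by simp [Finset.sum_add_distrib]
  map_smul' c a := by simp [Finset.smul_sum, smul_monomial]

lemma toP_coeff (k : ℕ) (p : ℂ[X]) (h : p.degree < k) : toP k (fun i => p.coeff i) = p := by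
  simp only [toP, LinearMap.coe_mk, AddHom.coe_mk]
  ext j
  rw [finsetSum_coeff]
  simp only [coeff_monomial]
  by_cases hj : j < k
  · rw [Finset.sum_eq_single (⟨j, hj⟩ : Fin k)]
    · simp
    · intro b _ hb
      rw [if_neg]
      intro h'; apply hb; ext; exact h'
    · simp
  · rw [Finset.sum_eq_zero]
    · symm
      apply coeff_eq_zero_of_degree_lt
      refine h.trans_le ?_
      exact_mod_cast not_lt.1 hj
    · intro i _
      rw [if_neg]
      have := i.2
      omega

lemma toP_degree (k : ℕ) (a : Fin k → ℂ) : (toP k a).degree < k := by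
  simp only [toP, LinearMap.coe_mk, AddHom.coe_mk]
  rw [← mem_degreeLT]
  apply Submodule.sum_mem
  intro i _
  rw [mem_degreeLT]
  refine (degree_monomial_le _ _).trans_lt ?_
  exact_mod_cast i.2

lemma toP_inj (k : ℕ) (a : Fin k → ℂ) (h : toP k a = 0) : a = 0 := by
  ext i
  have := congrArg (fun p => p.coeff i) h
  simp only [toP, LinearMap.coe_mk, AddHom.coe_mk, finsetSum_coeff, coeff_monomial] at this
  rw [Finset.sum_eq_single i] at this
  · simpa using this
  · intro b _ hb
    rw [if_neg]
    intro h'; apply hb; ext; exact h'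
  · simp

/-- coefficient map of `(a,b) ↦ a * Q + P * b` -/
noncomputable def Lmap (k l : ℕ) (P Q : ℂ[X]) : ((Fin k → ℂ) × (Fin l → ℂ)) →ₗ[ℂ] (Fin (k + l) → ℂ) where
  toFun z := fun j => (toP k z.1 * Q + P * toP l z.2).coeff j
  map_add' a b := by ext j; simp [add_mul, mul_add]; ring
  map_smul' c a := by ext j; simp [smul_mul_assoc, mul_smul_comm]; ring

lemma Lmap_inj (k l : ℕ) (P Q : ℂ[X]) (hP : P.Monic) (hQ : Q.Monic) (hk : P.natDegree = k)
    (hl : Q.natDegree = l) (hc : IsCoprime P Q) : LinearMap.ker (Lmap k l P Q) = ⊥ := by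
  rw [LinearMap.ker_eq_bot']
  rintro ⟨a, b⟩ h
  have hPd : P.degree = k := by rw [degree_eq_natDegree hP.ne_zero, hk]
  have hQd : Q.degree = l := by rw [degree_eq_natDegree hQ.ne_zero, hl]
  have e : toP k a * Q + P * toP l b = 0 := by
    have hdeg : (toP k a * Q + P * toP l b).degree < (k + l : ℕ) := by
      refine (degree_add_le _ _).trans_lt (max_lt ?_ ?_)
      · rw [degree_mul, hQd, Nat.cast_add]
        exact WithBot.add_lt_add_right (by simp) (toP_degree k a)
      · rw [degree_mul, hPd, Nat.cast_add]
        exact WithBot.add_lt_add_left (by simp) (toP_degree l b)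
    rw [← toP_coeff (k + l) _ hdeg]
    have h' : (fun j : Fin (k+l) => (toP k a * Q + P * toP l b).coeff j) = 0 := h
    rw [h', map_zero]
  have ha : toP k a = 0 := by
    by_contra hne
    have : P ∣ toP k a := by
      apply hc.dvd_of_dvd_mul_right
      rw [eq_neg_of_add_eq_zero_left e]
      exact (dvd_mul_right _ _).neg_right
    have := degree_le_of_dvd this hne
    rw [hPd] at this
    exact absurd (toP_degree k a) (not_lt.2 this)
  have hb : toP l b = 0 := by
    rw [ha, zero_mul, zero_add] at e
    exact (mul_eq_zero.1 e).resolve_left hP.ne_zero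
  rw [toP_inj _ _ ha, toP_inj _ _ hb]
  rfl

lemma diff_of_factor (P Q : ℂ → ℂ[X]) (s₀ : ℂ) (hP : ∀ s, (P s).Monic) (hQ : ∀ s, (Q s).Monic)
    (hPd : ∀ᶠ s in 𝓝 s₀, (P s).natDegree = (P s₀).natDegree)
    (hQd : ∀ᶠ s in 𝓝 s₀, (Q s).natDegree = (Q s₀).natDegree)
    (hc : IsCoprime (P s₀) (Q s₀))
    (hPc : ∀ j, ContinuousAt (fun s => (P s).coeff j) s₀)
    (hQc : ∀ j, ContinuousAt (fun s => (Q s).coeff j) s₀)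
    (hF : ∀ j, DifferentiableAt ℂ (fun s => (P s * Q s).coeff j) s₀) (j : ℕ) :
    DifferentiableAt ℂ (fun s => (P s).coeff j) s₀ := by
  set k := (P s₀).natDegree with hk
  set l := (Q s₀).natDegree with hl
  obtain ⟨M, hM⟩ := (Lmap k l (P s₀) (Q s₀)).exists_leftInverse_of_injective
    (Lmap_inj k l _ _ (hP _) (hQ _) rfl rfl hc)
  let M' := LinearMap.toContinuousLinearMap M
  let a : ℂ → Fin k → ℂ := fun s i => (P s - P s₀).coeff i
  let b : ℂ → Fin l → ℂ := fun s i => (Q s - Q s₀).coeff i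
  let z : ℂ → (Fin k → ℂ) × (Fin l → ℂ) := fun s => (a s, b s)
  let F : ℂ → Fin (k + l) → ℂ := fun s i => (P s * Q s - P s₀ * Q s₀).coeff i
  let E : ℂ → Fin (k + l) → ℂ := fun s i => (toP k (a s) * toP l (b s)).coeff i
  have ha : ∀ᶠ s in 𝓝 s₀, toP k (a s) = P s - P s₀ := by
    filter_upwards [hPd] with s hs
    apply toP_coeff
    have : (P s - P s₀).degree < (P s).degree := by
      apply degree_sub_lt_left
      · rw [degree_eq_natDegree (hP s).ne_zero, degree_eq_natDegree (hP s₀).ne_zero, hs]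
      · exact (hP s).ne_zero
      · rw [(hP s).leadingCoeff, (hP s₀).leadingCoeff]
    rwa [degree_eq_natDegree (hP s).ne_zero, hs] at this
  have hb : ∀ᶠ s in 𝓝 s₀, toP l (b s) = Q s - Q s₀ := by
    filter_upwards [hQd] with s hs
    apply toP_coeff
    have : (Q s - Q s₀).degree < (Q s).degree := by
      apply degree_sub_lt_left
      · rw [degree_eq_natDegree (hQ s).ne_zero, degree_eq_natDegree (hQ s₀).ne_zero, hs]
      · exact (hQ s).ne_zero
      · rw [(hQ s).leadingCoeff, (hQ s₀).leadingCoeff]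
    rwa [degree_eq_natDegree (hQ s).ne_zero, hs] at this
  have hz : ∀ᶠ s in 𝓝 s₀, z s - M' (F s) = - M' (E s) := by
    filter_upwards [ha, hb] with s h1 h2
    have h3 : Lmap k l (P s₀) (Q s₀) (z s) = F s - E s := by
      ext i
      change (toP k (a s) * Q s₀ + P s₀ * toP l (b s)).coeff i =
        (P s * Q s - P s₀ * Q s₀).coeff i - (toP k (a s) * toP l (b s)).coeff i
      rw [h1, h2, ← coeff_sub]
      congr 1
      ring
    have h4 : M (Lmap k l (P s₀) (Q s₀) (z s)) = z s := congrArg (fun f => f (z s)) hM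
    rw [h3, map_sub] at h4
    change z s - M (F s) = - M (E s)
    rw [← h4]
    abel
  have hac : ∀ i, Tendsto (fun s => a s i) (𝓝 s₀) (𝓝 0) := by
    intro i
    have h1 := hPc i
    have := tendsto_sub_nhds_zero_iff.2 (h1.tendsto)
    simpa [a] using this
  have hbc : ∀ i, Tendsto (fun s => b s i) (𝓝 s₀) (𝓝 0) := by
    intro i
    have h1 := hQc i
    have := tendsto_sub_nhds_zero_iff.2 (h1.tendsto)
    simpa [b] using this
  have hE : E =o[𝓝 s₀] z := by
    rw [isLittleO_pi]
    intro i
    change (fun s => (toP k (a s) * toP l (b s)).coeff i) =o[𝓝 s₀] z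
    simp only [toP, LinearMap.coe_mk, AddHom.coe_mk, Finset.sum_mul_sum, finsetSum_coeff,
      monomial_mul_monomial, coeff_monomial]
    refine IsLittleO.fun_sum fun p _ => ?_
    refine IsLittleO.fun_sum fun q _ => ?_
    split_ifs
    · have h1 : (fun s => a s p) =O[𝓝 s₀] z := by
        refine isBigO_of_le _ fun s => ?_
        exact (norm_le_pi_norm (a s) p).trans (norm_fst_le (z s))
      have h2 : (fun s => b s q) =o[𝓝 s₀] (fun _ => (1 : ℂ)) := (isLittleO_one_iff ℂ).2 (hbc q)
      have := h1.norm_right.mul_isLittleO h2.norm_right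
      simp only [norm_one, mul_one] at this
      exact this.of_norm_right
    · exact isLittleO_zero _ _
  have hzF : (fun s => z s - M' (F s)) =o[𝓝 s₀] z := by
    refine IsLittleO.congr' ?_ (hz.mono fun s hs => hs.symm) (EventuallyEq.refl _ _)
    exact ((M'.isBigO_comp E (𝓝 s₀)).trans_isLittleO hE).neg_left
  have hFd : DifferentiableAt ℂ (fun s => M' (F s)) s₀ := by
    refine M'.differentiableAt.comp s₀ ?_
    rw [differentiableAt_pi]
    intro i
    simp only [F, coeff_sub]
    exact (hF i).sub (differentiableAt_const _)
  have hF0 : M' (F s₀) = 0 := by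
    have : F s₀ = 0 := by ext i; simp [F]
    rw [this, map_zero]
  have hz0 : z s₀ = 0 := by ext i <;> simp [z, a, b]
  have hFO : (fun s => M' (F s)) =O[𝓝 s₀] (fun s => s - s₀) := by
    have := hFd.isBigO_sub
    simpa [hF0] using this
  have hzO : z =O[𝓝 s₀] (fun s => s - s₀) := by
    have h1 : z =O[𝓝 s₀] (fun s => M' (F s)) := by
      have := hzF.right_isBigO_sub
      simpa using this
    exact h1.trans hFO
  have hzd : DifferentiableAt ℂ z s₀ := by
    have h1 := hFd.hasDerivAt
    have h2 : HasDerivAt (fun s => z s - M' (F s)) 0 s₀ := by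
      rw [hasDerivAt_iff_isLittleO]
      simpa [hz0, hF0] using hzF.trans_isBigO hzO
    have := h2.add h1
    refine (this.differentiableAt).congr_of_eventuallyEq ?_
    filter_upwards with s
    simp
  have hPs : ∀ᶠ s in 𝓝 s₀, (P s).coeff j = (toP k (z s).1 + P s₀).coeff j := by
    filter_upwards [ha] with s hs
    change _ = (toP k (a s) + P s₀).coeff j
    rw [hs]; simp
  refine DifferentiableAt.congr_of_eventuallyEq ?_ hPs
  simp only [toP, LinearMap.coe_mk, AddHom.coe_mk, coeff_add, finsetSum_coeff, coeff_monomial]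
  refine DifferentiableAt.add_const _ (DifferentiableAt.fun_sum fun i _ => ?_)
  split_ifs
  · have := differentiableAt_pi.1 hzd.fst i
    exact this
  · exact differentiableAt_const _

end RF
namespace RF
open Polynomial Filter Topology Asymptotics

open Classical in
/-- factor of `Φ` with roots in `S` -/
noncomputable def part (Φ : ℂ[X]) (S : Set ℂ) : ℂ[X] :=
  ((Φ.roots.filter (fun t => t ∈ S)).map (fun t => X - C t)).prod

lemma part_monic (Φ : ℂ[X]) (S : Set ℂ) : (part Φ S).Monic :=
  monic_multiset_prod_of_monic _ _ fun t _ => monic_X_sub_C t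

open Classical in
lemma part_eq (D : ℕ) (r : Fin D → ℂ) (S : Set ℂ) :
    part (∏ i, (X - C (r i))) S = ∏ i with r i ∈ S, (X - C (r i)) := by
  have : (∏ i, (X - C (r i))).roots = Finset.univ.val.map r := by
    have := roots_multiset_prod_X_sub_C (Finset.univ.val.map r)
    rw [Multiset.map_map] at this
    exact this
  rw [part, this, Multiset.filter_map, Multiset.map_map]
  rfl

lemma monic_eq_prod_roots (Φ : ℂ[X]) (h : Φ.Monic) : Φ = (Φ.roots.map (fun t => X - C t)).prod := by
  have := (IsAlgClosed.splits Φ).eq_prod_roots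
  rw [h.leadingCoeff, C_1, one_mul] at this
  exact this

lemma part_mul (Φ : ℂ[X]) (h : Φ.Monic) (S T : Set ℂ) (hST : ∀ t, Φ.IsRoot t → (t ∈ T ↔ t ∉ S)) :
    part Φ S * part Φ T = Φ := by
  classical
  conv_rhs => rw [monic_eq_prod_roots Φ h]
  have : Φ.roots.filter (fun t => t ∈ T) = Φ.roots.filter (fun t => ¬ t ∈ S) :=
    Multiset.filter_congr fun t ht => hST t (isRoot_of_mem_roots ht)
  rw [part, part, this, ← Multiset.prod_add, ← Multiset.map_add, Multiset.filter_add_not]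

lemma part_root (Φ : ℂ[X]) (h : Φ.Monic) (S : Set ℂ) (t : ℂ) :
    (part Φ S).IsRoot t ↔ Φ.IsRoot t ∧ t ∈ S := by
  classical
  have h1 : (part Φ S).roots = Φ.roots.filter (fun t => t ∈ S) := roots_multiset_prod_X_sub_C _
  rw [← mem_roots (part_monic Φ S).ne_zero, h1, Multiset.mem_filter, mem_roots h.ne_zero]

lemma root_bound (Φ : ℂ[X]) (h : Φ.Monic) (t : ℂ) (ht : Φ.IsRoot t) :
    ‖t‖ ≤ 1 + ∑ j ∈ Finset.range Φ.natDegree, ‖Φ.coeff j‖ := by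
  have h1 := (IsRoot.norm_lt_cauchyBound h.ne_zero ht).le
  have h2 : cauchyBound Φ ≤ 1 + ∑ j ∈ Finset.range Φ.natDegree, ‖Φ.coeff j‖₊ := by
    rw [cauchyBound, h.leadingCoeff, nnnorm_one, div_one, add_comm]
    gcongr
    apply Finset.sup_le
    intro j hj
    exact Finset.single_le_sum (f := fun j => ‖Φ.coeff j‖₊) (fun _ _ => zero_le) hj
  have h3 := NNReal.coe_le_coe.2 (h1.trans h2)
  simpa using h3

lemma exists_roots (Φ : ℂ[X]) (h : Φ.Monic) (D : ℕ) (hD : Φ.natDegree = D) :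
    ∃ r : Fin D → ℂ, Φ = ∏ i, (X - C (r i)) := by
  have h1 := monic_eq_prod_roots Φ h
  obtain ⟨l, hl⟩ := Quot.exists_rep Φ.roots
  have hl' : Φ.roots = (l : Multiset ℂ) := hl.symm
  have hlen : D = l.length := by
    rw [← hD, h1, hl']
    rw [natDegree_multiset_prod_X_sub_C_eq_card]
    simp
  subst hlen
  refine ⟨l.get, ?_⟩
  conv_lhs => rw [h1, hl']
  rw [Multiset.map_coe, Multiset.prod_coe, ← List.prod_ofFn]
  congr 1
  conv_lhs => rw [← List.ofFn_get l, List.map_ofFn]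
  rfl

lemma coeff_prod_cont (D : ℕ) (I : Finset (Fin D)) :
    Continuous (fun r : Fin D → ℂ => (∏ i ∈ I, (X - C (r i))).coeff) := by
  classical
  induction I using Finset.induction_on with
  | empty => simp only [Finset.prod_empty]; exact continuous_const
  | insert a s ha ih =>
    rw [continuous_pi_iff] at ih ⊢
    intro j
    simp only [Finset.prod_insert ha, coeff_mul]
    refine continuous_finsetSum _ fun p _ => ?_
    refine Continuous.mul ?_ (ih _)
    simp only [coeff_sub, coeff_C]
    split_ifs
    · fun_prop
    · fun_prop

lemma part_tendsto (Φ : ℂ → ℂ[X]) (D : ℕ) (hm : ∀ s, (Φ s).Monic) (hD : ∀ s, (Φ s).natDegree = D)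
    (hc : ∀ j, Continuous fun s => (Φ s).coeff j) (A B : Set (ℂ × ℂ)) (hA : IsClosed A)
    (hB : IsClosed B) (hAB : ∀ z, z ∈ A → z ∈ B → False)
    (hr : ∀ s t, (Φ s).IsRoot t → (s, t) ∈ A ∨ (s, t) ∈ B) (s₀ : ℂ) :
    Tendsto (fun s => ((part (Φ s) {t | (s, t) ∈ A}).natDegree, (part (Φ s) {t | (s, t) ∈ A}).coeff))
      (𝓝 s₀) (𝓝 ((part (Φ s₀) {t | (s₀, t) ∈ A}).natDegree, (part (Φ s₀) {t | (s₀, t) ∈ A}).coeff)) := by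
  classical
  choose r hrr using fun s => exists_roots (Φ s) (hm s) D (hD s)
  have hroot : ∀ s i, (Φ s).IsRoot (r s i) := by
    intro s i
    rw [hrr s, IsRoot, eval_prod]
    exact Finset.prod_eq_zero (Finset.mem_univ i) (by simp)
  let I : ℂ → Finset (Fin D) := fun s => Finset.univ.filter fun i => (s, r s i) ∈ A
  have hpart : ∀ s, part (Φ s) {t | (s, t) ∈ A} = ∏ i ∈ I s, (X - C (r s i)) := by
    intro s
    conv_lhs => rw [hrr s]
    rw [part_eq]
    rfl
  apply tendsto_of_subseq_tendsto
  intro u hu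
  -- pigeonhole
  obtain ⟨J, hJ⟩ : ∃ J, ∃ᶠ k in atTop, I (u k) = J := by
    rw [← frequently_exists]
    exact (Eventually.of_forall fun k => ⟨_, rfl⟩).frequently
  obtain ⟨φ, hφ, hφJ⟩ := extraction_of_frequently_atTop hJ
  have huφ : Tendsto (u ∘ φ) atTop (𝓝 s₀) := hu.comp hφ.tendsto_atTop
  -- boundedness
  let β : ℂ → ℝ := fun s => 1 + ∑ j ∈ Finset.range D, ‖(Φ s).coeff j‖
  have hβ : Continuous β := by
    refine continuous_const.add (continuous_finsetSum _ fun j _ => (hc j).norm)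
  have hβb : ∃ K, ∀ k, β (u (φ k)) ≤ K := by
    have := (hβ.continuousAt.tendsto.comp huφ).bddAbove_range
    obtain ⟨K, hK⟩ := this
    exact ⟨K, fun k => hK ⟨k, rfl⟩⟩
  obtain ⟨K, hK⟩ := hβb
  have hrb : ∀ k, r (u (φ k)) ∈ Metric.closedBall (0 : Fin D → ℂ) (max K 0) := by
    intro k
    rw [mem_closedBall_zero_iff, pi_norm_le_iff_of_nonneg (le_max_right _ _)]
    intro i
    refine le_trans ?_ ((hK k).trans (le_max_left _ _))
    have := root_bound _ (hm _) _ (hroot (u (φ k)) i)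
    rwa [hD] at this
  obtain ⟨ρ, -, θ, hθ, hρ⟩ := tendsto_subseq_of_bounded Metric.isBounded_closedBall hrb
  have hut : Tendsto (fun k => u (φ (θ k))) atTop (𝓝 s₀) := huφ.comp hθ.tendsto_atTop
  have hρi : ∀ i, Tendsto (fun k => r (u (φ (θ k))) i) atTop (𝓝 (ρ i)) := fun i =>
    (tendsto_pi_nhds.1 hρ) i
  have hΦ : Φ s₀ = ∏ i, (X - C (ρ i)) := by
    ext j
    have h1 := ((hc j).continuousAt (x := s₀)).tendsto.comp hut
    have h2 := ((continuous_pi_iff.1 (coeff_prod_cont D Finset.univ) j).continuousAt (x := ρ)).tendsto.comp hρ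
    refine tendsto_nhds_unique h1 (h2.congr fun k => ?_)
    simp only [Function.comp]
    rw [← hrr]
  have hJeq : J = Finset.univ.filter fun i => (s₀, ρ i) ∈ A := by
    ext i
    rw [Finset.mem_filter]
    have hlim : Tendsto (fun k => (u (φ (θ k)), r (u (φ (θ k))) i)) atTop (𝓝 (s₀, ρ i)) :=
      hut.prodMk_nhds (hρi i)
    have hmem : ∀ k, (i ∈ J ↔ (u (φ (θ k)), r (u (φ (θ k))) i) ∈ A) := by
      intro k
      rw [← hφJ (θ k)]
      simp [I]
    constructor
    · intro hi
      exact ⟨Finset.mem_univ _, hA.mem_of_tendsto hlim (Eventually.of_forall fun k => (hmem k).1 hi)⟩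
    · rintro ⟨-, hi⟩
      by_contra hni
      refine hAB _ hi (hB.mem_of_tendsto hlim (Eventually.of_forall fun k => ?_))
      exact (hr _ _ (hroot _ i)).resolve_left fun h => hni ((hmem k).2 h)
  have hp0 : part (Φ s₀) {t | (s₀, t) ∈ A} = ∏ i ∈ J, (X - C (ρ i)) := by
    rw [hΦ, part_eq, hJeq]; rfl
  refine ⟨fun k => φ (θ k), ?_⟩
  have hpk : ∀ k, part (Φ (u (φ (θ k)))) {t | (u (φ (θ k)), t) ∈ A} =
      ∏ i ∈ J, (X - C (r (u (φ (θ k))) i)) := by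
    intro k
    rw [hpart, hφJ]
  simp only [hpk, hp0]
  refine Tendsto.prodMk_nhds ?_ ?_
  · simp only [natDegree_finsetProd_X_sub_C_eq_card]
    exact tendsto_const_nhds
  · exact ((coeff_prod_cont D J).continuousAt (x := ρ)).tendsto.comp hρ

end RF

namespace RF
open Polynomial Filter Topology Asymptotics

lemma part_diff (Φ : ℂ → ℂ[X]) (D : ℕ) (hm : ∀ s, (Φ s).Monic) (hD : ∀ s, (Φ s).natDegree = D)
    (hc : ∀ j, Differentiable ℂ fun s => (Φ s).coeff j) (A B : Set (ℂ × ℂ)) (hA : IsClosed A)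
    (hB : IsClosed B) (hAB : ∀ z, z ∈ A → z ∈ B → False)
    (hr : ∀ s t, (Φ s).IsRoot t → (s, t) ∈ A ∨ (s, t) ∈ B) (j : ℕ) :
    Differentiable ℂ (fun s => (part (Φ s) {t | (s, t) ∈ A}).coeff j) := by
  intro s₀
  have h1 := part_tendsto Φ D hm hD (fun j => (hc j).continuous) A B hA hB hAB hr s₀
  have h2 := part_tendsto Φ D hm hD (fun j => (hc j).continuous) B A hB hA (fun z a b => hAB z b a)
    (fun s t h => (hr s t h).symm) s₀
  have hmul : ∀ s, part (Φ s) {t | (s, t) ∈ A} * part (Φ s) {t | (s, t) ∈ B} = Φ s := by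
    intro s
    apply part_mul _ (hm s)
    intro t ht
    constructor
    · intro a b; exact hAB _ b a
    · intro h; exact (hr s t ht).resolve_left h
  refine diff_of_factor (fun s => part (Φ s) {t | (s, t) ∈ A}) (fun s => part (Φ s) {t | (s, t) ∈ B})
    s₀ (fun s => part_monic _ _) (fun s => part_monic _ _) ?_ ?_ ?_ ?_ ?_ ?_ j
  · have := (h1.fst_nhds)
    rw [nhds_discrete ℕ, tendsto_pure] at this
    exact this
  · have := (h2.fst_nhds)
    rw [nhds_discrete ℕ, tendsto_pure] at this
    exact this
  · rw [isCoprime_iff_aeval_ne_zero_of_isAlgClosed ℂ ℂ]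
    intro t
    by_contra! hcon
    have ha := (part_root _ (hm s₀) {t | (s₀, t) ∈ A} t).1 (by simpa [IsRoot, aeval_def, eval₂_eq_eval_map] using hcon.1)
    have hb := (part_root _ (hm s₀) {t | (s₀, t) ∈ B} t).1 (by simpa [IsRoot, aeval_def, eval₂_eq_eval_map] using hcon.2)
    exact hAB _ ha.2 hb.2
  · intro j
    exact tendsto_pi_nhds.1 h1.snd_nhds j
  · intro j
    exact tendsto_pi_nhds.1 h2.snd_nhds j
  · intro j
    simp only [hmul]
    exact hc j s₀

/-- polynomial growth -/
def Gr {m : ℕ} (h : (Fin m → ℂ) → ℝ) : Prop :=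
  ∃ (C : ℝ) (N : ℕ), 0 ≤ C ∧ ∀ x, h x ≤ C * (1 + ‖x‖) ^ N

lemma Gr.add {m : ℕ} {h k : (Fin m → ℂ) → ℝ} (hh : Gr h) (hk : Gr k) : Gr (fun x => h x + k x) := by
  obtain ⟨C, N, hC, h1⟩ := hh
  obtain ⟨C', N', hC', h2⟩ := hk
  refine ⟨C + C', max N N', by positivity, fun x => ?_⟩
  have e : (1 : ℝ) ≤ 1 + ‖x‖ := by simp
  rw [add_mul]
  refine add_le_add ((h1 x).trans ?_) ((h2 x).trans ?_)
  · gcongr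
    exact le_max_left _ _
  · gcongr
    exact le_max_right _ _

lemma Gr.mul {m : ℕ} {h k : (Fin m → ℂ) → ℝ} (hh : Gr h) (hk : Gr k) (h0 : ∀ x, 0 ≤ k x) :
    Gr (fun x => h x * k x) := by
  obtain ⟨C, N, hC, h1⟩ := hh
  obtain ⟨C', N', hC', h2⟩ := hk
  refine ⟨C * C', N + N', by positivity, fun x => ?_⟩
  calc h x * k x ≤ (C * (1 + ‖x‖) ^ N) * (C' * (1 + ‖x‖) ^ N') := by
        apply mul_le_mul (h1 x) (h2 x) (h0 x) (by positivity)
    _ = _ := by ring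

lemma Gr.const {m : ℕ} (c : ℝ) : Gr (fun _ : Fin m → ℂ => c) :=
  ⟨|c|, 0, by positivity, fun x => by simpa using le_abs_self c⟩

lemma Gr.pow {m : ℕ} {h : (Fin m → ℂ) → ℝ} (hh : Gr h) (h0 : ∀ x, 0 ≤ h x) (k : ℕ) :
    Gr (fun x => h x ^ k) := by
  induction k with
  | zero => simpa using Gr.const 1
  | succ k ih => simpa [pow_succ] using ih.mul hh h0

lemma Gr.sum {m : ℕ} (k : ℕ) (h : ℕ → (Fin m → ℂ) → ℝ) (hh : ∀ j, Gr (h j)) :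
    Gr (fun x => ∑ j ∈ Finset.range k, h j x) := by
  induction k with
  | zero => simpa using Gr.const 0
  | succ k ih => simpa [Finset.sum_range_succ] using ih.add (hh k)

lemma Gr.mono {m : ℕ} {h k : (Fin m → ℂ) → ℝ} (hh : Gr h) (hk : ∀ x, k x ≤ h x) : Gr k := by
  obtain ⟨C, N, hC, h1⟩ := hh
  exact ⟨C, N, hC, fun x => (hk x).trans (h1 x)⟩

lemma Gr.poly {m : ℕ} (p : MvPolynomial (Fin m) ℂ) : Gr (fun x => ‖MvPolynomial.eval x p‖) := by
  induction p using MvPolynomial.induction_on with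
  | C a => simpa using Gr.const ‖a‖
  | add p q hp hq => exact (hp.add hq).mono fun x => by rw [map_add]; exact norm_add_le _ _
  | mul_X p i hp =>
    have : Gr (fun x : Fin m → ℂ => ‖x i‖) :=
      ⟨1, 1, by norm_num, fun x => by
        have := norm_le_pi_norm x i
        simp; linarith⟩
    simpa using hp.mul this (fun x => norm_nonneg _)

lemma coeff_zero_bound (b : ℝ) (M : Multiset ℂ) (h : ∀ t ∈ M, ‖t‖ ≤ b) :
    ‖((M.map (fun t => X - C t)).prod).coeff 0‖ ≤ b ^ (Multiset.card M) := by
  induction M using Multiset.induction_on with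
  | empty => simp
  | cons a M ih =>
    rw [Multiset.map_cons, Multiset.prod_cons, mul_coeff_zero, norm_mul, Multiset.card_cons, pow_succ,
      mul_comm]
    have ha := h a (by simp)
    have := ih fun t ht => h t (by simp [ht])
    apply mul_le_mul this _ (norm_nonneg _) ((norm_nonneg _).trans this)
    simpa using ha

lemma poly_diff {m : ℕ} (p : MvPolynomial (Fin m) ℂ) (x w : Fin m → ℂ) :
    Differentiable ℂ (fun s : ℂ => MvPolynomial.eval (x + s • w) p) := by
  induction p using MvPolynomial.induction_on with
  | C a => simp
  | add p q hp hq =>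
    simp only [map_add]
    exact hp.fun_add hq
  | mul_X p i hp =>
    simp only [map_mul, MvPolynomial.eval_X, Pi.add_apply, Pi.smul_apply, smul_eq_mul]
    exact hp.mul (by fun_prop)

lemma part_poly {m : ℕ} (Ψ : Polynomial (MvPolynomial (Fin m) ℂ)) (hΨ : Ψ.Monic) (v : Fin m → ℂ)
    (A B : Set (Fin m → ℂ)) (hA : IsClosed A) (hB : IsClosed B) (hAB : ∀ z, z ∈ A → z ∈ B → False)
    (hr : ∀ x t, (Ψ.map (MvPolynomial.eval x)).IsRoot t → x + t • v ∈ A ∨ x + t • v ∈ B) :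
    ∃ P : MvPolynomial (Fin m) ℂ, ∀ x, MvPolynomial.eval x P =
      (part (Ψ.map (MvPolynomial.eval x)) {t | x + t • v ∈ A}).coeff 0 := by
  have hD : ∀ x, (Ψ.map (MvPolynomial.eval x)).natDegree = Ψ.natDegree := fun x =>
    hΨ.natDegree_map _
  have hm : ∀ x, (Ψ.map (MvPolynomial.eval x)).Monic := fun x => hΨ.map _
  have hgr : Gr (fun x => ‖(part (Ψ.map (MvPolynomial.eval x)) {t | x + t • v ∈ A}).coeff 0‖) := by
    have h1 : Gr (fun x => (1 + ∑ j ∈ Finset.range Ψ.natDegree, ‖MvPolynomial.eval x (Ψ.coeff j)‖) ^ Ψ.natDegree) := by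
      apply Gr.pow
      · exact (Gr.const 1).add (Gr.sum _ _ fun j => Gr.poly _)
      · intro x; positivity
    refine h1.mono fun x => ?_
    classical
    refine (coeff_zero_bound (1 + ∑ j ∈ Finset.range Ψ.natDegree, ‖MvPolynomial.eval x (Ψ.coeff j)‖) _ ?_).trans ?_
    · intro t ht
      have ht' := isRoot_of_mem_roots (Multiset.mem_filter.1 ht).1
      have := root_bound _ (hm x) t ht'
      simpa [hD] using this
    · apply pow_le_pow_right₀
      · simp only [le_add_iff_nonneg_right]; positivity
      · refine (Multiset.card_le_card (Multiset.filter_le _ _)).trans ?_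
        rw [← hD x]
        exact card_roots' _
  obtain ⟨C, N, -, hb⟩ := hgr
  refine multi_poly m _ ?_ C N hb
  intro x w
  refine part_diff (fun s => Ψ.map (MvPolynomial.eval (x + s • w))) Ψ.natDegree (fun s => hm _) (fun s => hD _)
    ?_ {z | x + z.1 • w + z.2 • v ∈ A} {z | x + z.1 • w + z.2 • v ∈ B} ?_ ?_ ?_ ?_ 0
  · intro j
    simp only [coeff_map]
    exact poly_diff _ _ _
  · exact hA.preimage (by fun_prop)
  · exact hB.preimage (by fun_prop)
  · intro z; exact hAB _
  · intro s t h; exact hr _ _ h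

/-- substitution `x ↦ x + T v` -/
noncomputable def sub {m : ℕ} (v : Fin m → ℂ) :
    MvPolynomial (Fin m) ℂ →ₐ[ℂ] Polynomial (MvPolynomial (Fin m) ℂ) :=
  MvPolynomial.aeval (fun i => C (MvPolynomial.C (v i)) * X + C (MvPolynomial.X i))

lemma sub_eval {m : ℕ} (v x : Fin m → ℂ) (t : ℂ) (F : MvPolynomial (Fin m) ℂ) :
    ((sub v F).map (MvPolynomial.eval x)).eval t = MvPolynomial.eval (x + t • v) F := by
  induction F using MvPolynomial.induction_on with
  | C a => simp [sub, Polynomial.algebraMap_apply, MvPolynomial.algebraMap_eq]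
  | add p q hp hq => simp [hp, hq]
  | mul_X p i hp => 
    simp only [map_mul, Polynomial.map_mul, eval_mul, hp]
    simp [sub]
    left; ring

lemma sub_monomial {m : ℕ} (v : Fin m → ℂ) (u : Fin m →₀ ℕ) (a : ℂ) :
    (sub v (MvPolynomial.monomial u a)).natDegree ≤ u.degree ∧
    (sub v (MvPolynomial.monomial u a)).coeff u.degree =
      MvPolynomial.C (MvPolynomial.eval v (MvPolynomial.monomial u a)) := by
  have hl : ∀ i, (C (MvPolynomial.C (v i)) * X + C (MvPolynomial.X i) : Polynomial (MvPolynomial (Fin m) ℂ)).natDegree ≤ 1 :=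
    fun i => natDegree_linear_le
  have key : ∀ s : Finset (Fin m),
    (∏ i ∈ s, (C (MvPolynomial.C (v i)) * X + C (MvPolynomial.X i) : Polynomial (MvPolynomial (Fin m) ℂ)) ^ u i).natDegree ≤ ∑ i ∈ s, u i ∧
    (∏ i ∈ s, (C (MvPolynomial.C (v i)) * X + C (MvPolynomial.X i) : Polynomial (MvPolynomial (Fin m) ℂ)) ^ u i).coeff (∑ i ∈ s, u i)
      = MvPolynomial.C (∏ i ∈ s, v i ^ u i) := by
    classical
    intro s
    induction s using Finset.induction_on with
    | empty => simp
    | insert i s hi ih =>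
      have h1 := natDegree_pow_le_of_le (u i) (hl i)
      rw [mul_one] at h1
      have h2 := coeff_pow_of_natDegree_le (m := u i) (hl i)
      rw [mul_one] at h2
      rw [Finset.prod_insert hi, Finset.sum_insert hi, Finset.prod_insert hi]
      refine ⟨natDegree_mul_le_of_le h1 ih.1, ?_⟩
      rw [coeff_mul_add_eq_of_natDegree_le h1 ih.1, ih.2, h2]
      simp
  have e : sub v (MvPolynomial.monomial u a) = C (MvPolynomial.C a) *
      ∏ i, (C (MvPolynomial.C (v i)) * X + C (MvPolynomial.X i) : Polynomial (MvPolynomial (Fin m) ℂ)) ^ u i := by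
    rw [sub, MvPolynomial.aeval_monomial, Finsupp.prod_fintype _ _ (by simp), Polynomial.algebraMap_apply]
    rfl
  have hu : u.degree = ∑ i, u i := Finsupp.degree_eq_sum u
  rw [e, hu]
  refine ⟨(natDegree_C_mul_le _ _).trans (key _).1, ?_⟩
  rw [coeff_C_mul, (key _).2, MvPolynomial.eval_monomial, Finsupp.prod_fintype _ _ (by simp)]
  simp

lemma sub_top {m : ℕ} (v : Fin m → ℂ) (F : MvPolynomial (Fin m) ℂ) :
    (sub v F).natDegree ≤ F.totalDegree ∧
    (sub v F).coeff F.totalDegree =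
      MvPolynomial.C (MvPolynomial.eval v (MvPolynomial.homogeneousComponent F.totalDegree F)) := by
  have hle : ∀ u ∈ F.support, u.degree ≤ F.totalDegree := fun u hu => MvPolynomial.le_totalDegree hu
  have e : sub v F = ∑ u ∈ F.support, sub v (MvPolynomial.monomial u (F.coeff u)) := by
    rw [← map_sum, ← MvPolynomial.as_sum]
  rw [e]
  constructor
  · apply natDegree_sum_le_of_forall_le
    intro u hu
    exact (sub_monomial v u _).1.trans (hle u hu)
  · rw [finsetSum_coeff, MvPolynomial.homogeneousComponent_apply, map_sum, map_sum, Finset.sum_filter]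
    refine Finset.sum_congr rfl fun u hu => ?_
    split_ifs with h
    · rw [← h, (sub_monomial v u _).2]
    · apply coeff_eq_zero_of_natDegree_lt
      exact (sub_monomial v u _).1.trans_lt (lt_of_le_of_ne (hle u hu) h)

lemma exists_monic {m : ℕ} (F : MvPolynomial (Fin m) ℂ) (hF : F ≠ 0) :
    ∃ (v : Fin m → ℂ) (l : ℂ) (Ψ : Polynomial (MvPolynomial (Fin m) ℂ)), l ≠ 0 ∧ Ψ.Monic ∧
      ∀ x t, (Ψ.map (MvPolynomial.eval x)).eval t = l * MvPolynomial.eval (x + t • v) F := by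
  have h1 : MvPolynomial.homogeneousComponent F.totalDegree F ≠ 0 := by
    intro h0
    obtain ⟨u, hu, hu'⟩ : ∃ u ∈ F.support, u.degree = F.totalDegree := by
      obtain ⟨u, hu, h⟩ := Finset.exists_mem_eq_sup F.support (MvPolynomial.support_nonempty.2 hF)
        (fun s => s.degree)
      exact ⟨u, hu, h.symm⟩
    have := congrArg (MvPolynomial.coeff u) h0
    rw [MvPolynomial.coeff_homogeneousComponent, if_pos hu'] at this
    simp at this
    exact MvPolynomial.mem_support_iff.1 hu this
  obtain ⟨v, hv⟩ : ∃ v, MvPolynomial.eval v (MvPolynomial.homogeneousComponent F.totalDegree F) ≠ 0 := by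
    by_contra! h
    exact h1 (MvPolynomial.funext fun x => by simpa using h x)
  set μ := MvPolynomial.eval v (MvPolynomial.homogeneousComponent F.totalDegree F)
  refine ⟨v, μ⁻¹, C (MvPolynomial.C μ⁻¹) * sub v F, inv_ne_zero hv, ?_, ?_⟩
  · apply monic_of_natDegree_le_of_coeff_eq_one F.totalDegree
    · exact (natDegree_C_mul_le _ _).trans (sub_top v F).1
    · rw [coeff_C_mul, (sub_top v F).2, ← MvPolynomial.C_mul]
      change MvPolynomial.C (μ⁻¹ * μ) = 1
      rw [inv_mul_cancel₀ hv, MvPolynomial.C_1]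
  · intro x t
    rw [Polynomial.map_mul, eval_mul, sub_eval]
    simp

lemma split_poly {m : ℕ} (F : MvPolynomial (Fin m) ℂ) (hF : F ≠ 0)
    (A B : Set (Fin m → ℂ)) (hA : IsClosed A) (hB : IsClosed B) (hAB : ∀ z, z ∈ A → z ∈ B → False)
    (h : ∀ x, MvPolynomial.eval x F = 0 ↔ (x ∈ A ∨ x ∈ B)) :
    ∃ P Q : MvPolynomial (Fin m) ℂ, P * Q = F ∧ (∀ x, MvPolynomial.eval x P = 0 ↔ x ∈ A) ∧
      (∀ x, MvPolynomial.eval x Q = 0 ↔ x ∈ B) := by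
  obtain ⟨v, l, Ψ, hl, hΨ, hev⟩ := exists_monic F hF
  have hroot : ∀ x t, (Ψ.map (MvPolynomial.eval x)).IsRoot t ↔ (x + t • v ∈ A ∨ x + t • v ∈ B) := by
    intro x t
    rw [IsRoot, hev, ← h]
    simp [hl]
  have hm : ∀ x, (Ψ.map (MvPolynomial.eval x)).Monic := fun x => hΨ.map _
  obtain ⟨P, hP⟩ := part_poly Ψ hΨ v A B hA hB hAB (fun x t => (hroot x t).1)
  obtain ⟨Q, hQ⟩ := part_poly Ψ hΨ v B A hB hA (fun z a b => hAB z b a) (fun x t ht => ((hroot x t).1 ht).symm)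
  have hP0 : ∀ x, MvPolynomial.eval x P = 0 ↔ x ∈ A := by
    intro x
    rw [hP, coeff_zero_eq_eval_zero, ← IsRoot.def, part_root _ (hm x), hroot]
    simp
    tauto
  have hQ0 : ∀ x, MvPolynomial.eval x Q = 0 ↔ x ∈ B := by
    intro x
    rw [hQ, coeff_zero_eq_eval_zero, ← IsRoot.def, part_root _ (hm x), hroot]
    simp
    tauto
  refine ⟨MvPolynomial.C l⁻¹ * P, Q, ?_, ?_, hQ0⟩
  · apply MvPolynomial.funext
    intro x
    have h1 : MvPolynomial.eval x P * MvPolynomial.eval x Q = l * MvPolynomial.eval x F := by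
      rw [hP, hQ, ← mul_coeff_zero, part_mul _ (hm x), coeff_zero_eq_eval_zero, hev]
      · simp
      · intro t ht
        constructor
        · intro a b; exact hAB _ b a
        · intro h; exact ((hroot x t).1 ht).resolve_left h
    rw [map_mul, map_mul, mul_assoc, h1, MvPolynomial.eval_C, inv_mul_cancel_left₀ hl]
  · intro x
    rw [map_mul, MvPolynomial.eval_C, ← hP0]
    simp [hl]

end RF

open MvPolynomial

/-- For a strongly tame polynomial `f` and a regular value `c`
(not a critical value of `f`), the fiber `L_c = f⁻¹(c) ⊆ ℂ^{n+1}` is nonempty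
and connected. -/
theorem regular_fiber_connected_of_strongly_tame
    (n : ℕ) (hn : 1 ≤ n) (α : Fin (n + 1) → ℕ)
    (hαpos : ∀ i, 0 < α i) (hα : Finset.univ.gcd α = 1)
    (f : MvPolynomial (Fin (n + 1)) ℂ) (d : ℕ)
    (hd : MvPolynomial.weightedTotalDegree α f = d)
    (g : MvPolynomial (Fin (n + 1)) ℂ)
    (hg : g = weightedHomogeneousComponent α d f)
    (hg0 : g ≠ 0)
    (htame : ∀ x : Fin (n + 1) → ℂ, (∀ i, eval x (pderiv i g) = 0) → x = 0)
    (c : ℂ)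
    (hc : c ∉ (fun x => eval x f) '' {x : Fin (n + 1) → ℂ | ∀ i, eval x (pderiv i f) = 0}) :
    IsConnected {x : Fin (n + 1) → ℂ | eval x f = c} := by
  have hfC : ∀ a, f ≠ C a := by
    rintro a rfl
    have : g = 0 ∨ g = C a := by
      classical
      rcases eq_or_ne d 0 with rfl | hd0
      · right
        rw [hg]
        ext u
        rw [coeff_weightedHomogeneousComponent, coeff_C]
        split_ifs with h1 h2 h2
        · rfl
        · rfl
        · subst h2; simp at h1
        · rfl
      · left
        rw [hg]
        ext u
        rw [coeff_weightedHomogeneousComponent, coeff_C]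
        split_ifs with h1 h2
        · subst h2; simp at h1; exact absurd h1.symm hd0
        · simp
        · simp
    rcases this with h | h
    · exact hg0 h
    · have h1 := htame (fun _ => 1) (by simp [h])
      have h2 := congrFun h1 0
      simp at h2
  have hF0 : f - C c ≠ 0 := fun h => hfC c (sub_eq_zero.1 h)
  have hzero : ∀ x, eval x (f - C c) = 0 ↔ eval x f = c := by
    intro x; simp [sub_eq_zero]
  constructor
  · by_contra hne
    rw [Set.not_nonempty_iff_eq_empty] at hne
    have hu : IsUnit (f - C c) := RF.unit_of_zeros hn _ fun x hx => by
      have : x ∈ {x : Fin (n + 1) → ℂ | eval x f = c} := (hzero x).1 hx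
      rw [hne] at this
      exact this.elim
    obtain ⟨r, -, hr⟩ := MvPolynomial.isUnit_iff_eq_C_of_isReduced.1 hu
    exact hfC (r + c) (by rw [C_add, ← hr]; ring)
  · rw [isPreconnected_closed_iff]
    intro t t' ht ht' hsub hne hne'
    by_contra hemp
    have hclosed : IsClosed {x : Fin (n + 1) → ℂ | eval x f = c} :=
      isClosed_eq (MvPolynomial.continuous_eval f) continuous_const
    obtain ⟨P, Q, hPQ, hP, hQ⟩ := RF.split_poly (f - C c) hF0
      ({x | eval x f = c} ∩ t) ({x | eval x f = c} ∩ t') (hclosed.inter ht) (hclosed.inter ht')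
      (fun z h1 h2 => hemp ⟨z, h1.1, h1.2, h2.2⟩) (fun x => by
        rw [hzero]
        constructor
        · intro h
          rcases hsub h with h' | h'
          · exact Or.inl ⟨h, h'⟩
          · exact Or.inr ⟨h, h'⟩
        · rintro (h | h)
          · exact h.1
          · exact h.1)
    obtain ⟨x, hx⟩ := hne
    obtain ⟨y, hy⟩ := hne'
    refine RF.alg_part n hn α hαpos f d hd g hg hg0 htame c P Q hPQ ⟨x, (hP x).2 hx⟩ ⟨y, (hQ y).2 hy⟩ ?_
    intro z h1 h2
    have h1 := (hP z).1 h1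
    have h2 := (hQ z).1 h2
    exact hemp ⟨z, h1.1, h1.2, h2.2⟩
end

section
/- Let f ∈ ℂ[x₁,…,x_{n+1}] be a strongly tame polynomial with set of critical values C := f(Sing(f)). Then f is a topologically locally trivial fibration over ℂ ∖ C: for every b ∈ ℂ ∖ C there exist an open neighborhood U ⊆ ℂ ∖ C of b and a homeomorphism φ : f^{-1}(U) → U × f^{-1}(b) such that the first-coordinate projection composed with φ equals the restriction of f to f^{-1}(U). -/
open MvPolynomial

namespace STame
open Set Metric
open scoped NNReal Topology

/-- Solutions of the autonomous equation on the unit interval. -/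
def IsSol {E : Type*} [NormedAddCommGroup E] [NormedSpace ℂ E] (v : E → E) (w : ℂ) (γ : ℝ → E) :
    Prop :=
  ∀ t ∈ Icc (0 : ℝ) 1, HasDerivWithinAt γ (w • v (γ t)) (Icc (0 : ℝ) 1) t

section ode
variable {E : Type*} [NormedAddCommGroup E] [NormedSpace ℂ E] {v : E → E} {B : ℝ}

lemma IsSol.dist_le (hB : ∀ x, ‖v x‖ ≤ B) {w : ℂ} {γ : ℝ → E} (h : IsSol v w γ)
    {t : ℝ} (ht : t ∈ Icc (0 : ℝ) 1) : ‖γ t - γ 0‖ ≤ ‖w‖ * B := by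
  have hB0 : 0 ≤ B := (norm_nonneg _).trans (hB 0)
  have := norm_image_sub_le_of_norm_deriv_le_segment' h (C := ‖w‖ * B)
    (fun x _ => by rw [norm_smul]; gcongr; exact hB _) t ht
  refine this.trans ?_
  have h1 : 0 ≤ ‖w‖ * B := by positivity
  nlinarith [ht.2]

lemma IsSol.right {w : ℂ} {γ : ℝ → E} (h : IsSol v w γ) {t : ℝ} (ht : t ∈ Ico (0 : ℝ) 1) :
    HasDerivWithinAt γ (w • v (γ t)) (Ici t) t :=
  (h t (Ico_subset_Icc_self ht)).mono_of_mem_nhdsWithin (Icc_mem_nhdsGE_of_mem ht)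

lemma IsSol.compare (hB : ∀ x, ‖v x‖ ≤ B)
    (hL : ∀ R : ℝ, ∃ K : ℝ≥0, LipschitzOnWith K v (closedBall 0 R)) (w : ℂ) (R : ℝ) :
    ∃ K : ℝ≥0, ∀ (w' : ℂ) (γ γ' : ℝ → E), ‖w'‖ ≤ ‖w‖ + 1 → IsSol v w γ → IsSol v w' γ' →
      ‖γ 0‖ ≤ R → ‖γ' 0‖ ≤ R →
      dist (γ 1) (γ' 1) ≤ gronwallBound (dist (γ 0) (γ' 0)) K (‖w' - w‖ * B) 1 := by
  have hB0 : 0 ≤ B := (norm_nonneg _).trans (hB 0)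
  obtain ⟨K, hK⟩ := hL (R + (‖w‖ + 1) * B)
  refine ⟨‖w‖₊ * K, fun w' γ γ' hw' h h' h0 h0' => ?_⟩
  have mem : ∀ (w' : ℂ) (γ : ℝ → E), ‖w'‖ ≤ ‖w‖ + 1 → IsSol v w' γ → ‖γ 0‖ ≤ R →
      ∀ t ∈ Ico (0 : ℝ) 1, γ t ∈ closedBall (0 : E) (R + (‖w‖ + 1) * B) := by
    intro w' γ hw' h h0 t ht
    have h1 := h.dist_le hB (Ico_subset_Icc_self ht)
    have h2 : ‖γ t‖ ≤ ‖γ t - γ 0‖ + ‖γ 0‖ := by simpa using norm_add_le (γ t - γ 0) (γ 0)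
    have h3 : ‖w'‖ * B ≤ (‖w‖ + 1) * B := by gcongr
    simp only [mem_closedBall, dist_zero_right]
    linarith
  have key := dist_le_of_approx_trajectories_ODE_of_mem (v := fun _ x => w • v x)
    (s := fun _ => closedBall (0 : E) (R + (‖w‖ + 1) * B)) (K := ‖w‖₊ * K) (a := 0) (b := 1)
    (f := γ) (g := γ') (εf := 0) (εg := ‖w' - w‖ * B)
    (fun t _ => LipschitzOnWith.of_dist_le_mul fun x hx y hy => ?_)
    (fun t ht => (h t ht).continuousWithinAt) (fun t ht => h.right ht) (fun t ht => by simp)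
    (mem w γ (by linarith) h h0)
    (fun t ht => (h' t ht).continuousWithinAt) (fun t ht => h'.right ht) (fun t ht => ?_)
    (mem w' γ' hw' h' h0') le_rfl 1 (by simp)
  · simpa using key
  · rw [dist_smul₀, NNReal.coe_mul, mul_assoc]
    exact mul_le_mul_of_nonneg_left (hK.dist_le_mul x hx y hy) (norm_nonneg _)
  · rw [dist_eq_norm, ← sub_smul, norm_smul]
    gcongr
    exact hB _

lemma exists_sol [CompleteSpace E] (hB : ∀ x, ‖v x‖ ≤ B)
    (hL : ∀ R : ℝ, ∃ K : ℝ≥0, LipschitzOnWith K v (closedBall 0 R)) (w : ℂ) (x : E) :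
    ∃ γ : ℝ → E, γ 0 = x ∧ IsSol v w γ := by
  have hB0 : 0 ≤ B := (norm_nonneg _).trans (hB 0)
  obtain ⟨K, hK⟩ := hL (‖x‖ + ‖w‖ * B)
  lift B to ℝ≥0 using hB0
  have hp : IsPicardLindelof (fun _ y => w • v y) (⟨0, by simp⟩ : Icc (0 : ℝ) 1) x
      (‖w‖₊ * B) 0 (‖w‖₊ * B) (‖w‖₊ * K) := by
    constructor
    · intro t _
      refine LipschitzOnWith.of_dist_le_mul fun y hy z hz => ?_
      have hs : closedBall x ((‖w‖₊ * B : ℝ≥0) : ℝ) ⊆ closedBall 0 (‖x‖ + ‖w‖ * B) :=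
        closedBall_subset_closedBall' (by simp; linarith)
      rw [dist_smul₀, NNReal.coe_mul, mul_assoc]
      exact mul_le_mul_of_nonneg_left (hK.dist_le_mul y (hs hy) z (hs hz)) (norm_nonneg _)
    · intro y _
      exact continuousOn_const
    · intro t _ y _
      rw [norm_smul]
      simp only [NNReal.coe_mul, coe_nnnorm]
      gcongr
      exact hB _
    · simp
  exact hp.exists_eq_forall_mem_Icc_hasDerivWithinAt₀

lemma exists_flow [CompleteSpace E] (hB : ∀ x, ‖v x‖ ≤ B)
    (hL : ∀ R : ℝ, ∃ K : ℝ≥0, LipschitzOnWith K v (closedBall 0 R)) :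
    ∃ Φ : ℂ × E → E, Continuous Φ ∧
      (∀ w x, ∃ γ : ℝ → E, γ 0 = x ∧ γ 1 = Φ (w, x) ∧ IsSol v w γ) ∧
      ∀ w x, Φ (-w, Φ (w, x)) = x := by
  have hB0 : 0 ≤ B := (norm_nonneg _).trans (hB 0)
  choose γ h0 hγ using exists_sol hB hL
  refine ⟨fun p => γ p.1 p.2 1, ?_, fun w x => ⟨γ w x, h0 w x, rfl, hγ w x⟩, ?_⟩
  · rw [continuous_iff_continuousAt]
    rintro ⟨w, x⟩
    obtain ⟨K, hK⟩ := IsSol.compare hB hL w (‖x‖ + 1)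
    rw [ContinuousAt, tendsto_iff_dist_tendsto_zero]
    have hg : Continuous fun p : ℝ × ℝ => gronwallBound p.1 K p.2 1 := by
      by_cases hK : (K : ℝ) = 0
      · simp only [gronwallBound_K0, hK]
        fun_prop
      · simp only [gronwallBound_of_K_ne_0 hK]
        fun_prop
    have hg2 : Continuous fun p : ℂ × E =>
        gronwallBound (dist x p.2) K (‖p.1 - w‖ * B) 1 :=
      hg.comp (f := fun p : ℂ × E => (dist x p.2, ‖p.1 - w‖ * B)) (by fun_prop)
    refine squeeze_zero' (Filter.Eventually.of_forall fun _ => dist_nonneg) ?_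
      (hg2.tendsto' (w, x) 0 (by simp [gronwallBound_ε0_δ0]))
    filter_upwards [ball_mem_nhds (w, x) one_pos] with p hp
    rw [dist_comm]
    rw [mem_ball, Prod.dist_eq, max_lt_iff] at hp
    have h1 : ‖p.1‖ ≤ ‖w‖ + 1 := by
      have := norm_add_le (p.1 - w) w
      rw [← dist_eq_norm, sub_add_cancel] at this
      linarith [hp.1]
    have h2 : ‖p.2‖ ≤ ‖x‖ + 1 := by
      have := norm_add_le (p.2 - x) x
      rw [← dist_eq_norm, sub_add_cancel] at this
      linarith [hp.2]
    have := hK p.1 (γ w x) (γ p.1 p.2) h1 (hγ w x) (hγ _ _) (by rw [h0]; linarith)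
      (by rw [h0]; exact h2)
    rwa [h0, h0] at this
  · intro w x
    dsimp only
    set y := γ w x 1 with hy
    obtain ⟨K, hK⟩ := IsSol.compare hB hL (-w) ‖y‖
    have hrev : IsSol v (-w) (fun t => γ w x (1 - t)) := by
      intro t ht
      have h1 := hγ w x (1 - t) ⟨by linarith [ht.2], by linarith [ht.1]⟩
      have h2 : HasDerivWithinAt (fun t : ℝ => 1 - t) (-1) (Icc (0 : ℝ) 1) t :=
        ((hasDerivAt_id t).const_sub 1).hasDerivWithinAt
      have h3 := HasDerivWithinAt.scomp t h1 h2
        (fun s hs => ⟨by linarith [hs.2], by linarith [hs.1]⟩)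
      simpa [Function.comp_def] using h3
    have := hK (-w) (γ (-w) y) (fun t => γ w x (1 - t)) (by linarith) (hγ _ _) hrev
      (by rw [h0]) (by simp [hy])
    simp [h0, ← hy, gronwallBound_ε0_δ0] at this
    exact this
end ode
end STame

namespace STame
open Set Metric
open scoped NNReal Topology

section poly
variable {N : ℕ}

lemma contDiff_eval (p : MvPolynomial (Fin N) ℂ) :
    ContDiff ℝ 1 fun x : Fin N → ℂ => eval x p := by
  induction p using MvPolynomial.induction_on with
  | C a => simpa using contDiff_const
  | add p q hp hq => simpa using hp.add hq
  | mul_X p i hp =>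
    simp only [map_mul, eval_X]
    exact hp.mul (contDiff_apply ℝ ℂ i)

lemma chain (p : MvPolynomial (Fin N) ℂ) {γ : ℝ → Fin N → ℂ} {γ' : Fin N → ℂ} {s : Set ℝ} {t : ℝ}
    (h : HasDerivWithinAt γ γ' s t) :
    HasDerivWithinAt (fun t => eval (γ t) p) (∑ i, eval (γ t) (pderiv i p) * γ' i) s t := by
  induction p using MvPolynomial.induction_on with
  | C a => simpa using hasDerivWithinAt_const t s a
  | add p q hp hq =>
    simp only [map_add, add_mul, Finset.sum_add_distrib]
    exact hp.add hq
  | mul_X p i hp =>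
    have h1 := hp.mul ((hasDerivWithinAt_pi.1 h) i)
    have h2 : (fun t => eval (γ t) (p * X i)) = fun t => eval (γ t) p * γ t i := by
      funext t
      simp
    have h3 : ∑ j, eval (γ t) (pderiv j (p * X i)) * γ' j
        = (∑ j, eval (γ t) (pderiv j p) * γ' j) * γ t i + eval (γ t) p * γ' i := by
      simp only [pderiv_mul, map_add, map_mul, eval_X, add_mul, Finset.sum_add_distrib,
        Finset.sum_mul]
      congr 1
      · exact Finset.sum_congr rfl fun j _ => by ring
      · rw [Finset.sum_eq_single i]
        · simp
        · intro j _ hj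
          simp [pderiv_X_of_ne hj.symm]
        · simp
    rw [h2, h3]
    exact h1

/-- The homogenization of `p` to weighted degree `m`. -/
noncomputable def hom (α : Fin N → ℕ) (m : ℕ) (p : MvPolynomial (Fin N) ℂ) (s : ℝ)
    (y : Fin N → ℂ) : ℂ :=
  ∑ β ∈ p.support, coeff β p * (s : ℂ) ^ (m - Finsupp.weight α β) * ∏ i, y i ^ β i

lemma hom_continuous (α : Fin N → ℕ) (m : ℕ) (p : MvPolynomial (Fin N) ℂ) :
    Continuous fun q : (Fin N → ℂ) × ℝ => hom α m p q.2 q.1 := by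
  unfold hom
  fun_prop

lemma weight_eq (α : Fin N → ℕ) (β : Fin N →₀ ℕ) : Finsupp.weight α β = ∑ i, α i * β i := by
  simp [Finsupp.weight_apply, Finsupp.sum_fintype, mul_comm]

lemma hom_eq (α : Fin N → ℕ) (m : ℕ) (p : MvPolynomial (Fin N) ℂ)
    (hp : ∀ β ∈ p.support, Finsupp.weight α β ≤ m) (s : ℝ) (x y : Fin N → ℂ)
    (h : ∀ i, y i = (s : ℂ) ^ α i * x i) : hom α m p s y = (s : ℂ) ^ m * eval x p := by
  rw [hom, eval_eq', Finset.mul_sum]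
  refine Finset.sum_congr rfl fun β hβ => ?_
  have h1 : ∏ i, y i ^ β i = (s : ℂ) ^ (Finsupp.weight α β) * ∏ i, x i ^ β i := by
    simp only [h, mul_pow, Finset.prod_mul_distrib, ← pow_mul, Finset.prod_pow_eq_pow_sum,
      weight_eq]
  have h2 : (s : ℂ) ^ m = (s : ℂ) ^ (m - Finsupp.weight α β) * (s : ℂ) ^ (Finsupp.weight α β) := by
    rw [← pow_add, Nat.sub_add_cancel (hp β hβ)]
  rw [h1, h2]
  ring

lemma supp_pderiv (α : Fin N → ℕ) (f : MvPolynomial (Fin N) ℂ) (d : ℕ)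
    (hd : weightedTotalDegree α f = d) (i : Fin N) (β : Fin N →₀ ℕ)
    (hβ : β ∈ (pderiv i f).support) : Finsupp.weight α β + α i ≤ d := by
  rw [mem_support_iff, coeff_pderiv] at hβ
  have h1 : β + Finsupp.single i 1 ∈ f.support := by
    rw [mem_support_iff]
    exact left_ne_zero_of_mul hβ
  have := le_weightedTotalDegree α h1
  rw [hd, map_add] at this
  simpa [Finsupp.weight_single] using this

lemma hom_zero (α : Fin N → ℕ) (f : MvPolynomial (Fin N) ℂ) (d : ℕ)
    (hd : weightedTotalDegree α f = d) (i : Fin N) (y : Fin N → ℂ) :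
    hom α (d - α i) (pderiv i f) 0 y
      = eval y (pderiv i (weightedHomogeneousComponent α d f)) := by
  have hc : ∀ β, coeff β (pderiv i (weightedHomogeneousComponent α d f)) =
      if Finsupp.weight α β + α i = d then coeff β (pderiv i f) else 0 := by
    intro β
    rw [coeff_pderiv, coeff_pderiv, coeff_weightedHomogeneousComponent, map_add]
    simp only [Finsupp.weight_single, one_smul]
    split_ifs <;> simp
  rw [eval_eq', hom]
  symm
  rw [Finset.sum_subset (s₂ := (pderiv i f).support)]
  · refine Finset.sum_congr rfl fun β hβ => ?_
    have := supp_pderiv α f d hd i β hβ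
    rw [hc]
    split_ifs with h
    · have : d - α i - Finsupp.weight α β = 0 := by omega
      simp [this]
    · have : d - α i - Finsupp.weight α β ≠ 0 := by omega
      simp [this]
  · intro β hβ
    rw [mem_support_iff, hc] at hβ
    rw [mem_support_iff]
    intro h
    simp [h] at hβ
  · intro β _ hβ
    rw [notMem_support_iff] at hβ
    simp [hβ]

lemma scale (hN : 0 < N) (α : Fin N → ℕ) (hα : ∀ i, 0 < α i) (x : Fin N → ℂ) (hx : x ≠ 0) :
    ∃ r : ℝ, 0 < r ∧ ∃ y : Fin N → ℂ, ‖y‖ = 1 ∧ ∀ i, x i = (r : ℂ) ^ α i * y i := by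
  have : Nonempty (Fin N) := ⟨⟨0, hN⟩⟩
  obtain ⟨j, hj⟩ := Finite.exists_max fun i => ‖x i‖ ^ ((α i : ℝ)⁻¹)
  set r : ℝ := ‖x j‖ ^ ((α j : ℝ)⁻¹) with hr
  have hpow : ∀ i, (‖x i‖ ^ ((α i : ℝ)⁻¹)) ^ α i = ‖x i‖ := fun i =>
    Real.rpow_inv_natCast_pow (norm_nonneg _) (hα i).ne'
  have hle : ∀ i, ‖x i‖ ≤ r ^ α i := fun i => by
    rw [← hpow i]
    exact pow_le_pow_left₀ (by positivity) (hj i) _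
  have hr0 : 0 < r := by
    obtain ⟨i, hi⟩ := Function.ne_iff.1 hx
    by_contra hneg
    have h0 : r = 0 := le_antisymm (not_lt.1 hneg) (by positivity)
    have := hle i
    rw [h0, zero_pow (hα i).ne'] at this
    exact hi (norm_le_zero_iff.1 this)
  have hrc : (r : ℂ) ≠ 0 := by exact_mod_cast hr0.ne'
  refine ⟨r, hr0, fun i => x i / (r : ℂ) ^ α i, ?_, fun i => ?_⟩
  · have hn : ∀ i, ‖x i / (r : ℂ) ^ α i‖ = ‖x i‖ / r ^ α i := fun i => by
      rw [norm_div, norm_pow, Complex.norm_real, Real.norm_of_nonneg hr0.le]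
    apply le_antisymm
    · rw [pi_norm_le_iff_of_nonneg zero_le_one]
      intro i
      rw [hn]
      exact div_le_one_of_le₀ (hle i) (by positivity)
    · have := norm_le_pi_norm (fun i => x i / (r : ℂ) ^ α i) j
      rw [hn, hr, hpow j, div_self] at this
      · exact this
      · rw [← hpow j]
        exact pow_ne_zero _ hr0.ne'
  · field_simp

/-- Squared norm of the gradient. -/
noncomputable def gradSq (f : MvPolynomial (Fin N) ℂ) (x : Fin N → ℂ) : ℝ :=
  ∑ i, ‖eval x (pderiv i f)‖ ^ 2

lemma gradSq_contDiff (f : MvPolynomial (Fin N) ℂ) : ContDiff ℝ 1 (gradSq f) := by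
  unfold gradSq
  exact ContDiff.sum fun i _ => (contDiff_eval _).norm_sq ℝ

lemma gradSq_nonneg (f : MvPolynomial (Fin N) ℂ) (x : Fin N → ℂ) : 0 ≤ gradSq f x :=
  Finset.sum_nonneg fun _ _ => by positivity

lemma gradSq_eq_zero (f : MvPolynomial (Fin N) ℂ) (x : Fin N → ℂ) :
    gradSq f x = 0 ↔ ∀ i, eval x (pderiv i f) = 0 := by
  unfold gradSq
  rw [Finset.sum_eq_zero_iff_of_nonneg fun _ _ => by positivity]
  simp

lemma grad_infty (hN : 0 < N) (α : Fin N → ℕ) (hα : ∀ i, 0 < α i)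
    (f : MvPolynomial (Fin N) ℂ) (d : ℕ) (hd : weightedTotalDegree α f = d)
    (htame : ∀ x : Fin N → ℂ,
      (∀ i, eval x (pderiv i (weightedHomogeneousComponent α d f)) = 0) → x = 0) :
    ∃ R c : ℝ, 0 < c ∧ ∀ x, R < ‖x‖ → c ≤ gradSq f x := by
  set Ψ : (Fin N → ℂ) × ℝ → ℝ := fun q =>
    ∑ i, ‖hom α (d - α i) (pderiv i f) q.2 q.1‖ ^ 2 with hΨ
  have hΨc : Continuous Ψ := continuous_finsetSum _ fun i _ =>
    (hom_continuous α (d - α i) (pderiv i f)).norm.pow 2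
  have hK : IsCompact (sphere (0 : Fin N → ℂ) 1) := isCompact_sphere _ _
  obtain ⟨c, hc, hcy⟩ := hK.exists_forall_le' (f := fun y => Ψ (y, 0)) (a := 0)
    (hΨc.comp (by fun_prop)).continuousOn (by
      intro y hy
      refine lt_of_le_of_ne (Finset.sum_nonneg fun _ _ => by positivity) fun h => ?_
      have h2 := h.symm
      rw [hΨ] at h2
      simp only at h2
      rw [Finset.sum_eq_zero_iff_of_nonneg fun _ _ => by positivity] at h2
      have h3 : y = 0 := htame y fun i => by
        have := h2 i (Finset.mem_univ i)
        rw [hom_zero α f d hd] at this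
        simpa using this
      simp [h3] at hy)
  have hev : ∀ᶠ s in 𝓝 (0 : ℝ), ∀ y ∈ sphere (0 : Fin N → ℂ) 1, c / 2 < Ψ (y, s) := by
    refine hK.eventually_forall_of_forall_eventually fun y hy => ?_
    have h1 : c / 2 < Ψ (y, 0) := by linarith [hcy y hy]
    have h2 : Continuous fun z : ℝ × (Fin N → ℂ) => Ψ (z.2, z.1) := hΨc.comp continuous_swap
    exact (h2.tendsto (0, y)).eventually (lt_mem_nhds h1)
  obtain ⟨ε, hε, hεs⟩ := Metric.eventually_nhds_iff.1 hev
  set T : ℝ := max 1 (2 / ε) with hT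
  have hT1 : 1 ≤ T := le_max_left _ _
  refine ⟨∑ i, T ^ α i, c / 2, by linarith, fun x hx => ?_⟩
  have hsum : 0 ≤ ∑ i, T ^ α i := Finset.sum_nonneg fun _ _ => by positivity
  have hx0 : x ≠ 0 := by
    rintro rfl
    rw [norm_zero] at hx
    linarith
  obtain ⟨r, hr, y, hy, hxy⟩ := scale hN α hα x hx0
  have hrT : T < r := by
    by_contra hneg
    push Not at hneg
    have : ‖x‖ ≤ ∑ i, T ^ α i := by
      rw [pi_norm_le_iff_of_nonneg hsum]
      intro i
      have h1 : ‖y i‖ ≤ 1 := hy ▸ norm_le_pi_norm y i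
      have h2 : ‖x i‖ ≤ T ^ α i := by
        rw [hxy, norm_mul, norm_pow, Complex.norm_real, Real.norm_of_nonneg hr.le]
        calc r ^ α i * ‖y i‖ ≤ T ^ α i * 1 := by gcongr
          _ = _ := mul_one _
      exact h2.trans (Finset.single_le_sum (f := fun i => T ^ α i)
        (fun _ _ => by positivity) (Finset.mem_univ i))
    linarith
  have hrc : (r : ℂ) ≠ 0 := by exact_mod_cast hr.ne'
  have hs1 : r⁻¹ ≤ 1 := inv_le_one_of_one_le₀ (by linarith)
  have hsε : dist r⁻¹ 0 < ε := by
    rw [dist_zero_right, Real.norm_of_nonneg (by positivity)]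
    have h1 : 2 / ε < r := lt_of_le_of_lt (le_max_right _ _) hrT
    rw [div_lt_iff₀ hε] at h1
    rw [inv_lt_iff_one_lt_mul₀ hr]
    linarith
  have h1 := hεs hsε y (by simp [hy])
  refine h1.le.trans ?_
  refine Finset.sum_le_sum fun i _ => ?_
  rw [hom_eq α (d - α i) (pderiv i f) (fun β hβ => by
    have := supp_pderiv α f d hd i β hβ
    omega) r⁻¹ x y (fun j => by
    rw [hxy, ← mul_assoc, ← mul_pow, Complex.ofReal_inv, inv_mul_cancel₀ hrc, one_pow, one_mul])]
  gcongr
  rw [norm_mul, norm_pow, Complex.norm_real, Real.norm_of_nonneg (by positivity)]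
  exact mul_le_of_le_one_left (norm_nonneg _) (pow_le_one₀ (by positivity) hs1)

lemma grad_near (f : MvPolynomial (Fin N) ℂ) (b : ℂ)
    (h : ∃ R c : ℝ, 0 < c ∧ ∀ x, R < ‖x‖ → c ≤ gradSq f x)
    (hb : ∀ x, eval x f = b → gradSq f x ≠ 0) :
    ∃ δ c : ℝ, 0 < δ ∧ 0 < c ∧ ∀ x, ‖eval x f - b‖ < δ → c ≤ gradSq f x := by
  obtain ⟨R, c, hc, hR⟩ := h
  obtain ⟨a, ha, hax⟩ := (isCompact_closedBall (0 : Fin N → ℂ) R).exists_forall_le'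
    (f := fun x => ‖eval x f - b‖ + gradSq f x) (a := 0)
    (by
      have h1 := (contDiff_eval f).continuous
      have h2 := (gradSq_contDiff f).continuous
      fun_prop)
    (fun x _ => by
      by_cases h : eval x f = b
      · have := (gradSq_nonneg f x).lt_of_ne (hb x h).symm
        positivity
      · have h1 : 0 < ‖eval x f - b‖ := norm_pos_iff.2 (sub_ne_zero.2 h)
        have := gradSq_nonneg f x
        positivity)
  refine ⟨a / 2, min c (a / 2), by linarith, lt_min hc (by linarith), fun x hx => ?_⟩
  by_cases hxR : R < ‖x‖
  · exact (min_le_left _ _).trans (hR x hxR)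
  · have := hax x (by simpa using hxR)
    exact (min_le_right _ _).trans (by linarith)

/-- A positive smooth function equal to `t` for `c ≤ t`. -/
noncomputable def den (c t : ℝ) : ℝ := t + Real.smoothTransition (1 - t / c)

lemma den_pos {c t : ℝ} (ht : 0 ≤ t) : 0 < den c t := by
  unfold den
  rcases ht.eq_or_lt with h | h
  · simp [← h]
  · have := Real.smoothTransition.nonneg (1 - t / c)
    linarith

lemma le_den (c t : ℝ) : t ≤ den c t := by
  unfold den
  linarith [Real.smoothTransition.nonneg (1 - t / c)]

lemma den_eq {c t : ℝ} (hc : 0 < c) (h : c ≤ t) : den c t = t := by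
  unfold den
  rw [Real.smoothTransition.zero_of_nonpos, add_zero]
  have := (one_le_div hc).2 h
  linarith

lemma den_contDiff (c : ℝ) : ContDiff ℝ 1 (den c) := by
  unfold den
  exact contDiff_id.add (Real.smoothTransition.contDiff.comp
    (contDiff_const.sub (contDiff_id.div_const c)))

lemma den_lower (c : ℝ) : ∃ m : ℝ, 0 < m ∧ ∀ t, 0 ≤ t → m ≤ den c t := by
  obtain ⟨a, ha, hax⟩ := (isCompact_Icc (a := (0 : ℝ)) (b := 1)).exists_forall_le'
    (f := den c) (a := 0) (den_contDiff c).continuous.continuousOn (fun t ht => den_pos ht.1)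
  refine ⟨min a 1, lt_min ha one_pos, fun t ht => ?_⟩
  by_cases h : t ≤ 1
  · exact (min_le_left _ _).trans (hax t ⟨ht, h⟩)
  · exact (min_le_right _ _).trans ((not_le.1 h).le.trans (le_den c t))

/-- The (modified) normalized gradient field. -/
noncomputable def vf (f : MvPolynomial (Fin N) ℂ) (c : ℝ) (x : Fin N → ℂ) : Fin N → ℂ :=
  fun i => (den c (gradSq f x))⁻¹ • (starRingEnd ℂ) (eval x (pderiv i f))

lemma vf_contDiff (f : MvPolynomial (Fin N) ℂ) (c : ℝ) : ContDiff ℝ 1 (vf f c) := by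
  rw [contDiff_pi]
  intro i
  refine ContDiff.smul (ContDiff.inv ((den_contDiff c).comp (gradSq_contDiff f)) fun x =>
    (den_pos (gradSq_nonneg f x)).ne') ?_
  exact Complex.conjCLE.contDiff.comp (contDiff_eval (pderiv i f))

lemma vf_bound (f : MvPolynomial (Fin N) ℂ) (c : ℝ) : ∃ B, ∀ x, ‖vf f c x‖ ≤ B := by
  obtain ⟨m, hm, h⟩ := den_lower c
  refine ⟨m⁻¹ + 1, fun x => ?_⟩
  rw [pi_norm_le_iff_of_nonneg (by positivity)]
  intro i
  have h0 := gradSq_nonneg f x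
  have hp := den_pos (c := c) h0
  have h1 : ‖eval x (pderiv i f)‖ ^ 2 ≤ gradSq f x :=
    Finset.single_le_sum (f := fun i => ‖eval x (pderiv i f)‖ ^ 2)
        (fun _ _ => by positivity) (Finset.mem_univ i)
  have h2 : ‖eval x (pderiv i f)‖ ≤ 1 + gradSq f x := by
    nlinarith [sq_nonneg (‖eval x (pderiv i f)‖ - 1)]
  have h3 := h _ h0
  have h4 := le_den c (gradSq f x)
  unfold vf
  rw [norm_smul, norm_inv, Real.norm_of_nonneg hp.le, RCLike.norm_conj]
  calc (den c (gradSq f x))⁻¹ * ‖eval x (pderiv i f)‖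
      ≤ (den c (gradSq f x))⁻¹ * (1 + den c (gradSq f x)) := by
        gcongr
        linarith
    _ = (den c (gradSq f x))⁻¹ + 1 := by field_simp
    _ ≤ m⁻¹ + 1 := by gcongr

lemma vf_lip (f : MvPolynomial (Fin N) ℂ) (c : ℝ) (R : ℝ) :
    ∃ K : ℝ≥0, LipschitzOnWith K (vf f c) (closedBall 0 R) :=
  LocallyLipschitzOn.exists_lipschitzOnWith_of_compact (isCompact_closedBall _ _)
    (vf_contDiff f c).locallyLipschitz.locallyLipschitzOn

lemma vf_deriv (f : MvPolynomial (Fin N) ℂ) (c : ℝ) (w : ℂ) (x : Fin N → ℂ) :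
    ∑ i, eval x (pderiv i f) * (w • vf f c x) i
      = w * ((gradSq f x / den c (gradSq f x) : ℝ) : ℂ) := by
  have : ∀ i, eval x (pderiv i f) * (w • vf f c x) i
      = w * (((den c (gradSq f x))⁻¹ * ‖eval x (pderiv i f)‖ ^ 2 : ℝ) : ℂ) := by
    intro i
    simp only [vf, Pi.smul_apply, smul_eq_mul, Complex.real_smul]
    push_cast
    rw [← Complex.mul_conj']
    ring
  simp only [this]
  rw [← Finset.mul_sum, ← Complex.ofReal_sum, ← Finset.mul_sum, div_eq_inv_mul]
  rfl

lemma sol_value (f : MvPolynomial (Fin N) ℂ) {b : ℂ} {δ c : ℝ} (hc : 0 < c)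
    (hδ : ∀ x, ‖eval x f - b‖ < δ → c ≤ gradSq f x) {w : ℂ} {γ : ℝ → Fin N → ℂ}
    (hγ : IsSol (vf f c) w γ) (hw : ‖eval (γ 0) f - b‖ + ‖w‖ < δ) :
    eval (γ 1) f = eval (γ 0) f + w := by
  have h1 : ∀ t ∈ Icc (0 : ℝ) 1, HasDerivWithinAt (fun t => eval (γ t) f)
      (w * ((gradSq f (γ t) / den c (gradSq f (γ t)) : ℝ) : ℂ)) (Icc (0 : ℝ) 1) t := by
    intro t ht
    rw [← vf_deriv]
    exact chain f (hγ t ht)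
  have h2 : ∀ t ∈ Icc (0 : ℝ) 1, ‖eval (γ t) f - eval (γ 0) f‖ ≤ ‖w‖ * (t - 0) := by
    refine norm_image_sub_le_of_norm_deriv_le_segment' h1 fun t _ => ?_
    have hp := den_pos (c := c) (gradSq_nonneg f (γ t))
    rw [norm_mul, Complex.norm_real, Real.norm_of_nonneg
      (div_nonneg (gradSq_nonneg f (γ t)) hp.le)]
    exact mul_le_of_le_one_right (norm_nonneg _) (div_le_one_of_le₀ (le_den _ _) hp.le)
  have h3 : ∀ t ∈ Icc (0 : ℝ) 1, HasDerivWithinAt (fun t => eval (γ t) f - t * w)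
      0 (Icc (0 : ℝ) 1) t := by
    intro t ht
    have h4 : ‖eval (γ t) f - b‖ < δ := by
      have h5 := h2 t ht
      have h6 : ‖w‖ * (t - 0) ≤ ‖w‖ := mul_le_of_le_one_right (norm_nonneg _) (by linarith [ht.2])
      have h7 := norm_add_le (eval (γ t) f - eval (γ 0) f) (eval (γ 0) f - b)
      rw [sub_add_sub_cancel] at h7
      linarith
    have h5 := hδ _ h4
    have h6 := h1 t ht
    rw [den_eq hc h5, div_self (by linarith)] at h6
    have h7 : HasDerivWithinAt (fun t : ℝ => (t : ℂ) * w) (1 * w) (Icc (0 : ℝ) 1) t :=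
      (Complex.ofRealCLM.hasDerivWithinAt (x := t) (s := Icc (0 : ℝ) 1)).mul_const w
    have h8 := h6.sub h7
    rw [Complex.ofReal_one, mul_one, one_mul, sub_self] at h8
    exact h8
  have h4 := norm_image_sub_le_of_norm_deriv_le_segment_01' (C := 0) h3 (by simp)
  have h5 := norm_le_zero_iff.1 h4
  simp only [Complex.ofReal_one, one_mul, Complex.ofReal_zero, zero_mul, sub_zero] at h5
  linear_combination h5
end poly
end STame

/-- A strongly tame polynomial `f` is a topologically locally trivial
fibration over `ℂ ∖ C`, where `C = f(Sing(f))` is the set of critical values: for every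
`b ∉ C` there is an open neighborhood `U ⊆ ℂ ∖ C` of `b` and a homeomorphism
`φ : f⁻¹(U) ≃ₜ U × f⁻¹(b)` whose first component is the restriction of `f`. -/
theorem strongly_tame_is_fiber_bundle
    (n : ℕ) (hn : 1 ≤ n) (α : Fin (n + 1) → ℕ)
    (hαpos : ∀ i, 0 < α i) (hα : Finset.univ.gcd α = 1)
    (f : MvPolynomial (Fin (n + 1)) ℂ) (d : ℕ)
    (hd : MvPolynomial.weightedTotalDegree α f = d)
    (g : MvPolynomial (Fin (n + 1)) ℂ)
    (hg : g = weightedHomogeneousComponent α d f)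
    (hg0 : g ≠ 0)
    (htame : ∀ x : Fin (n + 1) → ℂ, (∀ i, eval x (pderiv i g) = 0) → x = 0)
    (b : ℂ)
    (hb : b ∉ (fun x => eval x f) '' {x : Fin (n + 1) → ℂ | ∀ i, eval x (pderiv i f) = 0}) :
    ∃ U : Set ℂ, IsOpen U ∧ b ∈ U ∧
      (∀ c ∈ U, c ∉ (fun x => eval x f) ''
        {x : Fin (n + 1) → ℂ | ∀ i, eval x (pderiv i f) = 0}) ∧
      ∃ φ : {x : Fin (n + 1) → ℂ // eval x f ∈ U} ≃ₜ
            U × {x : Fin (n + 1) → ℂ // eval x f = b},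
        ∀ x, ((φ x).1 : ℂ) = eval (x : Fin (n + 1) → ℂ) f := by
  subst hg
  obtain ⟨δ, c, hδ, hc, hnear⟩ := STame.grad_near f b
    (STame.grad_infty (Nat.succ_pos n) α hαpos f d hd htame)
    (fun x hx h0 => hb ⟨x, (STame.gradSq_eq_zero f x).1 h0, hx⟩)
  obtain ⟨B, hB⟩ := STame.vf_bound f c
  obtain ⟨Φ, hΦ, hsol, hinv⟩ := STame.exists_flow hB (STame.vf_lip f c)
  have hval : ∀ w x, ‖eval x f - b‖ + ‖w‖ < δ → eval (Φ (w, x)) f = eval x f + w := by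
    intro w x h
    obtain ⟨γ, h0, h1, hs⟩ := hsol w x
    rw [← h1, ← h0]
    exact STame.sol_value f hc hnear hs (by rw [h0]; exact h)
  have hev : Continuous fun x : Fin (n + 1) → ℂ => eval x f := (STame.contDiff_eval f).continuous
  have hU : ∀ z ∈ Metric.ball b (δ / 2), ‖z - b‖ < δ / 2 := fun z hz => by
    rwa [← dist_eq_norm]
  refine ⟨Metric.ball b (δ / 2), Metric.isOpen_ball, Metric.mem_ball_self (by linarith), ?_, ?_⟩
  · rintro z hz ⟨x, hx, rfl⟩
    have h1 := hnear x (by linarith [hU _ hz])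
    rw [(STame.gradSq_eq_zero f x).2 hx] at h1
    linarith
  · refine ⟨{ toFun := fun x => (⟨eval x.1 f, x.2⟩, ⟨Φ (b - eval x.1 f, x.1), ?_⟩)
              invFun := fun p => ⟨Φ (p.1.1 - b, p.2.1), ?_⟩
              left_inv := ?_
              right_inv := ?_
              continuous_toFun := ?_
              continuous_invFun := ?_ }, fun x => rfl⟩
    · rw [hval _ _ (by rw [norm_sub_rev b]; linarith [hU _ x.2])]
      ring
    · rw [hval _ _ (by rw [p.2.2, sub_self, norm_zero]; linarith [hU _ p.1.2]), p.2.2,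
        add_sub_cancel]
      exact p.1.2
    · intro x
      apply Subtype.ext
      have := hinv (b - eval x.1 f) x.1
      rwa [neg_sub] at this
    · rintro ⟨⟨z, hz⟩, ⟨y, hy⟩⟩
      have h1 : eval (Φ (z - b, y)) f = z := by
        rw [hval _ _ (by rw [hy, sub_self, norm_zero]; linarith [hU _ hz]), hy, add_sub_cancel]
      have h2 := hinv (z - b) y
      rw [neg_sub] at h2
      refine Prod.ext (Subtype.ext h1) (Subtype.ext ?_)
      simp only [h1]
      exact h2
    · have h1 : Continuous fun x : {x : Fin (n + 1) → ℂ // eval x f ∈ Metric.ball b (δ / 2)} =>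
          eval x.1 f := hev.comp continuous_subtype_val
      refine Continuous.prodMk (Continuous.subtype_mk h1 _) (Continuous.subtype_mk ?_ _)
      exact hΦ.comp ((continuous_const.sub h1).prodMk continuous_subtype_val)
    · refine Continuous.subtype_mk ?_ _
      exact hΦ.comp (Continuous.prodMk (by fun_prop) (by fun_prop))
end

section
/- Let f ∈ ℂ[x₁,…,x_{n+1}] be a strongly tame polynomial. Then the Milnor algebra V_f := ℂ[x]/⟨∂f/∂x₁,…,∂f/∂x_{n+1}⟩ is a finite-dimensional ℂ-vector space, and the set of eigenvalues of the ℂ-linear operator A : V_f → V_f given by multiplication by f equals the set C := f(Sing(f)) of critical values of f. -/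
open MvPolynomial

lemma milnor_lead {σ : Type*} (α : σ → ℕ) (f : MvPolynomial σ ℂ) (d : ℕ)
    (hd : ∀ β, d < Finsupp.weight α β → coeff β f = 0) (i : σ)
    (c : MvPolynomial σ ℂ) (m : ℕ) :
    ∃ h ∈ Ideal.span (Set.range fun i => pderiv i f), ∀ β, m ≤ Finsupp.weight α β →
      coeff β h = if Finsupp.weight α β = m then
        coeff β (c * pderiv i (weightedHomogeneousComponent α d f)) else 0 := by
  classical
  induction c using MvPolynomial.induction_on' with
  | add p q hp hq =>
    obtain ⟨h1, hm1, e1⟩ := hp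
    obtain ⟨h2, hm2, e2⟩ := hq
    refine ⟨h1 + h2, Ideal.add_mem _ hm1 hm2, fun β hβ => ?_⟩
    rw [coeff_add, e1 β hβ, e2 β hβ, add_mul, coeff_add]
    split_ifs <;> simp
  | monomial γ a =>
    have hw : ∀ β, γ ≤ β → Finsupp.weight α (β - γ + Finsupp.single i 1) + Finsupp.weight α γ
        = Finsupp.weight α β + α i := by
      intro β hγ
      rw [map_add, Finsupp.weight_single, one_smul]
      conv_rhs => rw [← tsub_add_cancel_of_le hγ, map_add]
      ring
    by_cases hm : m + α i = Finsupp.weight α γ + d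
    · refine ⟨monomial γ a * pderiv i f,
        Ideal.mul_mem_left _ _ (Ideal.subset_span ⟨i, rfl⟩), fun β hβ => ?_⟩
      rw [coeff_monomial_mul', coeff_monomial_mul']
      by_cases hγ : γ ≤ β
      · have := hw β hγ
        simp only [hγ, if_true, coeff_pderiv, coeff_weightedHomogeneousComponent]
        by_cases hb : Finsupp.weight α β = m
        · rw [if_pos hb, if_pos (by omega)]
        · rw [if_neg hb, hd _ (by omega)]; simp
      · simp [hγ]
    · refine ⟨0, Ideal.zero_mem _, fun β hβ => ?_⟩
      rw [coeff_monomial_mul', coeff_zero]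
      split_ifs with hb hγ
      · have := hw β hγ
        rw [coeff_pderiv, coeff_weightedHomogeneousComponent, if_neg (by omega)]; simp
      · rfl
      · rfl

lemma milnor_lead' {σ : Type*} [Fintype σ] (α : σ → ℕ) (f : MvPolynomial σ ℂ) (d : ℕ)
    (hd : ∀ β, d < Finsupp.weight α β → coeff β f = 0)
    (p : MvPolynomial σ ℂ)
    (hp : p ∈ Ideal.span (Set.range fun i => pderiv i (weightedHomogeneousComponent α d f)))
    (m : ℕ) :
    ∃ h ∈ Ideal.span (Set.range fun i => pderiv i f), ∀ β, m ≤ Finsupp.weight α β →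
      coeff β h = if Finsupp.weight α β = m then coeff β p else 0 := by
  classical
  obtain ⟨c, rfl⟩ := Ideal.mem_span_range_iff_exists_fun.1 hp
  choose h hm e using fun i => milnor_lead α f d hd i (c i) m
  refine ⟨∑ i, h i, Ideal.sum_mem _ fun i _ => hm i, fun β hβ => ?_⟩
  rw [coeff_sum, coeff_sum, Finset.sum_congr rfl fun i _ => e i β hβ]
  split_ifs <;> simp

lemma milnor_findim {σ : Type*} [Fintype σ] (α : σ → ℕ) (J : Ideal (MvPolynomial σ ℂ))
    (N : σ → ℕ)
    (H : ∀ j, ∃ h ∈ J, ∀ β, N j * α j ≤ Finsupp.weight α β →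
      coeff β h = coeff β (X j ^ N j : MvPolynomial σ ℂ)) :
    FiniteDimensional ℂ (MvPolynomial σ ℂ ⧸ J) := by
  classical
  let S : Set (σ →₀ ℕ) := Set.Iic (Finsupp.equivFunOnFinite.symm N)
  have hS : S.Finite := Set.finite_Iic _
  let W : Submodule ℂ (MvPolynomial σ ℂ ⧸ J) :=
    Submodule.span ℂ ((fun β => (Ideal.Quotient.mkₐ ℂ J) (monomial β 1)) '' S)
  have key : ∀ w : ℕ, ∀ β, Finsupp.weight α β = w →
      (Ideal.Quotient.mkₐ ℂ J) (monomial β 1) ∈ W := by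
    intro w
    induction w using Nat.strong_induction_on with
    | _ w ih =>
    intro β hβ
    by_cases hb : β ∈ S
    · exact Submodule.subset_span ⟨β, hb, rfl⟩
    · have : ∃ j, N j ≤ β j := by
        by_contra! hcon
        exact hb fun j => (hcon j).le
      obtain ⟨j, hj⟩ := this
      obtain ⟨h, hJ, e⟩ := H j
      have hle : Finsupp.single j (N j) ≤ β := by simpa using hj
      set γ := β - Finsupp.single j (N j) with hγ
      have hβγ : β = γ + Finsupp.single j (N j) := (tsub_add_cancel_of_le hle).symm
      have hwβ : Finsupp.weight α γ + N j * α j = w := by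
        rw [← hβ, hβγ, map_add, Finsupp.weight_single]; simp
      have h1 : (Ideal.Quotient.mkₐ ℂ J) (monomial β 1) =
          (Ideal.Quotient.mkₐ ℂ J) (monomial γ 1 * (X j ^ N j - h)) := by
        have : (Ideal.Quotient.mkₐ ℂ J) h = 0 := Ideal.Quotient.eq_zero_iff_mem.2 hJ
        rw [map_mul, map_sub, this, sub_zero, ← map_mul, X_pow_eq_monomial, monomial_mul,
          ← hβγ, one_mul]
      rw [h1]
      set r := monomial γ (1:ℂ) * (X j ^ N j - h) with hr
      rw [r.as_sum, map_sum]
      refine Submodule.sum_mem _ fun δ hδ => ?_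
      have h2 : monomial δ (coeff δ r) = coeff δ r • monomial δ (1:ℂ) := by
        rw [smul_monomial]; simp
      rw [h2, map_smul]
      refine Submodule.smul_mem _ _ (ih _ ?_ δ rfl)
      rw [mem_support_iff, hr, coeff_monomial_mul'] at hδ
      by_cases hγδ : γ ≤ δ
      · rw [if_pos hγδ, one_mul, coeff_sub] at hδ
        have h3 : Finsupp.weight α (δ - γ) < N j * α j := by
          by_contra! hc
          exact hδ (by rw [e _ hc, sub_self])
        have : Finsupp.weight α δ = Finsupp.weight α (δ - γ) + Finsupp.weight α γ := by
          rw [← map_add, tsub_add_cancel_of_le hγδ]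
        omega
      · simp [hγδ] at hδ
  have htop : W = ⊤ := by
    rw [eq_top_iff]
    rintro x -
    obtain ⟨p, rfl⟩ := Ideal.Quotient.mkₐ_surjective ℂ J x
    rw [p.as_sum, map_sum]
    refine Submodule.sum_mem _ fun δ hδ => ?_
    have h2 : monomial δ (coeff δ p) = coeff δ p • monomial δ (1:ℂ) := by
      rw [smul_monomial]; simp
    rw [h2, map_smul]
    exact Submodule.smul_mem _ _ (key _ δ rfl)
  exact ⟨Submodule.fg_def.2 ⟨_, hS.image _, htop⟩⟩

/-- For a strongly tame polynomial `f`, the Milnor algebra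
`V_f = ℂ[x]/⟨∂f/∂x₁,…,∂f/∂x_{n+1}⟩` is a finite-dimensional ℂ-vector space, and the
eigenvalues of the linear operator `A : V_f → V_f` of multiplication by `f` are exactly
the critical values of `f`. -/
theorem milnor_algebra_findim_and_eigenvalues
    (n : ℕ) (hn : 1 ≤ n) (α : Fin (n + 1) → ℕ)
    (hαpos : ∀ i, 0 < α i) (hα : Finset.univ.gcd α = 1)
    (f : MvPolynomial (Fin (n + 1)) ℂ) (d : ℕ)
    (hd : MvPolynomial.weightedTotalDegree α f = d)
    (g : MvPolynomial (Fin (n + 1)) ℂ)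
    (hg : g = weightedHomogeneousComponent α d f)
    (hg0 : g ≠ 0)
    (htame : ∀ x : Fin (n + 1) → ℂ, (∀ i, eval x (pderiv i g) = 0) → x = 0)
    (J : Ideal (MvPolynomial (Fin (n + 1)) ℂ))
    (hJ : J = Ideal.span (Set.range fun i => pderiv i f))
    (A : Module.End ℂ (MvPolynomial (Fin (n + 1)) ℂ ⧸ J))
    (hA : A = LinearMap.mulLeft ℂ (Ideal.Quotient.mk J f)) :
    FiniteDimensional ℂ (MvPolynomial (Fin (n + 1)) ℂ ⧸ J) ∧
    ∀ c : ℂ, (A.HasEigenvalue c ↔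
      c ∈ (fun x => eval x f) '' {x : Fin (n + 1) → ℂ | ∀ i, eval x (pderiv i f) = 0}) := by
  classical
  have hfd : FiniteDimensional ℂ (MvPolynomial (Fin (n + 1)) ℂ ⧸ J) := by
    have hX : ∀ j, ∃ N : ℕ, (X j : MvPolynomial (Fin (n + 1)) ℂ) ^ N ∈
        Ideal.span (Set.range fun i => pderiv i g) := by
      intro j
      have : (X j : MvPolynomial (Fin (n + 1)) ℂ) ∈
          (Ideal.span (Set.range fun i => pderiv i g)).radical := by
        rw [← vanishingIdeal_zeroLocus_eq_radical (K := ℂ), mem_vanishingIdeal_iff]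
        intro x hx
        rw [zeroLocus_span] at hx
        have hx0 : x = 0 := htame x fun i => by
          have := hx _ ⟨i, rfl⟩
          rwa [aeval_eq_eval] at this
        simp [hx0]
      exact this
    choose N hN using hX
    refine milnor_findim α J N fun j => ?_
    subst hg
    obtain ⟨h, hm, e⟩ := milnor_lead' α f d (fun β hβ => by
      by_contra hc
      have := le_weightedTotalDegree α (mem_support_iff.2 hc)
      omega) _ (hN j) (N j * α j)
    refine ⟨h, hJ ▸ hm, fun β hβ => ?_⟩
    rw [e β hβ]
    split_ifs with hw
    · rfl
    · rw [coeff_X_pow, if_neg]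
      rintro rfl
      exact hw (by simp [Finsupp.weight_single])
  refine ⟨hfd, fun c => ?_⟩
  have hAc : ∀ v, (A - algebraMap ℂ _ c) v = Ideal.Quotient.mk J (f - C c) * v := by
    intro v
    rw [hA, LinearMap.sub_apply, LinearMap.mulLeft_apply, Module.algebraMap_end_apply, map_sub,
      sub_mul]
    congr 1
    obtain ⟨p, rfl⟩ := Ideal.Quotient.mk_surjective v
    rw [← map_mul, ← smul_eq_C_mul]
    rfl
  constructor
  · intro hc
    obtain ⟨v, hv⟩ := hc.exists_hasEigenvector
    by_contra hcon
    have htop : J ⊔ Ideal.span {f - C c} = ⊤ := by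
      rw [← Ideal.radical_eq_top, ← vanishingIdeal_zeroLocus_eq_radical (K := ℂ)]
      convert vanishingIdeal_empty
      rw [Set.eq_empty_iff_forall_notMem]
      intro x hx
      rw [mem_zeroLocus_iff] at hx
      refine hcon ⟨x, fun i => ?_, ?_⟩
      · have := hx (pderiv i f) (Ideal.mem_sup_left (hJ ▸ Ideal.subset_span ⟨i, rfl⟩))
        rwa [aeval_eq_eval] at this
      · have := hx (f - C c) (Ideal.mem_sup_right (Ideal.mem_span_singleton_self _))
        rw [aeval_eq_eval] at this
        simpa [sub_eq_zero] using this
    have h1 : (1 : MvPolynomial (Fin (n + 1)) ℂ) ∈ J ⊔ Ideal.span {f - C c} := by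
      rw [htop]; trivial
    obtain ⟨a, ha, b, hb, hab⟩ := Submodule.mem_sup.1 h1
    obtain ⟨r, rfl⟩ := Ideal.mem_span_singleton'.1 hb
    have h2 := congrArg (Ideal.Quotient.mk J) hab
    rw [map_add, Ideal.Quotient.eq_zero_iff_mem.2 ha, zero_add, map_mul, map_one] at h2
    have h3 := hAc v
    rw [LinearMap.sub_apply, Module.algebraMap_end_apply, hv.apply_eq_smul, sub_self] at h3
    apply hv.2
    rw [← one_mul v, ← h2, mul_assoc, ← h3, mul_zero]
  · rintro ⟨x, hx, rfl⟩
    rw [Module.End.hasEigenvalue_iff_mem_spectrum, spectrum.mem_iff]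
    intro hu
    rw [← IsUnit.neg_iff, neg_sub, Module.End.isUnit_iff] at hu
    obtain ⟨v, hv⟩ := hu.2 1
    rw [hAc] at hv
    obtain ⟨r, rfl⟩ := Ideal.Quotient.mk_surjective v
    rw [← map_mul, ← map_one (Ideal.Quotient.mk J), Ideal.Quotient.mk_eq_mk_iff_sub_mem] at hv
    have hle : J ≤ RingHom.ker (eval x) := by
      rw [hJ, Ideal.span_le]
      rintro _ ⟨i, rfl⟩
      exact hx i
    have := hle hv
    rw [RingHom.mem_ker] at this
    simp at this
end

section
/- Let f ∈ ℂ[x₁,…,x_{n+1}] be a strongly tame polynomial of weighted degree d, F ∈ ℂ[x₀,x₁,…,x_{n+1}] its homogenization, and let the monomials x^β, β ∈ I, be a ℂ-basis of the Milnor algebra V_g of the last quasi-homogeneous part g of f. Then the images of x^β, β ∈ I, form a basis of the ℂ[x₀]-module V := ℂ[x₀,x]/⟨∂F/∂x₁,…,∂F/∂x_{n+1}⟩; in particular this module is free of rank #I over ℂ[x₀]. -/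
open MvPolynomial

noncomputable section

/-- The homogenization `F = Σ_{i=0}^d fᵢ·x₀^{d-i}` of `f`, where `fᵢ` is the weighted
homogeneous component of degree `i` of `f`; the variable `x₀` is the new variable `0`
of `Fin (n+2)` and `xᵢ` becomes the variable `Fin.succ i`. -/
def homogenization (n d : ℕ) (α : Fin (n + 1) → ℕ)
    (f : MvPolynomial (Fin (n + 1)) ℂ) : MvPolynomial (Fin (n + 2)) ℂ :=
  ∑ i ∈ Finset.range (d + 1),
    rename Fin.succ (weightedHomogeneousComponent α i f) * X 0 ^ (d - i)

/-- The ideal generated by the partial derivatives of `F` with respect to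
`x₁, …, x_{n+1}` only (not `x₀`). -/
def partialIdeal (n d : ℕ) (α : Fin (n + 1) → ℕ)
    (f : MvPolynomial (Fin (n + 1)) ℂ) : Ideal (MvPolynomial (Fin (n + 2)) ℂ) :=
  Ideal.span (Set.range fun i : Fin (n + 1) => pderiv i.succ (homogenization n d α f))

/-- The module `V = ℂ[x₀,x]/⟨∂F/∂x₁,…,∂F/∂x_{n+1}⟩`. -/
abbrev Vmod (n d : ℕ) (α : Fin (n + 1) → ℕ) (f : MvPolynomial (Fin (n + 1)) ℂ) :=
  MvPolynomial (Fin (n + 2)) ℂ ⧸ partialIdeal n d α f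

/-- `V` as a module over `ℂ[x₀]`, where `x₀` acts as multiplication by the class of the
variable `X 0`. -/
instance (n d : ℕ) (α : Fin (n + 1) → ℕ) (f : MvPolynomial (Fin (n + 1)) ℂ) :
    Module (Polynomial ℂ) (Vmod n d α f) :=
  Module.compHom _
    ((Polynomial.aeval (Ideal.Quotient.mk (partialIdeal n d α f) (X 0))).toRingHom)

section KoszulPart

variable {R : Type*} [CommRing R] {M : Type*} [AddCommGroup M] [Module R M]

theorem free_reg {P : Type*} [AddCommGroup P] [Module R P] [Module.Free R P]
    (Q : Ideal R) (a : R) (ha : ∀ r, a * r ∈ Q → r ∈ Q) (x : P)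
    (hx : a • x ∈ Q • (⊤ : Submodule R P)) : x ∈ Q • (⊤ : Submodule R P) := by
  let b := Module.Free.chooseBasis R P
  have key : ∀ y : P, y ∈ Q • (⊤ : Submodule R P) → ∀ i, b.repr y i ∈ Q := by
    intro y hy i
    refine Submodule.smul_induction_on hy ?_ ?_
    · intro r hr n _
      simp only [map_smul, Finsupp.smul_apply, smul_eq_mul]
      exact Q.mul_mem_right _ hr
    · intro x y hx hy
      simp only [map_add, Finsupp.add_apply]
      exact Q.add_mem hx hy
  have h2 : ∀ i, b.repr x i ∈ Q := by
    intro i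
    apply ha
    have := key _ hx i
    simpa using this
  rw [← b.linearCombination_repr x, Finsupp.linearCombination_apply]
  exact Submodule.sum_mem _ fun i _ => Submodule.smul_mem_smul (h2 i) trivial

theorem sub_reg (L : Submodule R M) [Module.Free R L]
    (Q : Ideal R) (a : R) (ha : ∀ r, a * r ∈ Q → r ∈ Q) (x : M) (hxL : x ∈ L)
    (hx : a • x ∈ Q • L) : x ∈ Q • L := by
  have := free_reg Q a ha (⟨x, hxL⟩ : L)
  rw [Submodule.mem_smul_top_iff, Submodule.mem_smul_top_iff] at this
  exact this hx

open CliffordAlgebra in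
theorem contract_mem (D : Module.Dual R M) (k : ℕ) :
    ∀ x ∈ ⋀[R]^(k+1) M, (contractLeft (Q := (0 : QuadraticForm R M)) D) x ∈ ⋀[R]^k M := by
  induction k with
  | zero =>
    intro x hx
    rw [ExteriorAlgebra.exteriorPower, zero_add, pow_one] at hx
    obtain ⟨v, rfl⟩ := hx
    rw [ExteriorAlgebra.exteriorPower, pow_zero]
    have := contractLeft_ι (Q := (0 : QuadraticForm R M)) D v
    erw [this]
    exact Submodule.mem_one.2 ⟨_, rfl⟩
  | succ k ih =>
    intro x hx
    rw [ExteriorAlgebra.exteriorPower, pow_succ'] at hx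
    refine Submodule.mul_induction_on hx ?_ ?_
    · rintro _ ⟨v, rfl⟩ y hy
      have := contractLeft_ι_mul (Q := (0 : QuadraticForm R M)) (d := D) v y
      erw [this]
      refine Submodule.sub_mem _ (Submodule.smul_mem _ _ hy) ?_
      rw [ExteriorAlgebra.exteriorPower, pow_succ']
      exact Submodule.mul_mem_mul ⟨v, rfl⟩ (ih y hy)
    · intro x y hx hy
      rw [map_add]
      exact Submodule.add_mem _ hx hy

open CliffordAlgebra in
theorem koszul_step [Module.Free R M] (D : Module.Dual R M) (Q : Ideal R) (v : M) (i : ℕ)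
    (ha : ∀ r, D v * r ∈ Q → r ∈ Q)
    (hP : ∀ z ∈ ⋀[R]^(i+2) M, (contractLeft (Q := (0 : QuadraticForm R M)) D) z ∈
        (Q ⊔ Ideal.span {D v}) • ⋀[R]^(i+1) M → ∃ w ∈ ⋀[R]^(i+3) M,
        z - (contractLeft (Q := (0 : QuadraticForm R M)) D) w ∈
          (Q ⊔ Ideal.span {D v}) • ⋀[R]^(i+2) M) :
    ∀ z ∈ ⋀[R]^(i+1) M, (contractLeft (Q := (0 : QuadraticForm R M)) D) z ∈ Q • ⋀[R]^i M →
      ∃ w ∈ ⋀[R]^(i+2) M, z - (contractLeft (Q := (0 : QuadraticForm R M)) D) w ∈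
          Q • ⋀[R]^(i+1) M := by
  intro z hz hdz
  set d := contractLeft (Q := (0 : QuadraticForm R M)) D with hd
  have hmul : ∀ k, ∀ y ∈ ⋀[R]^k M, ExteriorAlgebra.ι R v * y ∈ ⋀[R]^(k+1) M := by
    intro k y hy
    rw [ExteriorAlgebra.exteriorPower, pow_succ']
    exact Submodule.mul_mem_mul ⟨v, rfl⟩ hy
  have hlift : ∀ k l, ∀ T : ExteriorAlgebra R M →ₗ[R] ExteriorAlgebra R M,
      (∀ y ∈ ⋀[R]^k M, T y ∈ ⋀[R]^l M) → ∀ y ∈ Q • ⋀[R]^k M, T y ∈ Q • ⋀[R]^l M := by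
    intro k l T hT y hy
    have h1 : T y ∈ (Q • ⋀[R]^k M).map T := ⟨y, hy, rfl⟩
    rw [Submodule.map_smul''] at h1
    refine Submodule.smul_mono le_rfl ?_ h1
    rintro _ ⟨y, hy, rfl⟩
    exact hT y hy
  have h1 : d (ExteriorAlgebra.ι R v * z) = D v • z - ExteriorAlgebra.ι R v * d z :=
    contractLeft_ι_mul (Q := (0 : QuadraticForm R M)) (d := D) v z
  have h2 : ExteriorAlgebra.ι R v * d z ∈ Q • ⋀[R]^(i+1) M :=
    hlift i (i+1) (LinearMap.mulLeft R (ExteriorAlgebra.ι R v)) (hmul i) _ hdz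
  obtain ⟨w, hw, hw2⟩ := hP _ (hmul _ z hz) (by
    rw [h1]
    refine Submodule.sub_mem _ ?_ ?_
    · exact Submodule.smul_mem_smul (Ideal.mem_sup_right (Ideal.mem_span_singleton_self _)) hz
    · exact Submodule.smul_mono_left le_sup_left h2)
  rw [Submodule.sup_smul, Submodule.mem_sup] at hw2
  obtain ⟨q, hq, y, hy, hqy⟩ := hw2
  rw [Submodule.ideal_span_singleton_smul] at hy
  obtain ⟨u, hu, rfl⟩ := hy
  refine ⟨u, hu, ?_⟩
  have hdq : d q ∈ Q • ⋀[R]^(i+1) M := hlift _ _ d (contract_mem D (i+1)) q hq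
  have h3 : d q + D v • d u = D v • z - ExteriorAlgebra.ι R v * d z := by
    have := congrArg d hqy
    rw [map_sub, h1, hd, contractLeft_contractLeft, ← hd, sub_zero, map_add] at this
    rw [← this]
    simp
  apply sub_reg (⋀[R]^(i+1) M) Q (D v) ha _ (Submodule.sub_mem _ hz (contract_mem D (i+1) u hu))
  have h4 : D v • (z - d u) = d q + ExteriorAlgebra.ι R v * d z := by
    rw [smul_sub, sub_eq_iff_eq_add, add_right_comm, h3]; abel
  rw [h4]
  exact Submodule.add_mem _ hdq h2

/-- Koszul syzygies. -/
theorem koszul_syz [Nontrivial R] (N : ℕ) (g a : Fin N → R)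
    (hag : ∀ i, a i ∈ Ideal.span (Set.range g))
    (hreg : ∀ i r, a i * r ∈ Ideal.span (a '' {j | j < i}) → r ∈ Ideal.span (a '' {j | j < i}))
    (z : Fin N → R) (hz : ∑ i, z i * g i = 0) :
    z ∈ Submodule.span R {y | ∃ u v : Fin N → R,
      y = (∑ i, u i * g i) • v - (∑ i, v i * g i) • u} := by
  let D : Module.Dual R (Fin N → R) := Fintype.linearCombination R g
  have hD : ∀ u, D u = ∑ i, u i * g i := by
    intro u; simp [D, Fintype.linearCombination_apply]
  have hP : ∀ k ≤ N, ∀ z ∈ ⋀[R]^((N - k)+1) (Fin N → R),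
      (CliffordAlgebra.contractLeft (Q := (0 : QuadraticForm R (Fin N → R))) D) z ∈
        Ideal.span (a '' {j | (j : ℕ) < N - k}) • ⋀[R]^(N-k) (Fin N → R) →
      ∃ w ∈ ⋀[R]^((N-k)+2) (Fin N → R),
        z - (CliffordAlgebra.contractLeft (Q := (0 : QuadraticForm R (Fin N → R))) D) w ∈
          Ideal.span (a '' {j | (j : ℕ) < N - k}) • ⋀[R]^((N-k)+1) (Fin N → R) := by
    intro k
    induction k with
    | zero =>
      intro _ z hz _
      have h0 : Module.finrank R (⋀[R]^((N-0)+1) (Fin N → R)) = 0 := by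
        rw [exteriorPower.finrank_eq]; simp
      rw [Module.finrank_eq_zero_iff_of_free] at h0
      have : z = 0 := congrArg Subtype.val (h0.elim ⟨z, hz⟩ 0)
      exact ⟨0, Submodule.zero_mem _, by simp [this]⟩
    | succ k ih =>
      intro hk
      obtain ⟨i, hi⟩ : ∃ i, i = N - (k+1) := ⟨_, rfl⟩
      have hi1 : N - k = i + 1 := by omega
      have ih := ih (by omega)
      rw [← hi]
      rw [hi1] at ih
      have hiN : i < N := by omega
      obtain ⟨v, hv⟩ : ∃ v, D v = a ⟨i, hiN⟩ := by
        have := hag ⟨i, hiN⟩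
        rw [Ideal.span, Submodule.mem_span_range_iff_exists_fun] at this
        obtain ⟨c, hc⟩ := this
        exact ⟨c, by rw [hD]; simpa using hc⟩
      have hQ : Ideal.span (a '' {j | (j : ℕ) < i + 1}) =
          Ideal.span (a '' {j | (j : ℕ) < i}) ⊔ Ideal.span {D v} := by
        rw [hv, ← Ideal.span_union, ← Set.image_singleton, ← Set.image_union]
        congr 2
        ext j
        simp [Fin.ext_iff]
        omega
      rw [hQ] at ih
      refine koszul_step D _ v i ?_ ih
      intro r hr
      rw [hv] at hr
      have := hreg ⟨i, hiN⟩ r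
      simp only [Fin.lt_def] at this
      exact this hr
  obtain ⟨w, hw, hw2⟩ := hP N le_rfl (ExteriorAlgebra.ι R z) (by
      rw [Nat.sub_self, ExteriorAlgebra.exteriorPower, zero_add, pow_one]; exact ⟨z, rfl⟩) (by
      have := CliffordAlgebra.contractLeft_ι (Q := (0 : QuadraticForm R (Fin N → R))) D z
      erw [this]
      rw [hD, hz, map_zero]
      exact Submodule.zero_mem _)
  have hE : {j : Fin N | (j : ℕ) < N - N} = ∅ := by ext; simp
  rw [hE, Set.image_empty, Ideal.span_empty, Submodule.bot_smul, Submodule.mem_bot, sub_eq_zero] at hw2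
  set W := Submodule.span R {y | ∃ u v : Fin N → R,
      y = (∑ i, u i * g i) • v - (∑ i, v i * g i) • u} with hW
  have h3 : ∀ w ∈ ⋀[R]^2 (Fin N → R),
      (CliffordAlgebra.contractLeft (Q := (0 : QuadraticForm R (Fin N → R))) D) w ∈
        W.map (ExteriorAlgebra.ι R) := by
    intro w hw
    rw [ExteriorAlgebra.exteriorPower, pow_two] at hw
    refine Submodule.mul_induction_on hw ?_ ?_
    · rintro _ ⟨u, rfl⟩ _ ⟨v, rfl⟩
      refine ⟨(∑ i, u i * g i) • v - (∑ i, v i * g i) • u, Submodule.subset_span ⟨u, v, rfl⟩, ?_⟩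
      have e1 := CliffordAlgebra.contractLeft_ι_mul (Q := (0 : QuadraticForm R (Fin N → R))) (d := D) u (ExteriorAlgebra.ι R v)
      have e2 := CliffordAlgebra.contractLeft_ι (Q := (0 : QuadraticForm R (Fin N → R))) D v
      refine Eq.trans ?_ e1.symm
      erw [e2]
      rw [map_sub, map_smul, map_smul, hD, hD, ← Algebra.commutes, ← Algebra.smul_def]
    · intro x y hx hy
      rw [map_add]; exact Submodule.add_mem _ hx hy
  rw [Nat.sub_self, zero_add] at hw
  obtain ⟨y, hy, hy2⟩ := h3 w hw
  rw [← hw2] at hy2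
  rwa [← (ExteriorAlgebra.ι_inj R y z).1 hy2]

end KoszulPart

theorem X_pow_reg (N m : ℕ) (i : Fin N) (r : MvPolynomial (Fin N) ℂ)
    (h : (X i ^ m : MvPolynomial (Fin N) ℂ) * r ∈
      Ideal.span ((fun j : Fin N => (X j ^ m : MvPolynomial (Fin N) ℂ)) '' {j | j < i})) :
    r ∈ Ideal.span ((fun j : Fin N => (X j ^ m : MvPolynomial (Fin N) ℂ)) '' {j | j < i}) := by
  have hE : (fun j : Fin N => (X j ^ m : MvPolynomial (Fin N) ℂ)) '' {j | j < i} =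
      (fun s => monomial s (1 : ℂ)) '' ((fun j : Fin N => Finsupp.single j m) '' {j | j < i}) := by
    rw [Set.image_image]
    simp only [X_pow_eq_monomial]
  rw [hE, mem_ideal_span_monomial_image] at h ⊢
  intro e he
  obtain ⟨s, ⟨j, hj, rfl⟩, hs⟩ := h (Finsupp.single i m + e) (by
    rw [mem_support_iff, X_pow_eq_monomial, coeff_monomial_mul, one_mul]
    exact mem_support_iff.1 he)
  refine ⟨_, ⟨j, hj, rfl⟩, ?_⟩
  have h1 := hs j
  have hji : i ≠ j := fun hh => by simp [hh] at hj
  simp only [Finsupp.single_eq_same, Finsupp.add_apply, Finsupp.single_eq_of_ne hji.symm, zero_add] at h1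
  rw [Finsupp.single_le_iff]
  exact h1

/-- Setting `x₀ = 0`. -/
def ev0 (n : ℕ) : MvPolynomial (Fin (n + 2)) ℂ →ₐ[ℂ] MvPolynomial (Fin (n + 1)) ℂ :=
  aeval (Fin.cons 0 X : Fin (n + 2) → MvPolynomial (Fin (n + 1)) ℂ)

theorem ev0_X0 (n : ℕ) : ev0 n (X 0) = 0 := by simp [ev0]

theorem ev0_rename (n : ℕ) (p : MvPolynomial (Fin (n + 1)) ℂ) :
    ev0 n (rename Fin.succ p) = p := by
  rw [ev0, aeval_rename]
  have : (Fin.cons 0 X : Fin (n + 2) → MvPolynomial (Fin (n + 1)) ℂ) ∘ Fin.succ = X := by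
    ext i; simp
  rw [this, aeval_X_left_apply]

theorem X0_dvd_sub (n : ℕ) (h : MvPolynomial (Fin (n + 2)) ℂ) :
    X 0 ∣ h - rename Fin.succ (ev0 n h) := by
  induction h using MvPolynomial.induction_on with
  | C a => simp [ev0]
  | add p q hp hq =>
    have := dvd_add hp hq
    rw [map_add, map_add]
    convert this using 1; ring
  | mul_X p i hp =>
    refine Fin.cases ?_ (fun j => ?_) i
    · rw [map_mul, ev0_X0]; simp
    · have : ev0 n (X j.succ) = X j := by simp [ev0]
      rw [map_mul, this, map_mul, rename_X, ← sub_mul]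
      exact Dvd.dvd.mul_right hp _

theorem X0_dvd_of (n : ℕ) (h : MvPolynomial (Fin (n + 2)) ℂ) (h0 : ev0 n h = 0) : X 0 ∣ h := by
  have := X0_dvd_sub n h
  rwa [h0, map_zero, sub_zero] at this

theorem ev0_pderiv (n d : ℕ) (α : Fin (n + 1) → ℕ) (f : MvPolynomial (Fin (n + 1)) ℂ)
    (i : Fin (n + 1)) :
    ev0 n (pderiv i.succ (homogenization n d α f)) =
      pderiv i (weightedHomogeneousComponent α d f) := by
  rw [homogenization, map_sum, map_sum, Finset.sum_eq_single d]
  · simp [pderiv_rename (Fin.succ_injective _), ev0_rename]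
  · intro k hk hkd
    have : d - k ≠ 0 := by simp at hk; omega
    have h0 : pderiv i.succ (X 0 ^ (d - k) : MvPolynomial (Fin (n + 2)) ℂ) = 0 := by
      rw [Derivation.leibniz_pow, pderiv_X_of_ne (Fin.succ_ne_zero i).symm]; simp
    simp [Derivation.leibniz, h0, ev0_X0, this]
  · simp

theorem tame_syz (n : ℕ) (g : MvPolynomial (Fin (n + 1)) ℂ)
    (htame : ∀ x : Fin (n + 1) → ℂ, (∀ i, eval x (pderiv i g) = 0) → x = 0)
    (z : Fin (n + 1) → MvPolynomial (Fin (n + 1)) ℂ) (hz : ∑ i, z i * pderiv i g = 0) :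
    z ∈ Submodule.span (MvPolynomial (Fin (n + 1)) ℂ)
      {y | ∃ u v : Fin (n + 1) → MvPolynomial (Fin (n + 1)) ℂ,
      y = (∑ i, u i * pderiv i g) • v - (∑ i, v i * pderiv i g) • u} := by
  set J := Ideal.span (Set.range fun i => pderiv i g) with hJ
  have h1 : ∀ i, ∃ m, (X i : MvPolynomial (Fin (n + 1)) ℂ) ^ m ∈ J := by
    intro i
    have : (X i : MvPolynomial (Fin (n + 1)) ℂ) ∈ J.radical := by
      rw [← vanishingIdeal_zeroLocus_eq_radical (K := ℂ), mem_vanishingIdeal_iff]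
      intro x hx
      have : x = 0 := htame x fun i => by
        have := hx (pderiv i g) (Ideal.subset_span ⟨i, rfl⟩)
        simpa [aeval_eq_eval] using this
      simp [this]
    exact this
  choose m hm using h1
  let m' := ∑ i, m i
  refine koszul_syz (n + 1) (fun i => pderiv i g) (fun j => X j ^ m') ?_ ?_ z hz
  · intro i
    exact Ideal.mem_of_dvd _ (pow_dvd_pow (X i) (Finset.single_le_sum (f := m) (fun _ _ => Nat.zero_le _) (Finset.mem_univ i))) (hm i)
  · intro i r hr
    exact X_pow_reg _ _ i r hr

theorem X0_reg (n d : ℕ) (α : Fin (n + 1) → ℕ) (f : MvPolynomial (Fin (n + 1)) ℂ)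
    (htame : ∀ x : Fin (n + 1) → ℂ,
      (∀ i, eval x (pderiv i (weightedHomogeneousComponent α d f)) = 0) → x = 0)
    (h : MvPolynomial (Fin (n + 2)) ℂ) (hh : X 0 * h ∈ partialIdeal n d α f) :
    h ∈ partialIdeal n d α f := by
  set F := fun i : Fin (n + 1) => pderiv i.succ (homogenization n d α f) with hF
  have hlift : ∀ z ∈ Submodule.span (MvPolynomial (Fin (n + 1)) ℂ)
      {y | ∃ u v : Fin (n + 1) → MvPolynomial (Fin (n + 1)) ℂ,
      y = (∑ i, u i * pderiv i (weightedHomogeneousComponent α d f)) • v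
        - (∑ i, v i * pderiv i (weightedHomogeneousComponent α d f)) • u},
      ∃ Z : Fin (n + 1) → MvPolynomial (Fin (n + 2)) ℂ,
        (∀ i, ev0 n (Z i) = z i) ∧ ∑ i, Z i * F i = 0 := by
    intro z hz
    induction hz using Submodule.span_induction with
    | mem y hy =>
      obtain ⟨u, v, rfl⟩ := hy
      let U := fun i => rename Fin.succ (u i)
      let V := fun i => rename Fin.succ (v i)
      refine ⟨fun i => (∑ j, U j * F j) * V i - (∑ j, V j * F j) * U i, fun i => ?_, ?_⟩
      · simp only [map_sub, map_mul, map_sum, U, V, ev0_rename, F, ev0_pderiv]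
        rfl
      · simp only [sub_mul, Finset.sum_sub_distrib, mul_assoc, ← Finset.mul_sum]
        ring
    | zero => exact ⟨0, by simp, by simp⟩
    | add x y _ _ hx hy =>
      obtain ⟨A, hA, hA2⟩ := hx
      obtain ⟨B, hB, hB2⟩ := hy
      exact ⟨A + B, by simp [hA, hB], by simp [add_mul, Finset.sum_add_distrib, hA2, hB2]⟩
    | smul c x _ hx =>
      obtain ⟨A, hA, hA2⟩ := hx
      refine ⟨fun i => rename Fin.succ c * A i, by simp [hA, ev0_rename], ?_⟩
      simp [mul_assoc, ← Finset.mul_sum, hA2]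
  rw [partialIdeal, Ideal.span, Submodule.mem_span_range_iff_exists_fun] at hh
  obtain ⟨a, ha⟩ := hh
  obtain ⟨Z, hZ, hZ2⟩ := hlift (fun i => ev0 n (a i)) (tame_syz n _ htame _ (by
    have := congrArg (ev0 n) ha
    simpa [ev0_X0, ev0_pderiv] using this))
  have : ∀ i, ∃ b, a i - Z i = X 0 * b := fun i => X0_dvd_of n _ (by simp [hZ])
  choose b hb using this
  have h5 : X 0 * h = X 0 * ∑ i, b i * F i := by
    rw [← ha, Finset.mul_sum]
    simp only [← mul_assoc, ← hb, sub_mul, Finset.sum_sub_distrib, hZ2, smul_eq_mul, F, sub_zero]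
  rw [mul_left_cancel₀ (X_ne_zero 0) h5]
  exact Ideal.sum_mem _ fun i _ => Ideal.mul_mem_left _ _ (Ideal.subset_span ⟨i, rfl⟩)

theorem vmod_smul (n d : ℕ) (α : Fin (n + 1) → ℕ) (f : MvPolynomial (Fin (n + 1)) ℂ)
    (p : Polynomial ℂ) (h : MvPolynomial (Fin (n + 2)) ℂ) :
    p • (Ideal.Quotient.mk (partialIdeal n d α f) h : Vmod n d α f) =
      Ideal.Quotient.mk (partialIdeal n d α f) (Polynomial.aeval (X 0) p * h) := by
  have : p • (Ideal.Quotient.mk (partialIdeal n d α f) h : Vmod n d α f) =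
    Polynomial.aeval (Ideal.Quotient.mk (partialIdeal n d α f) (X 0)) p *
      Ideal.Quotient.mk (partialIdeal n d α f) h := rfl
  rw [this, map_mul]
  congr 1
  exact Polynomial.aeval_algHom_apply (Ideal.Quotient.mkₐ ℂ (partialIdeal n d α f)) (X 0) p

theorem homog_rename (n k : ℕ) (α : Fin (n + 1) → ℕ) (p : MvPolynomial (Fin (n + 1)) ℂ)
    (hp : IsWeightedHomogeneous α p k) :
    IsWeightedHomogeneous (Fin.cons 1 α : Fin (n + 2) → ℕ) (rename Fin.succ p) k := by
  intro e he
  obtain ⟨u, rfl, hu⟩ := coeff_rename_ne_zero _ _ _ he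
  rw [← hp hu, Finsupp.weight, Finsupp.weight]
  simp only [LinearMap.toAddMonoidHom_coe, Finsupp.linearCombination_mapDomain]
  rfl

theorem homog_F (n d : ℕ) (α : Fin (n + 1) → ℕ) (f : MvPolynomial (Fin (n + 1)) ℂ) :
    IsWeightedHomogeneous (Fin.cons 1 α : Fin (n + 2) → ℕ) (homogenization n d α f) d := by
  rw [← mem_weightedHomogeneousSubmodule, homogenization]
  refine Submodule.sum_mem _ fun i hi => ?_
  rw [mem_weightedHomogeneousSubmodule]
  have h1 := homog_rename n i α _ (weightedHomogeneousComponent_isWeightedHomogeneous (w := α) i f)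
  have h2 := (isWeightedHomogeneous_X ℂ (Fin.cons 1 α : Fin (n + 2) → ℕ) 0).pow (d - i)
  have := h1.mul h2
  have e : i + (d - i) • (Fin.cons 1 α : Fin (n + 2) → ℕ) 0 = d := by
    simp at hi ⊢; omega
  rwa [e] at this

attribute [local instance] MvPolynomial.weightedGradedAlgebra

theorem homog_ideal (n d : ℕ) (α : Fin (n + 1) → ℕ) (f : MvPolynomial (Fin (n + 1)) ℂ) :
    (partialIdeal n d α f).IsHomogeneous
      (weightedHomogeneousSubmodule ℂ (Fin.cons 1 α : Fin (n + 2) → ℕ)) := by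
  refine Ideal.homogeneous_span _ _ ?_
  rintro _ ⟨i, rfl⟩
  have hF := homog_F n d α f
  by_cases hi : α i ≤ d
  · refine ⟨d - α i, ?_⟩
    rw [mem_weightedHomogeneousSubmodule]
    exact hF.pderiv (by simp; omega)
  · refine ⟨0, ?_⟩
    have : pderiv i.succ (homogenization n d α f) = 0 := by
      refine pderiv_eq_zero_of_notMem_vars fun hm => hi ?_
      rw [mem_vars_iff_mem_support] at hm
      obtain ⟨e, he, hie⟩ := hm
      have := Finsupp.le_weight_of_ne_zero' (Fin.cons 1 α : Fin (n + 2) → ℕ) (Finsupp.mem_support_iff.1 hie)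
      rw [hF (mem_support_iff.1 he)] at this
      simpa using this
    simp only [this]
    exact Submodule.zero_mem _

theorem comp_X_mul {σ : Type*} (w : σ → ℕ) (t : σ) (ht : w t = 1) (m : ℕ) (h : MvPolynomial σ ℂ) :
    weightedHomogeneousComponent w m (X t * h) =
      if m = 0 then 0 else X t * weightedHomogeneousComponent w (m - 1) h := by
  classical
  ext e
  rw [coeff_weightedHomogeneousComponent, coeff_X_mul']
  by_cases he : t ∈ e.support
  · have h1 : Finsupp.single t 1 + (e - Finsupp.single t 1) = e := by
      refine add_tsub_cancel_of_le ?_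
      rw [Finsupp.single_le_iff]
      exact Nat.one_le_iff_ne_zero.2 (Finsupp.mem_support_iff.1 he)
    have h2 : Finsupp.weight w e = 1 + Finsupp.weight w (e - Finsupp.single t 1) := by
      conv_lhs => rw [← h1]
      rw [map_add, Finsupp.weight_single, ht]; simp
    rw [h2]
    rcases m with _ | m
    · simp
    · rw [if_neg (Nat.succ_ne_zero m), coeff_X_mul', if_pos he, if_pos he,
        coeff_weightedHomogeneousComponent, Nat.add_sub_cancel]
      simp [add_comm 1]
  · rw [if_neg he]
    rcases m with _ | m
    · simp
    · rw [if_neg (Nat.succ_ne_zero m), coeff_X_mul', if_neg he]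
      simp

theorem comp_X0_mul (n : ℕ) (α : Fin (n + 1) → ℕ) (m : ℕ) (h : MvPolynomial (Fin (n + 2)) ℂ) :
    weightedHomogeneousComponent (Fin.cons 1 α : Fin (n + 2) → ℕ) m (X 0 * h) =
      if m = 0 then 0 else
      X 0 * weightedHomogeneousComponent (Fin.cons 1 α : Fin (n + 2) → ℕ) (m - 1) h :=
  comp_X_mul (Fin.cons 1 α : Fin (n + 2) → ℕ) 0 (by simp) m h

/-- Let `f` be strongly tame of weighted degree `d` with homogenization `F`,
and let the monomials `x^β`, `β ∈ I`, be a ℂ-basis of the Milnor algebra `V_g` of the last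
quasi-homogeneous part `g` of `f`.  Then the images of `x^β`, `β ∈ I`, form a basis of the
`ℂ[x₀]`-module `V = ℂ[x₀,x]/⟨∂F/∂x₁,…,∂F/∂x_{n+1}⟩`; in particular `V` is free of rank
`#I` over `ℂ[x₀]`. -/
theorem homogenization_milnor_free_over_x0
    (n : ℕ) (hn : 1 ≤ n) (α : Fin (n + 1) → ℕ)
    (hαpos : ∀ i, 0 < α i) (hα : Finset.univ.gcd α = 1)
    (f : MvPolynomial (Fin (n + 1)) ℂ) (d : ℕ)
    (hd : MvPolynomial.weightedTotalDegree α f = d)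
    (g : MvPolynomial (Fin (n + 1)) ℂ)
    (hg : g = weightedHomogeneousComponent α d f)
    (hg0 : g ≠ 0)
    (htame : ∀ x : Fin (n + 1) → ℂ, (∀ i, eval x (pderiv i g) = 0) → x = 0)
    (I : Finset (Fin (n + 1) →₀ ℕ))
    (hIindep : LinearIndependent ℂ (fun β : I =>
      Ideal.Quotient.mk (Ideal.span (Set.range fun i => pderiv i g))
        (monomial (β : Fin (n + 1) →₀ ℕ) (1 : ℂ))))
    (hIspan : Submodule.span ℂ (Set.range fun β : I =>
      Ideal.Quotient.mk (Ideal.span (Set.range fun i => pderiv i g))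
        (monomial (β : Fin (n + 1) →₀ ℕ) (1 : ℂ))) = ⊤) :
    LinearIndependent (Polynomial ℂ) (fun β : I =>
      Ideal.Quotient.mk (partialIdeal n d α f)
        (rename Fin.succ (monomial (β : Fin (n + 1) →₀ ℕ) (1 : ℂ)))) ∧
    Submodule.span (Polynomial ℂ) (Set.range fun β : I =>
      Ideal.Quotient.mk (partialIdeal n d α f)
        (rename Fin.succ (monomial (β : Fin (n + 1) →₀ ℕ) (1 : ℂ)))) = ⊤ := by
  have hev : ∀ h ∈ partialIdeal n d α f,
      ev0 n h ∈ Ideal.span (Set.range fun i => pderiv i g) := by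
    intro h hh
    have : partialIdeal n d α f ≤
        (Ideal.span (Set.range fun i => pderiv i g)).comap (ev0 n) := by
      rw [partialIdeal, Ideal.span_le]
      rintro _ ⟨i, rfl⟩
      rw [SetLike.mem_coe, Ideal.mem_comap, ev0_pderiv, ← hg]
      exact Ideal.subset_span ⟨i, rfl⟩
    exact this hh
  have hmk : ∀ (c : ℂ) (p : MvPolynomial (Fin (n + 1)) ℂ),
      c • Ideal.Quotient.mk (Ideal.span (Set.range fun i => pderiv i g)) p =
        Ideal.Quotient.mk (Ideal.span (Set.range fun i => pderiv i g)) (c • p) :=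
    fun c p => rfl
  constructor
  · rw [Fintype.linearIndependent_iff] at hIindep ⊢
    have key : ∀ k : ℕ, ∀ p : I → Polynomial ℂ,
        (∑ β : I, Polynomial.aeval (X 0) (p β) *
          rename Fin.succ (monomial (β : Fin (n + 1) →₀ ℕ) (1 : ℂ)) ∈ partialIdeal n d α f) →
        ∀ β, (p β).coeff k = 0 := by
      have base : ∀ p : I → Polynomial ℂ,
          (∑ β : I, Polynomial.aeval (X 0) (p β) *
            rename Fin.succ (monomial (β : Fin (n + 1) →₀ ℕ) (1 : ℂ)) ∈ partialIdeal n d α f) →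
          ∀ β, (p β).coeff 0 = 0 := by
        intro p hp
        have h1 := hev _ hp
        apply hIindep (fun β => (p β).coeff 0)
        simp only [hmk]
        rw [← map_sum, Ideal.Quotient.eq_zero_iff_mem]
        convert h1 using 1
        rw [map_sum]
        refine Finset.sum_congr rfl fun β _ => ?_
        rw [map_mul, ev0_rename, ← Polynomial.aeval_algHom_apply, ev0_X0,
          ← Polynomial.coeff_zero_eq_aeval_zero', Algebra.smul_def]
      intro k
      induction k with
      | zero => exact base
      | succ k ih =>
        intro p hp β
        have h0 := base p hp
        have hX : ∀ β, p β = Polynomial.X * (p β).divX := by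
          intro β
          have := Polynomial.X_mul_divX_add (p β)
          rw [h0 β, map_zero, add_zero] at this
          exact this.symm
        rw [← Polynomial.coeff_divX]
        apply ih (fun β => (p β).divX)
        apply X0_reg n d α f (hg ▸ htame)
        convert hp using 1
        rw [Finset.mul_sum]
        refine Finset.sum_congr rfl fun β _ => ?_
        conv_rhs => rw [hX β]
        rw [map_mul, Polynomial.aeval_X, mul_assoc]
    intro p hp β
    ext k
    rw [Polynomial.coeff_zero]
    refine key k p ?_ β
    simp only [vmod_smul] at hp
    rwa [← map_sum, Ideal.Quotient.eq_zero_iff_mem] at hp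
  · set W := Submodule.span (Polynomial ℂ) (Set.range fun β : I =>
      (Ideal.Quotient.mk (partialIdeal n d α f)
        (rename Fin.succ (monomial (β : Fin (n + 1) →₀ ℕ) (1 : ℂ))) : Vmod n d α f)) with hW
    set w : Fin (n + 2) → ℕ := Fin.cons 1 α with hw
    have step : ∀ h : MvPolynomial (Fin (n + 2)) ℂ, ∃ (c : I → ℂ) (q h' : MvPolynomial (Fin (n + 2)) ℂ),
        q ∈ partialIdeal n d α f ∧
        h = (∑ β : I, c β • rename Fin.succ (monomial (β : Fin (n + 1) →₀ ℕ) (1 : ℂ))) + q + X 0 * h' := by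
      intro h
      have h1 : Ideal.Quotient.mk (Ideal.span (Set.range fun i => pderiv i g)) (ev0 n h) ∈
        Submodule.span ℂ (Set.range fun β : I =>
          Ideal.Quotient.mk (Ideal.span (Set.range fun i => pderiv i g))
          (monomial (β : Fin (n + 1) →₀ ℕ) (1 : ℂ))) := by rw [hIspan]; trivial
      rw [Submodule.mem_span_range_iff_exists_fun] at h1
      obtain ⟨c, hc⟩ := h1
      simp only [hmk] at hc
      rw [← map_sum, eq_comm, Ideal.Quotient.eq, Ideal.span,
        Submodule.mem_span_range_iff_exists_fun] at hc
      obtain ⟨r, hr⟩ := hc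
      obtain ⟨h', hh'⟩ := X0_dvd_of n (h -
        (∑ β : I, c β • rename Fin.succ (monomial (β : Fin (n + 1) →₀ ℕ) (1 : ℂ))) -
        ∑ i, rename Fin.succ (r i) * pderiv i.succ (homogenization n d α f)) (by
          simp only [map_sub, map_sum, map_mul, map_smul, ev0_rename, ev0_pderiv, ← hg]
          simp only [smul_eq_mul] at hr
          rw [hr, sub_self])
      refine ⟨c, ∑ i, rename Fin.succ (r i) * pderiv i.succ (homogenization n d α f), h', Ideal.sum_mem _ fun i _ => Ideal.mul_mem_left _ (rename Fin.succ (r i)) (Ideal.subset_span ⟨i, rfl⟩), ?_⟩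
      rw [← hh']; ring
    have hom : ∀ m : ℕ, ∀ h : MvPolynomial (Fin (n + 2)) ℂ,
        (Ideal.Quotient.mk (partialIdeal n d α f)
          (weightedHomogeneousComponent w m h) : Vmod n d α f) ∈ W := by
      have hmono : ∀ (m : ℕ) (c : ℂ) (β : I), (Ideal.Quotient.mk (partialIdeal n d α f)
          (weightedHomogeneousComponent w m
            (c • rename Fin.succ (monomial (β : Fin (n + 1) →₀ ℕ) (1 : ℂ)))) : Vmod n d α f) ∈ W := by
        intro m c β
        have h1 : IsWeightedHomogeneous w
            (rename Fin.succ (monomial (β : Fin (n + 1) →₀ ℕ) (1 : ℂ))) (Finsupp.weight α (β : Fin (n + 1) →₀ ℕ)) :=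
          homog_rename n _ α _ (isWeightedHomogeneous_monomial α (β : Fin (n + 1) →₀ ℕ) (1 : ℂ) rfl)
        rw [map_smul]
        by_cases hm : Finsupp.weight α (β : Fin (n + 1) →₀ ℕ) = m
        · rw [← hm, h1.weightedHomogeneousComponent_same]
          have h2 := W.smul_mem (Polynomial.C c) (Submodule.subset_span ⟨β, rfl⟩)
          rw [vmod_smul, Polynomial.aeval_C, ← Algebra.smul_def] at h2
          exact h2
        · rw [h1.weightedHomogeneousComponent_ne _ (Ne.symm hm), smul_zero, map_zero]
          exact Submodule.zero_mem _
      intro m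
      induction m with
      | zero =>
        intro h
        obtain ⟨c, q, h', hq, hh⟩ := step h
        rw [hh, map_add, map_add, map_add, map_add, map_sum, map_sum, comp_X0_mul, if_pos rfl,
          map_zero]
        refine Submodule.add_mem _ (Submodule.add_mem _ (Submodule.sum_mem _ fun β _ => hmono _ _ _) ?_)
          (Submodule.zero_mem _)
        rw [Ideal.Quotient.eq_zero_iff_mem.2
          (weightedHomogeneousComponent_mem_of_mem ℂ w (homog_ideal n d α f) hq _)]
        exact Submodule.zero_mem _
      | succ m ih =>
        intro h
        obtain ⟨c, q, h', hq, hh⟩ := step h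
        rw [hh, map_add, map_add, map_add, map_add, map_sum, map_sum, comp_X0_mul,
          if_neg (Nat.succ_ne_zero m), Nat.add_sub_cancel]
        refine Submodule.add_mem _ (Submodule.add_mem _ (Submodule.sum_mem _ fun β _ => hmono _ _ _) ?_)
          ?_
        · rw [Ideal.Quotient.eq_zero_iff_mem.2
            (weightedHomogeneousComponent_mem_of_mem ℂ w (homog_ideal n d α f) hq _)]
          exact Submodule.zero_mem _
        · have h2 := W.smul_mem Polynomial.X (ih h')
          rw [vmod_smul, Polynomial.aeval_X] at h2
          exact h2
    rw [eq_top_iff]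
    rintro x -
    obtain ⟨h, rfl⟩ := Ideal.Quotient.mk_surjective x
    rw [← sum_weightedHomogeneousComponent w h,
      finsum_eq_sum _ (weightedHomogeneousComponent_finsupp h), map_sum]
    exact Submodule.sum_mem _ fun m _ => hom m h
end
end

section
/- Let f ∈ ℂ[x₁,…,x_{n+1}] be a strongly tame polynomial with last quasi-homogeneous part g, and let the monomials x^β, β ∈ I, form a ℂ-basis of the Milnor algebra V_g. Then the images of the same monomials x^β, β ∈ I, form a ℂ-basis of the Milnor algebra V_f := ℂ[x]/⟨∂f/∂x₁,…,∂f/∂x_{n+1}⟩; in particular dim_ℂ V_f = dim_ℂ V_g = μ := #I, i.e., f and g have the same Milnor number. -/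
open MvPolynomial

section
open scoped Pointwise

theorem kz_coords {R E ι : Type*} [CommRing R] [AddCommGroup E] [Module R E]
    (b : Module.Basis ι R E) (J : Ideal R) (x : E) :
    x ∈ J • (⊤ : Submodule R E) ↔ ∀ i, b.repr x i ∈ J := by
  constructor
  · intro hx i
    refine Submodule.smul_induction_on hx ?_ ?_
    · intro r hr n _
      simpa using J.mul_mem_right _ hr
    · intro x y hx hy
      simpa using J.add_mem hx hy
  · intro h
    rw [← b.linearCombination_repr x, Finsupp.linearCombination_apply]
    exact Submodule.sum_mem _ fun i _ => Submodule.smul_mem_smul (h i) trivial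

theorem kz_map {R E : Type*} [CommRing R] [AddCommGroup E] [Module R E]
    (J : Ideal R) (f : E →ₗ[R] E) {x : E} (hx : x ∈ J • (⊤ : Submodule R E)) :
    f x ∈ J • (⊤ : Submodule R E) := by
  refine Submodule.smul_induction_on hx ?_ ?_
  · intro r hr n _
    rw [map_smul]
    exact Submodule.smul_mem_smul hr trivial
  · intro x y hx hy
    rw [map_add]; exact Submodule.add_mem _ hx hy

theorem kz_step {R : Type*} [CommRing R] (N : ℕ) (φ : Module.Dual R (Fin N → R))
    (z : ℕ → R) (e : ℕ → (Fin N → R)) (J : ℕ → Ideal R)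
    (he : ∀ k < N, φ (e k) = z k)
    (hJ : ∀ k < N, J (k + 1) = J k ⊔ Ideal.span {z k})
    (hreg : ∀ k < N, ∀ r, z k * r ∈ J k → r ∈ J k) :
    ∀ m k, k + m = N → ∀ v : Fin (k + 1) → (Fin N → R),
      CliffordAlgebra.contractLeft (Q := (0 : QuadraticForm R (Fin N → R))) φ
        (ExteriorAlgebra.ιMulti R (k+1) v) ∈ J k • (⊤ : Submodule R (ExteriorAlgebra R (Fin N → R))) →
      ∃ η : ExteriorAlgebra R (Fin N → R), ExteriorAlgebra.ιMulti R (k+1) v -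
        CliffordAlgebra.contractLeft (Q := (0 : QuadraticForm R (Fin N → R))) φ η
          ∈ J k • (⊤ : Submodule R (ExteriorAlgebra R (Fin N → R))) := by
  set D : ExteriorAlgebra R (Fin N → R) →ₗ[R] ExteriorAlgebra R (Fin N → R) :=
    CliffordAlgebra.contractLeft (Q := (0 : QuadraticForm R (Fin N → R))) φ with hD
  have hDD : ∀ x, D (D x) = 0 := fun x => CliffordAlgebra.contractLeft_contractLeft _ x
  have hDi : ∀ a x, D (ExteriorAlgebra.ι R a * x) = φ a • x - ExteriorAlgebra.ι R a * D x :=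
    fun a x => CliffordAlgebra.contractLeft_ι_mul _ _ _
  intro m
  induction m with
  | zero =>
    intro k hk v _
    refine ⟨0, ?_⟩
    have : ExteriorAlgebra.ιMulti R (k+1) (M := Fin N → R) = 0 := by
      refine Module.Basis.ext_alternating (Pi.basisFun R (Fin N)) ?_
      intro w hw
      have := Fintype.card_le_of_injective w hw
      simp at this
      omega
    rw [this]; simp
  | succ m ih =>
    intro k hk v hv
    have hkN : k < N := by omega
    set ω := ExteriorAlgebra.ιMulti R (k+1) v with hω
    have h1 : ExteriorAlgebra.ιMulti R (k+1+1) (Matrix.vecCons (e k) v)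
        = ExteriorAlgebra.ι R (e k) * ω := by
      rw [ExteriorAlgebra.ιMulti_succ_apply]; simp [hω]
    have h2 : ExteriorAlgebra.ι R (e k) * D ω ∈ J k • (⊤ : Submodule R (ExteriorAlgebra R (Fin N → R))) :=
      kz_map (J k) (LinearMap.mulLeft R (ExteriorAlgebra.ι R (e k))) hv
    have hsup : J (k+1) • (⊤ : Submodule R (ExteriorAlgebra R (Fin N → R))) =
        J k • ⊤ ⊔ z k • (⊤ : Submodule R (ExteriorAlgebra R (Fin N → R))) := by
      rw [hJ k hkN, Submodule.sup_smul, Submodule.ideal_span_singleton_smul]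
    obtain ⟨η, hη⟩ := ih (k+1) (by omega) (Matrix.vecCons (e k) v) (by
      rw [h1, hDi, he k hkN, hsup]
      refine Submodule.sub_mem _ ?_ (Submodule.mem_sup_left h2)
      exact Submodule.mem_sup_right (Submodule.smul_mem_pointwise_smul _ _ _ Submodule.mem_top))
    rw [h1, hsup, Submodule.mem_sup] at hη
    obtain ⟨y, hy, w, hw, hyw⟩ := hη
    obtain ⟨ξ, -, rfl⟩ := (Submodule.mem_smul_pointwise_iff_exists _ _ _).1 hw
    refine ⟨ξ, ?_⟩
    have h3 : z k • (ω - D ξ) ∈ J k • (⊤ : Submodule R (ExteriorAlgebra R (Fin N → R))) := by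
      have h4 : z k • (ω - D ξ) = D y + ExteriorAlgebra.ι R (e k) * D ω := by
        have := congrArg D hyw
        rw [map_add, map_sub, hDD, hDi, he k hkN, map_smul, sub_zero] at this
        rw [smul_sub, sub_eq_iff_eq_add]
        rw [eq_sub_iff_add_eq] at this
        rw [← this]; abel
      rw [h4]
      exact Submodule.add_mem _ (kz_map _ D hy) h2
    have b := (Pi.basisFun R (Fin N)).ExteriorAlgebra
    rw [kz_coords b] at h3 ⊢
    intro i
    refine hreg k hkN _ ?_
    simpa using h3 i

theorem kz_scalar {R : Type*} [CommRing R] (N : ℕ) (φ : Module.Dual R (Fin N → R))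
    (η : ExteriorAlgebra R (Fin N → R)) :
    (ExteriorAlgebra.toTrivSqZeroExt (CliffordAlgebra.contractLeft (Q := (0 : QuadraticForm R (Fin N → R))) φ η : ExteriorAlgebra R (Fin N → R))).fst
      = φ (ExteriorAlgebra.toTrivSqZeroExt η).snd ∧
    (ExteriorAlgebra.toTrivSqZeroExt (CliffordAlgebra.contractLeft (Q := (0 : QuadraticForm R (Fin N → R))) φ η : ExteriorAlgebra R (Fin N → R))).snd
      ∈ Submodule.span R (Set.range fun ab : (Fin N → R) × (Fin N → R) =>
          φ ab.1 • ab.2 - φ ab.2 • ab.1) := by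
  set D : ExteriorAlgebra R (Fin N → R) →ₗ[R] ExteriorAlgebra R (Fin N → R) :=
    CliffordAlgebra.contractLeft (Q := (0 : QuadraticForm R (Fin N → R))) φ with hD
  have hDi : ∀ a x, D (ExteriorAlgebra.ι R a * x) = φ a • x - ExteriorAlgebra.ι R a * D x :=
    fun a x => CliffordAlgebra.contractLeft_ι_mul _ _ _
  have hDa : ∀ r, D (algebraMap R _ r) = 0 :=
    fun r => CliffordAlgebra.contractLeft_algebraMap _ _ _
  refine CliffordAlgebra.left_induction (Q := (0 : QuadraticForm R (Fin N → R)))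
    (P := fun η : ExteriorAlgebra R (Fin N → R) => (ExteriorAlgebra.toTrivSqZeroExt (D η)).fst
      = φ (ExteriorAlgebra.toTrivSqZeroExt η).snd ∧
    (ExteriorAlgebra.toTrivSqZeroExt (D η)).snd
      ∈ Submodule.span R (Set.range fun ab : (Fin N → R) × (Fin N → R) =>
          φ ab.1 • ab.2 - φ ab.2 • ab.1)) ?_ ?_ ?_ η
  · intro r
    have h : (ExteriorAlgebra.toTrivSqZeroExt (R := R) (M := Fin N → R) (algebraMap R _ r)).snd = 0 := by
      rw [AlgHom.commutes]; rfl
    have h' := hDa r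
    constructor
    · exact (congrArg (fun t => (ExteriorAlgebra.toTrivSqZeroExt t).fst) h').trans
        ((by simp : _ = φ 0).trans (congrArg φ h.symm))
    · rw [show (D ((algebraMap R (CliffordAlgebra (0 : QuadraticForm R (Fin N → R)))) r)) = 0 from h']
      simp
  · intro x y hx hy
    constructor
    · rw [map_add, map_add, map_add, TrivSqZeroExt.fst_add, TrivSqZeroExt.snd_add, map_add, hx.1, hy.1]
    · rw [map_add, map_add, TrivSqZeroExt.snd_add]
      exact Submodule.add_mem _ hx.2 hy.2
  · intro x a hx
    have h' : D ((CliffordAlgebra.ι (0 : QuadraticForm R (Fin N → R))) a * x) = φ a • x - ExteriorAlgebra.ι R a * D x := hDi a x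
    have h'' : ExteriorAlgebra.toTrivSqZeroExt ((CliffordAlgebra.ι (0 : QuadraticForm R (Fin N → R))) a * x)
        = TrivSqZeroExt.inr a * ExteriorAlgebra.toTrivSqZeroExt (x : ExteriorAlgebra R (Fin N → R)) := by
      rw [map_mul]; congr 1; exact ExteriorAlgebra.toTrivSqZeroExt_ι a
    rw [h', h'', map_sub, map_mul, map_smul, ExteriorAlgebra.toTrivSqZeroExt_ι]
    constructor
    · simp [mul_comm]
    · simp only [TrivSqZeroExt.snd_sub, TrivSqZeroExt.snd_smul, TrivSqZeroExt.snd_mul, hx.1,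
        TrivSqZeroExt.fst_inr, TrivSqZeroExt.snd_inr, zero_smul, zero_add]
      exact Submodule.subset_span ⟨(a, (ExteriorAlgebra.toTrivSqZeroExt x).snd), by simp⟩

/-- Koszul syzygies. -/
theorem kz_main {R : Type*} [CommRing R] (N : ℕ) (φ : Module.Dual R (Fin N → R))
    (z : ℕ → R) (e : ℕ → (Fin N → R)) (J : ℕ → Ideal R)
    (he : ∀ k < N, φ (e k) = z k)
    (hJ0 : J 0 = ⊥)
    (hJ : ∀ k < N, J (k + 1) = J k ⊔ Ideal.span {z k})
    (hreg : ∀ k < N, ∀ r, z k * r ∈ J k → r ∈ J k)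
    (h : Fin N → R) (hh : φ h = 0) :
    h ∈ Submodule.span R (Set.range fun ab : (Fin N → R) × (Fin N → R) =>
          φ ab.1 • ab.2 - φ ab.2 • ab.1) := by
  have h1 : ExteriorAlgebra.ιMulti R (0+1) (fun _ => h) = ExteriorAlgebra.ι R h := by
    simp
  obtain ⟨η, hη⟩ := kz_step N φ z e J he hJ hreg N 0 (by simp) (fun _ => h) (by
    rw [h1]
    have : CliffordAlgebra.contractLeft (Q := (0 : QuadraticForm R (Fin N → R))) φ
        (ExteriorAlgebra.ι R h) = algebraMap _ _ (φ h) := CliffordAlgebra.contractLeft_ι _ _ _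
    rw [this, hh, map_zero]
    exact Submodule.zero_mem _)
  rw [hJ0, Submodule.bot_smul, Submodule.mem_bot, h1, sub_eq_zero] at hη
  have := (kz_scalar N φ η).2
  rw [← hη, ExteriorAlgebra.toTrivSqZeroExt_ι] at this
  simpa using this

end

/-- weighted degree at most `m` -/
def WDLe {σ : Type*} (w : σ → ℤ) (m : ℤ) (p : MvPolynomial σ ℂ) : Prop :=
  ∀ s, coeff s p ≠ 0 → Finsupp.weight w s ≤ m

section
variable {σ : Type*} {w : σ → ℤ}

theorem WDLe.mono {m m' : ℤ} {p : MvPolynomial σ ℂ} (h : WDLe w m p) (hm : m ≤ m') :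
    WDLe w m' p := fun s hs => (h s hs).trans hm

theorem WDLe.zero {m : ℤ} : WDLe w m (0 : MvPolynomial σ ℂ) := fun s hs => by simp at hs

theorem WDLe.add {m : ℤ} {p q : MvPolynomial σ ℂ} (hp : WDLe w m p) (hq : WDLe w m q) :
    WDLe w m (p + q) := by
  intro s hs
  by_cases h : coeff s p = 0
  · exact hq s (by simpa [h] using hs)
  · exact hp s h

theorem WDLe.neg {m : ℤ} {p : MvPolynomial σ ℂ} (hp : WDLe w m p) :
    WDLe w m (-p) := by
  intro s hs
  exact hp s (by simpa using hs)

theorem WDLe.sub {m : ℤ} {p q : MvPolynomial σ ℂ} (hp : WDLe w m p) (hq : WDLe w m q) :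
    WDLe w m (p - q) := by
  rw [sub_eq_add_neg]; exact hp.add hq.neg

theorem WDLe.sum {ι : Type*} {m : ℤ} (t : Finset ι) (p : ι → MvPolynomial σ ℂ)
    (hp : ∀ i ∈ t, WDLe w m (p i)) : WDLe w m (∑ i ∈ t, p i) := by
  classical
  induction t using Finset.induction_on with
  | empty => simpa using WDLe.zero
  | insert a t ha ih =>
    rw [Finset.sum_insert ha]
    exact (hp _ (by simp)).add (ih fun i hi => hp i (by simp [hi]))

theorem WDLe.mul {a b : ℤ} {p q : MvPolynomial σ ℂ} (hp : WDLe w a p) (hq : WDLe w b q) :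
    WDLe w (a + b) (p * q) := by
  classical
  intro s hs
  rw [coeff_mul] at hs
  obtain ⟨⟨u, v⟩, huv, hne⟩ := Finset.exists_ne_zero_of_sum_ne_zero hs
  rw [Finset.HasAntidiagonal.mem_antidiagonal] at huv
  rw [← huv, map_add]
  exact add_le_add (hp u (left_ne_zero_of_mul hne)) (hq v (right_ne_zero_of_mul hne))

theorem wd_comp_mul {a b : ℤ} {p q : MvPolynomial σ ℂ} (hp : WDLe w a p) (hq : WDLe w b q) :
    weightedHomogeneousComponent w (a + b) (p * q) =
      weightedHomogeneousComponent w a p * weightedHomogeneousComponent w b q := by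
  classical
  ext s
  rw [coeff_weightedHomogeneousComponent, coeff_mul, coeff_mul]
  split_ifs with h
  · refine Finset.sum_congr rfl ?_
    rintro ⟨u, v⟩ huv
    have huv : u + v = s := Finset.HasAntidiagonal.mem_antidiagonal.1 huv
    simp only [coeff_weightedHomogeneousComponent]
    rw [← huv, map_add] at h
    by_cases hu : coeff u p = 0
    · simp [hu]
    by_cases hv : coeff v q = 0
    · simp [hv]
    have := hp u hu
    have := hq v hv
    rw [if_pos (by omega), if_pos (by omega)]
  · symm
    refine Finset.sum_eq_zero ?_
    rintro ⟨u, v⟩ huv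
    have huv : u + v = s := Finset.HasAntidiagonal.mem_antidiagonal.1 huv
    simp only [coeff_weightedHomogeneousComponent]
    rw [← huv, map_add] at h
    by_cases hu : Finsupp.weight w u = a
    · rw [if_neg (c := Finsupp.weight w v = b) (by omega), mul_zero]
    · rw [if_neg hu, zero_mul]

theorem wd_comp_mul_hom {n b : ℤ} {p q : MvPolynomial σ ℂ} (hq : IsWeightedHomogeneous w q b) :
    weightedHomogeneousComponent w n (p * q) =
      weightedHomogeneousComponent w (n - b) p * q := by
  classical
  ext s
  rw [coeff_weightedHomogeneousComponent, coeff_mul, coeff_mul]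
  split_ifs with h
  · refine Finset.sum_congr rfl ?_
    rintro ⟨u, v⟩ huv
    have huv : u + v = s := Finset.HasAntidiagonal.mem_antidiagonal.1 huv
    simp only [coeff_weightedHomogeneousComponent]
    rw [← huv, map_add] at h
    by_cases hv : coeff v q = 0
    · simp [hv]
    have := hq hv
    rw [if_pos (by omega)]
  · symm
    refine Finset.sum_eq_zero ?_
    rintro ⟨u, v⟩ huv
    have huv : u + v = s := Finset.HasAntidiagonal.mem_antidiagonal.1 huv
    simp only [coeff_weightedHomogeneousComponent]
    rw [← huv, map_add] at h
    by_cases hv : coeff v q = 0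
    · simp [hv]
    have := hq hv
    rw [if_neg (by omega), zero_mul]

theorem WDLe.lower {m : ℤ} {p : MvPolynomial σ ℂ} (hp : WDLe w m p)
    (h : weightedHomogeneousComponent w m p = 0) : WDLe w (m - 1) p := by
  classical
  intro s hs
  have h1 := hp s hs
  have h2 := congrArg (coeff s) h
  rw [coeff_weightedHomogeneousComponent, coeff_zero] at h2
  by_contra hlt
  rw [if_pos (by omega)] at h2
  exact hs h2

theorem WDLe.hom {m : ℤ} {p : MvPolynomial σ ℂ} (hp : IsWeightedHomogeneous w p m) :
    WDLe w m p := fun s hs => (hp hs).le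

theorem WDLe.eq_zero (hw : ∀ i, 0 ≤ w i) {m : ℤ} (hm : m < 0) {p : MvPolynomial σ ℂ}
    (hp : WDLe w m p) : p = 0 := by
  ext s
  rw [coeff_zero]
  by_contra hs
  have h1 := hp s hs
  have : 0 ≤ Finsupp.weight w s := by
    rw [Finsupp.weight_apply]
    exact Finset.sum_nonneg fun i _ => nsmul_nonneg (hw i) _
  omega

theorem WDLe.exists (p : MvPolynomial σ ℂ) (e : ℤ) : ∃ M : ℕ, WDLe w (M - 1 - e) p := by
  have : ∃ M : ℕ, ∀ s ∈ p.support, Finsupp.weight w s + 1 + e ≤ M := by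
    refine ⟨p.support.sup fun s => (Finsupp.weight w s + 1 + e).toNat, fun s hs => ?_⟩
    have := Finset.le_sup (f := fun s => (Finsupp.weight w s + 1 + e).toNat) hs
    omega
  obtain ⟨M, hM⟩ := this
  refine ⟨M, fun s hs => ?_⟩
  have := hM s (by simpa using hs)
  omega

theorem wd_comp_sum (m : ℤ) (I : Finset (σ →₀ ℕ)) (c : I → ℂ) [DecidableEq ℤ] :
    weightedHomogeneousComponent w m (∑ β : I, monomial (β : σ →₀ ℕ) (c β)) =
      ∑ β : I, monomial (β : σ →₀ ℕ) (if Finsupp.weight w (β : σ →₀ ℕ) = m then c β else 0) := by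
  rw [map_sum]
  refine Finset.sum_congr rfl fun β _ => ?_
  ext s
  classical
  simp only [coeff_weightedHomogeneousComponent, coeff_monomial]
  split_ifs <;> simp_all

end

theorem wd_span {N : ℕ} {w : Fin N → ℤ} (hw : ∀ i, 0 ≤ w i) (F G : Fin N → MvPolynomial (Fin N) ℂ)
    (e : Fin N → ℤ) (hF : ∀ i, WDLe w (e i) (F i))
    (hFG : ∀ i, weightedHomogeneousComponent w (e i) (F i) = G i)
    (I : Finset (Fin N →₀ ℕ))
    (hI : Submodule.span ℂ (Set.range fun β : I =>
      Ideal.Quotient.mk (Ideal.span (Set.range G))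
        (monomial (β : Fin N →₀ ℕ) (1 : ℂ))) = ⊤) :
    ∀ (M : ℕ) (p : MvPolynomial (Fin N) ℂ), WDLe w (M - 1) p →
      Ideal.Quotient.mk (Ideal.span (Set.range F)) p ∈
      Submodule.span ℂ (Set.range fun β : I =>
      Ideal.Quotient.mk (Ideal.span (Set.range F))
        (monomial (β : Fin N →₀ ℕ) (1 : ℂ))) := by
  classical
  have hG : ∀ i, IsWeightedHomogeneous w (G i) (e i) := fun i => by
    rw [← hFG i]; exact weightedHomogeneousComponent_isWeightedHomogeneous _ _
  have hmono : ∀ (K : Ideal (MvPolynomial (Fin N) ℂ)) (c : I → ℂ),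
      Ideal.Quotient.mk K (∑ β : I, monomial (β : Fin N →₀ ℕ) (c β)) =
        ∑ β : I, c β • Ideal.Quotient.mk K (monomial (β : Fin N →₀ ℕ) (1 : ℂ)) := by
    intro K c
    rw [map_sum]
    refine Finset.sum_congr rfl fun β _ => ?_
    have : monomial (β : Fin N →₀ ℕ) (c β) = c β • monomial (β : Fin N →₀ ℕ) (1 : ℂ) := by
      rw [smul_monomial]; simp
    rw [this]; rfl
  intro M
  induction M with
  | zero =>
    intro p hp
    rw [hp.eq_zero hw (by simp), map_zero]
    exact Submodule.zero_mem _
  | succ M ih =>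
    intro p hp
    have hp : WDLe w M p := hp.mono (by push_cast; omega)
    have h1 : Ideal.Quotient.mk (Ideal.span (Set.range G)) p ∈
        Submodule.span ℂ (Set.range fun β : I => Ideal.Quotient.mk (Ideal.span (Set.range G))
        (monomial (β : Fin N →₀ ℕ) (1 : ℂ))) := by rw [hI]; trivial
    obtain ⟨c, hc⟩ := (Submodule.mem_span_range_iff_exists_fun ℂ).1 h1
    rw [← hmono, Ideal.Quotient.eq, ← neg_sub, Ideal.neg_mem_iff,
      Ideal.mem_span_range_iff_exists_fun] at hc
    obtain ⟨h, hh⟩ := hc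
    have h2 := congrArg (weightedHomogeneousComponent w (M : ℤ)) hh
    rw [map_sub, wd_comp_sum, map_sum] at h2
    simp only [wd_comp_mul_hom (hG _)] at h2
    set c' : I → ℂ := fun β => if Finsupp.weight w (β : Fin N →₀ ℕ) = M then c β else 0 with hc'
    set k : Fin N → MvPolynomial (Fin N) ℂ :=
      fun i => weightedHomogeneousComponent w ((M : ℤ) - e i) (h i) with hk
    have hkh : ∀ i, IsWeightedHomogeneous w (k i) ((M : ℤ) - e i) := fun i =>
      weightedHomogeneousComponent_isWeightedHomogeneous _ _
    set S := ∑ β : I, monomial (β : Fin N →₀ ℕ) (c' β) with hS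
    have hS1 : weightedHomogeneousComponent w (M : ℤ) (∑ β : I, monomial (β : Fin N →₀ ℕ) (c β)) = S := by
      rw [wd_comp_sum]
    have hSh : IsWeightedHomogeneous w S (M : ℤ) := by
      rw [← hS1]; exact weightedHomogeneousComponent_isWeightedHomogeneous _ _
    have hkF : ∀ i, WDLe w (M : ℤ) (k i * F i) := fun i =>
      ((WDLe.hom (hkh i)).mul (hF i)).mono (by omega)
    have hkF2 : ∀ i, weightedHomogeneousComponent w (M : ℤ) (k i * F i) = k i * G i := fun i => by
      have := wd_comp_mul (WDLe.hom (hkh i)) (hF i)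
      rw [hFG, sub_add_cancel, weightedHomogeneousComponent_eq_self (hkh i)] at this
      exact this
    have h3 : WDLe w ((M : ℤ) - 1) (p - S - ∑ i, k i * F i) := by
      refine WDLe.lower ((hp.sub (WDLe.hom hSh)).sub (WDLe.sum _ _ fun i _ => hkF i)) ?_
      rw [map_sub, map_sub, weightedHomogeneousComponent_eq_self hSh, map_sum]
      simp only [hkF2]
      rw [← h2, sub_self]
    have h4 := ih _ h3
    have h5 : Ideal.Quotient.mk (Ideal.span (Set.range F)) (∑ i, k i * F i) = 0 := by
      rw [Ideal.Quotient.eq_zero_iff_mem, Ideal.mem_span_range_iff_exists_fun]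
      exact ⟨k, rfl⟩
    rw [map_sub, h5, sub_zero, map_sub, hS, hmono] at h4
    refine (Submodule.sub_mem_iff_left _ ?_).1 h4
    exact Submodule.sum_mem _ fun β _ => Submodule.smul_mem _ _ (Submodule.subset_span ⟨β, rfl⟩)

theorem wd_indep {N : ℕ} {w : Fin N → ℤ} (hw : ∀ i, 0 ≤ w i) (F G : Fin N → MvPolynomial (Fin N) ℂ)
    (e : Fin N → ℤ) (hF : ∀ i, WDLe w (e i) (F i))
    (hFG : ∀ i, weightedHomogeneousComponent w (e i) (F i) = G i)
    (hsyz : ∀ h : Fin N → MvPolynomial (Fin N) ℂ, ∑ i, h i * G i = 0 →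
      ∃ c : Fin N → Fin N → MvPolynomial (Fin N) ℂ, (∀ i j, c i j = - c j i) ∧
        ∀ i, h i = ∑ j, c i j * G j)
    (I : Finset (Fin N →₀ ℕ))
    (hI : ∀ c : I → ℂ, ∑ β : I, monomial (β : Fin N →₀ ℕ) (c β) ∈ Ideal.span (Set.range G) → c = 0) :
    ∀ (M : ℕ) (h : Fin N → MvPolynomial (Fin N) ℂ) (c : I → ℂ),
      (∀ i, WDLe w (M - 1 - e i) (h i)) →
      ∑ i, h i * F i = ∑ β : I, monomial (β : Fin N →₀ ℕ) (c β) → c = 0 := by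
  classical
  have hG : ∀ i, IsWeightedHomogeneous w (G i) (e i) := fun i => by
    rw [← hFG i]; exact weightedHomogeneousComponent_isWeightedHomogeneous _ _
  intro M
  induction M with
  | zero =>
    intro h c hh heq
    have : ∑ i, h i * F i = 0 := Finset.sum_eq_zero fun i _ =>
      ((hh i).mul (hF i)).eq_zero hw (by push_cast; omega)
    rw [this] at heq
    exact hI c (by rw [← heq]; exact Ideal.zero_mem _)
  | succ M ih =>
    intro h c hh heq
    have hh : ∀ i, WDLe w ((M : ℤ) - e i) (h i) := fun i => (hh i).mono (by push_cast; omega)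
    set k : Fin N → MvPolynomial (Fin N) ℂ :=
      fun i => weightedHomogeneousComponent w ((M : ℤ) - e i) (h i) with hk
    have hcomp : ∀ i, weightedHomogeneousComponent w (M : ℤ) (h i * F i) = k i * G i := fun i => by
      have := wd_comp_mul (hh i) (hF i)
      rwa [hFG, sub_add_cancel] at this
    have h1 := congrArg (weightedHomogeneousComponent w (M : ℤ)) heq
    rw [wd_comp_sum, map_sum] at h1
    simp only [hcomp] at h1
    have h2 := hI _ (by
      rw [← h1, Ideal.mem_span_range_iff_exists_fun]
      exact ⟨k, rfl⟩)
    have h3 : ∑ i, k i * G i = 0 := by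
      rw [h1]
      refine Finset.sum_eq_zero fun β _ => ?_
      have := congrFun h2 β
      rw [this]; simp
    obtain ⟨a, ha, hka⟩ := hsyz k h3
    set b : Fin N → Fin N → MvPolynomial (Fin N) ℂ :=
      fun i j => weightedHomogeneousComponent w ((M : ℤ) - e i - e j) (a i j) with hb
    have hbh : ∀ i j, IsWeightedHomogeneous w (b i j) ((M : ℤ) - e i - e j) := fun i j =>
      weightedHomogeneousComponent_isWeightedHomogeneous _ _
    have hbanti : ∀ i j, b i j = - b j i := fun i j => by
      simp only [hb]
      rw [ha i j, map_neg, sub_right_comm]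
    have hkb : ∀ i, k i = ∑ j, b i j * G j := fun i => by
      have h4 : IsWeightedHomogeneous w (k i) ((M : ℤ) - e i) :=
        weightedHomogeneousComponent_isWeightedHomogeneous _ _
      have h5 := congrArg (weightedHomogeneousComponent w ((M : ℤ) - e i)) (hka i)
      rw [weightedHomogeneousComponent_eq_self h4, map_sum] at h5
      simp only [wd_comp_mul_hom (hG _)] at h5
      exact h5
    have hbF : ∀ i j, WDLe w ((M : ℤ) - e i) (b i j * F j) := fun i j =>
      ((WDLe.hom (hbh i j)).mul (hF j)).mono (by omega)
    have hbF2 : ∀ i j, weightedHomogeneousComponent w ((M : ℤ) - e i) (b i j * F j) = b i j * G j :=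
      fun i j => by
        have := wd_comp_mul (WDLe.hom (hbh i j)) (hF j)
        rwa [hFG, sub_add_cancel, weightedHomogeneousComponent_eq_self (hbh i j)] at this
    refine ih (fun i => h i - ∑ j, b i j * F j) c (fun i => ?_) ?_
    · have : (M : ℤ) - 1 - e i = (M : ℤ) - e i - 1 := by omega
      rw [this]
      refine WDLe.lower ((hh i).sub (WDLe.sum _ _ fun j _ => hbF i j)) ?_
      rw [map_sub, map_sum]
      simp only [hbF2]
      rw [← hkb i, sub_self]
    · rw [← heq]
      simp only [sub_mul, Finset.sum_sub_distrib, sub_eq_self, Finset.sum_mul]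
      set T := ∑ i, ∑ j, b i j * F j * F i with hT
      have : T = - T := by
        conv_lhs => rw [hT, Finset.sum_comm]
        rw [hT, ← Finset.sum_neg_distrib]
        refine Finset.sum_congr rfl fun i _ => ?_
        rw [← Finset.sum_neg_distrib]
        refine Finset.sum_congr rfl fun j _ => ?_
        rw [hbanti j i]; ring
      exact self_eq_neg.1 this

theorem syz_of_pow {N : ℕ} (G : Fin N → MvPolynomial (Fin N) ℂ)
    (hX : ∀ j, ∃ m : ℕ, (X j : MvPolynomial (Fin N) ℂ) ^ m ∈ Ideal.span (Set.range G))
    (h : Fin N → MvPolynomial (Fin N) ℂ) (hh : ∑ i, h i * G i = 0) :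
    ∃ c : Fin N → Fin N → MvPolynomial (Fin N) ℂ, (∀ i j, c i j = - c j i) ∧
        ∀ i, h i = ∑ j, c i j * G j := by
  classical
  choose m hm using hX
  simp only [Ideal.mem_span_range_iff_exists_fun] at hm
  choose e he using hm
  set φ : Module.Dual (MvPolynomial (Fin N) ℂ) (Fin N → MvPolynomial (Fin N) ℂ) :=
    Fintype.linearCombination (MvPolynomial (Fin N) ℂ) G with hφ
  have hφa : ∀ v, φ v = ∑ i, v i * G i := fun v => by
    simp [hφ, Fintype.linearCombination_apply]
  set J : ℕ → Ideal (MvPolynomial (Fin N) ℂ) := fun k =>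
    Ideal.span ((fun s => monomial s (1 : ℂ)) '' {s | ∃ j : Fin N, j.1 < k ∧ s = Finsupp.single j (m j)}) with hJ
  have key := kz_main N φ (fun k => if hk : k < N then X ⟨k, hk⟩ ^ m ⟨k, hk⟩ else 0)
    (fun k => if hk : k < N then e ⟨k, hk⟩ else 0) J ?_ ?_ ?_ ?_ h (by rw [hφa, hh])
  · refine Submodule.span_induction (p := fun h _ => ∃ c : Fin N → Fin N → MvPolynomial (Fin N) ℂ, (∀ i j, c i j = - c j i) ∧
        ∀ i, h i = ∑ j, c i j * G j) ?_ ?_ ?_ ?_ key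
    · rintro _ ⟨⟨a, b⟩, rfl⟩
      refine ⟨fun i j => a j * b i - b j * a i, fun i j => by ring, fun i => ?_⟩
      simp only [hφa, Pi.sub_apply, Pi.smul_apply, smul_eq_mul, Finset.sum_mul]
      rw [← Finset.sum_sub_distrib]
      exact Finset.sum_congr rfl fun j _ => by ring
    · exact ⟨0, by simp, by simp⟩
    · rintro x y - - ⟨c, hc, hx⟩ ⟨c', hc', hy⟩
      refine ⟨fun i j => c i j + c' i j, fun i j => by simp only; rw [hc i j, hc' i j]; ring, fun i => ?_⟩
      simp [hx i, hy i, add_mul, Finset.sum_add_distrib]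
    · rintro r x - ⟨c, hc, hx⟩
      refine ⟨fun i j => r * c i j, fun i j => by simp only; rw [hc i j]; ring, fun i => ?_⟩
      simp [hx i, mul_assoc, Finset.mul_sum]
  · intro k hk
    simp only [hk, dif_pos, hφa, he]
  · simp [hJ]
  · intro k hk
    simp only [hJ, hk, dif_pos]
    rw [← Ideal.span_union]
    congr 1
    ext p
    simp only [Set.mem_image, Set.mem_ofPred_eq, Set.mem_union, Set.mem_singleton_iff]
    constructor
    · rintro ⟨_, ⟨j, hj, rfl⟩, rfl⟩
      rcases Nat.lt_succ_iff_lt_or_eq.1 hj with hj | hj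
      · exact Or.inl ⟨_, ⟨j, hj, rfl⟩, rfl⟩
      · right
        subst hj
        simp [X_pow_eq_monomial]
    · rintro (⟨_, ⟨j, hj, rfl⟩, rfl⟩ | rfl)
      · exact ⟨_, ⟨j, by omega, rfl⟩, rfl⟩
      · exact ⟨_, ⟨⟨k, hk⟩, by simp, rfl⟩, by simp [X_pow_eq_monomial]⟩
  · intro k hk r hr
    simp only [hJ, hk, dif_pos] at hr ⊢
    rw [mem_ideal_span_monomial_image] at hr ⊢
    intro s hs
    obtain ⟨_, ⟨j, hj, rfl⟩, hle⟩ := hr (Finsupp.single ⟨k, hk⟩ (m ⟨k, hk⟩) + s) (by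
      rw [mem_support_iff, X_pow_eq_monomial, coeff_monomial_mul, one_mul]
      exact mem_support_iff.1 hs)
    refine ⟨_, ⟨j, hj, rfl⟩, ?_⟩
    rw [Finsupp.single_le_iff] at hle ⊢
    have : (⟨k, hk⟩ : Fin N) ≠ j := by rintro rfl; simp at hj
    simpa [Finsupp.single_apply, this] using hle

theorem wt_cast {N : ℕ} (α : Fin N → ℕ) (s : Fin N →₀ ℕ) :
    Finsupp.weight (fun i => (α i : ℤ)) s = (Finsupp.weight α s : ℕ) := by
  simp [Finsupp.weight_eq_sum]

/-- Let `f` be strongly tame with last quasi-homogeneous part `g`, and let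
the monomials `x^β`, `β ∈ I`, form a ℂ-basis of the Milnor algebra `V_g`.  Then the same
monomials form a ℂ-basis of the Milnor algebra `V_f`; in particular
`dim_ℂ V_f = dim_ℂ V_g = μ = #I`, i.e. `f` and `g` have the same Milnor number. -/
theorem milnor_basis_of_f_eq_basis_of_g
    (n : ℕ) (hn : 1 ≤ n) (α : Fin (n + 1) → ℕ)
    (hαpos : ∀ i, 0 < α i) (hα : Finset.univ.gcd α = 1)
    (f : MvPolynomial (Fin (n + 1)) ℂ) (d : ℕ)
    (hd : MvPolynomial.weightedTotalDegree α f = d)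
    (g : MvPolynomial (Fin (n + 1)) ℂ)
    (hg : g = weightedHomogeneousComponent α d f)
    (hg0 : g ≠ 0)
    (htame : ∀ x : Fin (n + 1) → ℂ, (∀ i, eval x (pderiv i g) = 0) → x = 0)
    (I : Finset (Fin (n + 1) →₀ ℕ))
    (hIindep : LinearIndependent ℂ (fun β : I =>
      Ideal.Quotient.mk (Ideal.span (Set.range fun i => pderiv i g))
        (monomial (β : Fin (n + 1) →₀ ℕ) (1 : ℂ))))
    (hIspan : Submodule.span ℂ (Set.range fun β : I =>
      Ideal.Quotient.mk (Ideal.span (Set.range fun i => pderiv i g))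
        (monomial (β : Fin (n + 1) →₀ ℕ) (1 : ℂ))) = ⊤) :
    LinearIndependent ℂ (fun β : I =>
      Ideal.Quotient.mk (Ideal.span (Set.range fun i => pderiv i f))
        (monomial (β : Fin (n + 1) →₀ ℕ) (1 : ℂ))) ∧
    Submodule.span ℂ (Set.range fun β : I =>
      Ideal.Quotient.mk (Ideal.span (Set.range fun i => pderiv i f))
        (monomial (β : Fin (n + 1) →₀ ℕ) (1 : ℂ))) = ⊤ ∧
    Module.finrank ℂ
      (MvPolynomial (Fin (n + 1)) ℂ ⧸ Ideal.span (Set.range fun i => pderiv i f)) = I.card ∧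
    Module.finrank ℂ
      (MvPolynomial (Fin (n + 1)) ℂ ⧸ Ideal.span (Set.range fun i => pderiv i g)) = I.card := by

  classical
  set w : Fin (n + 1) → ℤ := fun i => (α i : ℤ) with hw
  have hw0 : ∀ i, 0 ≤ w i := fun i => by simp [hw]
  have hgZ : g = weightedHomogeneousComponent w (d : ℤ) f := by
    rw [hg]
    ext s
    rw [coeff_weightedHomogeneousComponent, coeff_weightedHomogeneousComponent, hw, wt_cast]
    simp
  have hF : ∀ i, WDLe w ((d : ℤ) - w i) (pderiv i f) := by
    intro i s hs
    rw [coeff_pderiv] at hs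
    have h1 : s + Finsupp.single i 1 ∈ f.support := by
      rw [mem_support_iff]; intro h0; simp [h0] at hs
    have h2 := le_weightedTotalDegree α h1
    rw [hd] at h2
    have h3 : Finsupp.weight w (s + Finsupp.single i 1) ≤ d := by
      rw [hw, wt_cast]; exact_mod_cast h2
    rw [map_add, Finsupp.weight_single, one_smul] at h3
    omega
  have hFG : ∀ i, weightedHomogeneousComponent w ((d : ℤ) - w i) (pderiv i f) = pderiv i g := by
    intro i
    ext s
    rw [coeff_weightedHomogeneousComponent, coeff_pderiv, coeff_pderiv, hgZ,
      coeff_weightedHomogeneousComponent, map_add, Finsupp.weight_single, one_smul]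
    by_cases h : Finsupp.weight w s = d - w i
    · rw [if_pos h, if_pos (by omega)]
    · rw [if_neg h, if_neg (by omega), zero_mul]
  have hX : ∀ j, ∃ m : ℕ, (X j : MvPolynomial (Fin (n+1)) ℂ) ^ m ∈
      Ideal.span (Set.range fun i => pderiv i g) := by
    intro j
    have h1 : (X j : MvPolynomial (Fin (n+1)) ℂ) ∈
        (Ideal.span (Set.range fun i => pderiv i g)).radical := by
      rw [← vanishingIdeal_zeroLocus_eq_radical (K := ℂ), mem_vanishingIdeal_iff]
      intro x hx
      rw [zeroLocus_span] at hx
      have := htame x (fun i => by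
        have := hx _ ⟨i, rfl⟩
        simpa [aeval_eq_eval] using this)
      simp [this]
    exact h1
  have hmono : ∀ (K : Ideal (MvPolynomial (Fin (n+1)) ℂ)) (c : I → ℂ),
      ∑ β : I, c β • Ideal.Quotient.mk K (monomial (β : Fin (n+1) →₀ ℕ) (1 : ℂ)) =
      Ideal.Quotient.mk K (∑ β : I, monomial (β : Fin (n+1) →₀ ℕ) (c β)) := by
    intro K c
    rw [map_sum]
    refine Finset.sum_congr rfl fun β _ => ?_
    have : monomial (β : Fin (n+1) →₀ ℕ) (c β) = c β • monomial (β : Fin (n+1) →₀ ℕ) (1 : ℂ) := by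
      rw [smul_monomial]; simp
    rw [this]; rfl
  have hind : LinearIndependent ℂ (fun β : I =>
      Ideal.Quotient.mk (Ideal.span (Set.range fun i => pderiv i f))
        (monomial (β : Fin (n + 1) →₀ ℕ) (1 : ℂ))) := by
    rw [Fintype.linearIndependent_iff] at hIindep ⊢
    intro c hc
    rw [hmono, Ideal.Quotient.eq_zero_iff_mem, Ideal.mem_span_range_iff_exists_fun] at hc
    obtain ⟨h, hh⟩ := hc
    choose M hM using fun i => WDLe.exists (w := w) (h i) ((d : ℤ) - w i)
    have hMle : ∀ i, M i ≤ ∑ j, M j := fun i => Finset.single_le_sum (fun _ _ => Nat.zero_le _) (Finset.mem_univ i)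
    refine congrFun (wd_indep hw0 (fun i => pderiv i f) (fun i => pderiv i g) (fun i => (d : ℤ) - w i)
      hF hFG (syz_of_pow _ hX) I ?_ (∑ j, M j) h c (fun i => (hM i).mono ?_) hh)
    · intro c hc
      funext β
      exact hIindep c (by rw [hmono, Ideal.Quotient.eq_zero_iff_mem]; exact hc) β
    · have := hMle i
      omega
  have hspan : Submodule.span ℂ (Set.range fun β : I =>
      Ideal.Quotient.mk (Ideal.span (Set.range fun i => pderiv i f))
        (monomial (β : Fin (n + 1) →₀ ℕ) (1 : ℂ))) = ⊤ := by
    rw [eq_top_iff]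
    intro y _
    obtain ⟨p, rfl⟩ := Ideal.Quotient.mk_surjective y
    obtain ⟨M, hM⟩ := WDLe.exists (w := w) p 0
    exact wd_span hw0 (fun i => pderiv i f) (fun i => pderiv i g) (fun i => (d : ℤ) - w i)
      hF hFG I hIspan M p (hM.mono (by simp))
  refine ⟨hind, hspan, ?_, ?_⟩
  · rw [Module.finrank_eq_card_basis (Module.Basis.mk hind hspan.ge), Fintype.card_coe]
  · rw [Module.finrank_eq_card_basis (Module.Basis.mk hIindep hIspan.ge), Fintype.card_coe]
end
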